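/- arXiv:0910.4869 — 2 statements merged into one kernel-verified Lean document; each statement's English description precedes it below -/
import Mathlib

section
/- For all integers 0 < d < n and every real τ with 0 < τ < 10⁻¹, there exists ε > 0 (depending only on n, d, τ) with the following property. Let E ⊆ ℝ^n be a closed set containing the origin, and suppose that for every x ∈ E ∩ B(0,10) and every 0 < r ≤ 10 there is a d-dimensional affine plane P(x,r) containing x such that dist(y,P(x,r)) ≤ εr for all y ∈ E ∩ B(x,r) and dist(y,E) ≤ εr for all y ∈ P(x,r) ∩ B(x,r). Then there is a bijective map g : ℝ^n → ℝ^n such that: (i) |g(x) − x| ≤ τ for all x ∈ ℝ^n; (ii) (1/4)|x−y|^{1+τ} ≤ |g(x) − g(y)| ≤ 3|x−y|^{1−τ} for all x, y ∈ ℝ^n with |x−y| ≤ 1; and (iii) E ∩ B(0,1) = g(P) ∩ B(0,1), where P = P(0,10). (Reifenberg's topological disk theorem, Theorem 1.1.) -/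
open Metric Set

noncomputable section

/-- `ℝⁿ`. -/
abbrev V (n : ℕ) := EuclideanSpace ℝ (Fin n)

/-- `P` is a `d`-dimensional affine plane of `ℝⁿ`. -/
def IsAffinePlane (n d : ℕ) (P : Set (V n)) : Prop :=
  ∃ Q : AffineSubspace ℝ (V n), (Q : Set (V n)) = P ∧
    Module.finrank ℝ Q.direction = d ∧ (Q : Set (V n)).Nonempty

section WeightedAverage

variable {F : Type*} [NormedAddCommGroup F] [NormedSpace ℝ F] {ι : Type*}

/-- The barycentre of the points `p i` with (not necessarily normalized) weights `a i`. -/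
def weightedAverage (J : Finset ι) (a : ι → ℝ) (p : ι → F) : F :=
  (∑ i ∈ J, a i)⁻¹ • ∑ i ∈ J, a i • p i

lemma weightedAverage_sub_const {J : Finset ι} {a : ι → ℝ} (hpos : 0 < ∑ i ∈ J, a i)
    (p : ι → F) (c : F) :
    weightedAverage J a p - c = (∑ i ∈ J, a i)⁻¹ • ∑ i ∈ J, a i • (p i - c) := by
  simp only [weightedAverage, smul_sub, Finset.sum_sub_distrib, ← Finset.sum_smul]
  rw [smul_smul, inv_mul_cancel₀ hpos.ne', one_smul]

lemma norm_weightedAverage_sub_le {J : Finset ι} {a : ι → ℝ} {p : ι → F} {c : F} {M : ℝ}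
    (ha : ∀ i ∈ J, 0 ≤ a i) (hpos : 0 < ∑ i ∈ J, a i)
    (hM : ∀ i ∈ J, a i ≠ 0 → ‖p i - c‖ ≤ M) :
    ‖weightedAverage J a p - c‖ ≤ M := by
  rw [weightedAverage_sub_const hpos, norm_smul, norm_inv, Real.norm_of_nonneg hpos.le,
    inv_mul_le_iff₀ hpos, Finset.sum_mul]
  refine (norm_sum_le _ _).trans (Finset.sum_le_sum fun i hi => ?_)
  rw [norm_smul, Real.norm_of_nonneg (ha i hi)]
  rcases eq_or_ne (a i) 0 with h | h
  · simp [h]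
  · exact mul_le_mul_of_nonneg_left (hM i hi h) (ha i hi)

lemma weightedAverage_sub_sub {J : Finset ι} {a b : ι → ℝ} {p q : ι → F} {u : F}
    (hpos : 0 < ∑ i ∈ J, a i) :
    weightedAverage J a p - weightedAverage J b q - u =
      weightedAverage J a (fun i => p i - q i - u) +
        (weightedAverage J a q - weightedAverage J b q) := by
  have h := weightedAverage_sub_const hpos (fun i => p i - q i) u
  have h' : weightedAverage J a (fun i => p i - q i) =
      weightedAverage J a p - weightedAverage J a q := by
    simp [weightedAverage, smul_sub, Finset.sum_sub_distrib]
  rw [h'] at h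
  rw [show weightedAverage J a (fun i => p i - q i - u) =
    weightedAverage J a p - weightedAverage J a q - u from h.symm]
  abel

/-- Variation of a weighted average when the weights and the points both vary. -/
lemma norm_weightedAverage_sub_sub_le {J : Finset ι} {a b : ι → ℝ} {p q : ι → F} {c u : F}
    {M α β : ℝ} {N : ℕ} (ha : ∀ i ∈ J, 0 ≤ a i) (hb : ∀ i ∈ J, 0 ≤ b i)
    (hasum : 1 ≤ ∑ i ∈ J, a i) (hbsum : 0 < ∑ i ∈ J, b i)
    (hM : ∀ i ∈ J, a i ≠ 0 ∨ b i ≠ 0 → ‖q i - c‖ ≤ M)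
    (hα : ∀ i ∈ J, a i ≠ 0 → ‖p i - q i - u‖ ≤ α)
    (hβ : ∀ i ∈ J, |a i - b i| ≤ β) (hβ0 : 0 ≤ β) (hM0 : 0 ≤ M)
    (hN : ∀ s ⊆ J, (∀ i ∈ s, a i ≠ 0 ∨ b i ≠ 0) → s.card ≤ N) :
    ‖weightedAverage J a p - weightedAverage J b q - u‖ ≤ α + N * (β * (2 * M)) := by
  classical
  have hapos : 0 < ∑ i ∈ J, a i := by linarith
  rw [weightedAverage_sub_sub hapos]
  refine (norm_add_le _ _).trans (add_le_add ?_ ?_)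
  · have := norm_weightedAverage_sub_le (p := fun i => p i - q i - u) (c := 0) (M := α) ha hapos
      (by simpa using hα)
    simpa using this
  · have hh : ‖weightedAverage J b q - c‖ ≤ M :=
      norm_weightedAverage_sub_le hb hbsum fun i hi h => hM i hi (Or.inr h)
    set h := weightedAverage J b q with hdef
    have hzero : ∑ i ∈ J, b i • (q i - h) = 0 := by
      have := weightedAverage_sub_const hbsum q h
      rw [← hdef, sub_self, eq_comm, smul_eq_zero] at this
      exact this.resolve_left (inv_ne_zero hbsum.ne')
    have hsum : ∑ i ∈ J, a i • (q i - h) =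
        ∑ i ∈ J with a i ≠ 0 ∨ b i ≠ 0, (a i - b i) • (q i - h) := by
      rw [Finset.sum_filter_of_ne, ← sub_zero (∑ i ∈ J, a i • (q i - h)), ← hzero,
        ← Finset.sum_sub_distrib]
      · simp only [sub_smul]
      · intro i _ hne
        by_contra! hcon
        simp [hcon.1, hcon.2] at hne
    rw [weightedAverage_sub_const hapos, norm_smul, norm_inv, Real.norm_of_nonneg hapos.le,
      inv_mul_le_iff₀ hapos, hsum]
    have hterm : ∀ i ∈ J.filter (fun i => a i ≠ 0 ∨ b i ≠ 0),
        ‖(a i - b i) • (q i - h)‖ ≤ β * (2 * M) := by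
      intro i hi
      obtain ⟨hiJ, hact⟩ := Finset.mem_filter.1 hi
      rw [norm_smul, Real.norm_eq_abs]
      refine mul_le_mul (hβ i hiJ) ?_ (norm_nonneg _) hβ0
      have h1 := hM i hiJ hact
      have h2 : q i - h = (q i - c) - (h - c) := by abel
      rw [h2]
      exact (norm_sub_le _ _).trans (by linarith)
    have hcard : ((J.filter (fun i => a i ≠ 0 ∨ b i ≠ 0)).card : ℝ) ≤ N := by
      exact_mod_cast hN _ (Finset.filter_subset _ _) fun i hi => (Finset.mem_filter.1 hi).2
    have hnn : 0 ≤ β * (2 * M) := by positivity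
    calc _ ≤ ∑ i ∈ J with a i ≠ 0 ∨ b i ≠ 0, β * (2 * M) :=
          (norm_sum_le _ _).trans (Finset.sum_le_sum hterm)
      _ = ((J.filter (fun i => a i ≠ 0 ∨ b i ≠ 0)).card : ℝ) * (β * (2 * M)) := by
          rw [Finset.sum_const, nsmul_eq_mul]
      _ ≤ N * (β * (2 * M)) := by gcongr
      _ ≤ (∑ i ∈ J, a i) * (N * (β * (2 * M))) := le_mul_of_one_le_left (by positivity) hasum

end WeightedAverage

section Net

/-- A compact set contains a finite maximal `q`-separated subset. -/
lemma IsCompact.exists_finset_separated {X : Type*} [MetricSpace X] {s : Set X}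
    (hs : IsCompact s) {q : ℝ} (hq : 0 < q) :
    ∃ J : Finset X, (∀ x ∈ J, x ∈ s) ∧ (∀ x ∈ J, ∀ y ∈ J, x ≠ y → q ≤ dist x y) ∧
      ∀ x ∈ s, ∃ y ∈ J, dist x y ≤ q := by
  lift q to NNReal using hq.le
  have hq' : q / 2 ≠ 0 := (half_pos (NNReal.coe_pos.1 hq)).ne'
  have hfin : packingNumber q s ≠ ⊤ := by
    obtain ⟨N, -, hNfin, hN⟩ := exists_finite_isCover_of_isCompact hq' hs
    have h := packingNumber_two_mul_le_externalCoveringNumber (q / 2) s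
    rw [mul_div_cancel₀ q two_ne_zero] at h
    exact (h.trans_lt (hN.externalCoveringNumber_le_encard.trans_lt hNfin.encard_lt_top)).ne
  have hJ : (maximalSeparatedSet q s).Finite := by
    rw [← Set.encard_lt_top_iff, encard_maximalSeparatedSet hfin]
    exact hfin.lt_top
  refine ⟨hJ.toFinset, fun x hx => maximalSeparatedSet_subset (hJ.mem_toFinset.1 hx), ?_, ?_⟩
  · intro x hx y hy hxy
    have := isSeparated_maximalSeparatedSet (hJ.mem_toFinset.1 hx) (hJ.mem_toFinset.1 hy) hxy
    beta_reduce at this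
    rw [edist_nndist, ENNReal.coe_lt_coe] at this
    exact_mod_cast this.le
  · intro x hx
    have := (isCover_iff_subset_iUnion_closedBall.1 (isCover_maximalSeparatedSet hfin)) hx
    simpa using this

/-- Volumetric bound on the number of separated points in a ball. -/
lemma card_le_of_separated_of_norm_sub_le {F : Type*} [NormedAddCommGroup F] [NormedSpace ℝ F]
    [FiniteDimensional ℝ F] (s : Finset F) (x : F) {q : ℝ} (hq : 0 < q)
    (hs : ∀ c ∈ s, ‖c - x‖ ≤ 2 * q) (h : ∀ c ∈ s, ∀ d ∈ s, c ≠ d → q ≤ dist c d) :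
    s.card ≤ 5 ^ Module.finrank ℝ F := by
  classical
  have hinj : Function.Injective fun c : F => q⁻¹ • (c - x) := fun c d hcd => by
    simpa [hq.ne'] using hcd
  rw [← Finset.card_image_of_injective s hinj]
  refine Besicovitch.card_le_of_separated _ ?_ ?_
  · simp only [Finset.mem_image]
    rintro _ ⟨c, hc, rfl⟩
    rw [norm_smul, norm_inv, Real.norm_of_nonneg hq.le, inv_mul_le_iff₀ hq]
    linarith [hs c hc]
  · simp only [Finset.mem_image]
    rintro _ ⟨c, hc, rfl⟩ _ ⟨d, hd, rfl⟩ hne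
    rw [← smul_sub, sub_sub_sub_cancel_right, norm_smul, norm_inv, Real.norm_of_nonneg hq.le,
      le_inv_mul_iff₀ hq, mul_one, ← dist_eq_norm]
    exact h c hc d hd fun hcd => hne (by rw [hcd])

end Net

section Flatness

variable {F : Type*} [NormedAddCommGroup F] [InnerProductSpace ℝ F] [FiniteDimensional ℝ F]

/-- Near each of its points of norm less than `10`, the set `E` is `δ r`-close, at a scale
comparable to `r`, to the plane of direction `D x` through that point, and these directions
vary slowly. -/
structure IsFlatAtScale (E : Set F) (D : F → Submodule ℝ F) (δ r : ℝ) : Prop where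
  normal_le : ∀ x ∈ E, ‖x‖ < 10 → ∀ y ∈ E, ‖y - x‖ < 100 * r →
    ‖y - x - (D x).starProjection (y - x)‖ ≤ δ * r
  exists_near : ∀ x ∈ E, ‖x‖ < 10 → ∀ v ∈ D x, ‖v‖ < 100 * r → ∃ y ∈ E, ‖x + v - y‖ ≤ δ * r
  tilt_le : ∀ x ∈ E, ‖x‖ < 10 → ∀ x' ∈ E, ‖x'‖ < 10 → ‖x - x'‖ ≤ 10 * r → ∀ w,
    ‖(D x).starProjection w - (D x').starProjection w‖ ≤ δ * ‖w‖

/-- The constant controlling the glued projections of `IsFlatAtScale.exists_glued_projection`. -/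
def glueConst (F : Type*) [NormedAddCommGroup F] [InnerProductSpace ℝ F] : ℝ :=
  1 + 26 * 5 ^ Module.finrank ℝ F

lemma one_le_glueConst (F : Type*) [NormedAddCommGroup F] [InnerProductSpace ℝ F] :
    1 ≤ glueConst F := by
  unfold glueConst
  have : (0 : ℝ) ≤ 26 * 5 ^ Module.finrank ℝ F := by positivity
  linarith

lemma IsFlatAtScale.norm_affineProjection_sub_le {E : Set F} {D : F → Submodule ℝ F} {δ r : ℝ}
    (h : IsFlatAtScale E D δ r) (hδ : 0 ≤ δ) (hr : 0 < r) {x x' y : F} (hx : x ∈ E)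
    (hx10 : ‖x‖ < 10) (hx' : x' ∈ E) (hx'10 : ‖x'‖ < 10) (hxx' : ‖x' - x‖ ≤ 10 * r)
    (hy : ‖y - x‖ ≤ 2 * r) :
    ‖x' + (D x').starProjection (y - x') - (x + (D x).starProjection (y - x))‖ ≤ 13 * (δ * r) := by
  have e : x' + (D x').starProjection (y - x') - (x + (D x).starProjection (y - x)) =
      ((D x').starProjection (y - x') - (D x).starProjection (y - x')) +
        (x' - x - (D x).starProjection (x' - x)) := by
    simp only [map_sub]
    abel
  have h1 := h.tilt_le x' hx' hx'10 x hx hx10 hxx' (y - x')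
  have h2 := h.normal_le x hx hx10 x' hx' (by linarith)
  have h3 : ‖y - x'‖ ≤ 12 * r := by
    rw [← sub_sub_sub_cancel_right y x' x]
    exact (norm_sub_le _ _).trans (by linarith)
  have h4 : δ * ‖y - x'‖ ≤ δ * (12 * r) := by gcongr
  rw [e]
  exact (norm_add_le _ _).trans (by linarith)

/-- The projections onto the approximating planes at a given scale can be glued, by means of a
partition of unity, into a map which is close to each of them in the Lipschitz sense. -/
lemma IsFlatAtScale.exists_glued_projection {E : Set F} (hE : IsClosed E)
    {D : F → Submodule ℝ F} {δ r : ℝ} (h : IsFlatAtScale E D δ r) (hδ : 0 ≤ δ) (hr : 0 < r) :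
    ∃ S : F → F, ∀ x ∈ E, ‖x‖ ≤ 4 → ∀ y, ‖y - x‖ ≤ 2 * r →
      ‖S y - (x + (D x).starProjection (y - x))‖ ≤ glueConst F * (δ * r) ∧
      ∀ y', ‖y' - x‖ ≤ 2 * r →
        ‖S y - S y' - (D x).starProjection (y - y')‖ ≤ glueConst F * δ * ‖y - y'‖ := by
  have hcpt : IsCompact (E ∩ closedBall 0 5) := (isCompact_closedBall 0 5).inter_left hE
  obtain ⟨J, hJE, hJsep, hJcov⟩ := hcpt.exists_finset_separated (q := 5 * r) (by positivity)
  set ψ : F → F → ℝ := fun y x => max 0 (8 - ‖y - x‖ / r) with hψ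
  have hψ0 : ∀ y x, 0 ≤ ψ y x := fun y x => le_max_left _ _
  have hψact : ∀ y x, ψ y x ≠ 0 → ‖y - x‖ ≤ 8 * r := by
    intro y x hne
    by_contra! hlt
    refine hne (max_eq_left ?_)
    rw [sub_nonpos, le_div_iff₀ hr]
    exact hlt.le
  have hψlip : ∀ y y' x, |ψ y x - ψ y' x| ≤ ‖y - y'‖ / r := by
    intro y y' x
    refine (abs_max_sub_max_le_max _ _ _ _).trans ?_
    have h1 : |8 - ‖y - x‖ / r - (8 - ‖y' - x‖ / r)| ≤ ‖y - y'‖ / r := by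
      rw [show 8 - ‖y - x‖ / r - (8 - ‖y' - x‖ / r) = (‖y' - x‖ - ‖y - x‖) / r by ring, abs_div,
        abs_of_pos hr]
      have := abs_norm_sub_norm_le (y' - x) (y - x)
      rw [sub_sub_sub_cancel_right, norm_sub_rev y' y] at this
      gcongr
    exact max_le (by rw [sub_self, abs_zero]; positivity) h1
  have hψsum : ∀ x ∈ E, ‖x‖ ≤ 4 → ∀ y, ‖y - x‖ ≤ 2 * r → 1 ≤ ∑ j ∈ J, ψ y j := by
    intro x hx hx4 y hy
    obtain ⟨j, hj, hxj⟩ := hJcov x ⟨hx, by simp; linarith⟩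
    refine le_trans ?_ (Finset.single_le_sum (fun i _ => hψ0 y i) hj)
    refine le_max_of_le_right ?_
    rw [dist_eq_norm] at hxj
    have : ‖y - j‖ ≤ 7 * r := by
      rw [← sub_add_sub_cancel y x j]
      exact (norm_add_le _ _).trans (by linarith)
    have : ‖y - j‖ / r ≤ 7 := by rwa [div_le_iff₀ hr]
    linarith
  have hJ10 : ∀ j ∈ J, j ∈ E ∧ ‖j‖ < 10 := fun j hj => by
    have := hJE j hj
    simp only [mem_inter_iff, mem_closedBall, dist_zero_right] at this
    exact ⟨this.1, by linarith⟩
  have hclose : ∀ x j y, ψ y j ≠ 0 → ‖y - x‖ ≤ 2 * r → ‖j - x‖ ≤ 10 * r := by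
    intro x j y hne hy
    have := hψact y j hne
    rw [← sub_add_sub_cancel j y x, ← norm_neg (y - j), neg_sub] at *
    exact (norm_add_le _ _).trans (by linarith)
  refine ⟨fun y => weightedAverage J (ψ y) fun j => j + (D j).starProjection (y - j), ?_⟩
  intro x hx hx4 y hy
  have hx10 : ‖x‖ < 10 := by linarith
  have hK : 13 ≤ glueConst F := by
    unfold glueConst
    have : (1 : ℝ) ≤ 5 ^ Module.finrank ℝ F := one_le_pow₀ (by norm_num)
    linarith
  refine ⟨?_, fun y' hy' => ?_⟩
  · refine (norm_weightedAverage_sub_le (fun j _ => hψ0 y j)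
      (by linarith [hψsum x hx hx4 y hy]) (M := 13 * (δ * r)) fun j hj hne => ?_).trans ?_
    · exact h.norm_affineProjection_sub_le hδ hr hx hx10 (hJ10 j hj).1 (hJ10 j hj).2
        (hclose x j y hne hy) hy
    · gcongr
  · have key := norm_weightedAverage_sub_sub_le (J := J) (a := ψ y) (b := ψ y')
      (p := fun j => j + (D j).starProjection (y - j))
      (q := fun j => j + (D j).starProjection (y' - j))
      (c := x + (D x).starProjection (y' - x)) (u := (D x).starProjection (y - y'))
      (M := 13 * (δ * r)) (α := δ * ‖y - y'‖) (β := ‖y - y'‖ / r)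
      (N := 5 ^ Module.finrank ℝ F)
      (fun j _ => hψ0 y j) (fun j _ => hψ0 y' j) (hψsum x hx hx4 y hy)
      (by linarith [hψsum x hx hx4 y' hy'])
      (fun j hj hne => h.norm_affineProjection_sub_le hδ hr hx hx10 (hJ10 j hj).1 (hJ10 j hj).2
        (hne.elim (fun hn => hclose x j y hn hy) (fun hn => hclose x j y' hn hy')) hy')
      (fun j hj hne => by
        have := h.tilt_le j (hJ10 j hj).1 (hJ10 j hj).2 x hx hx10 (hclose x j y hne hy) (y - y')
        convert! this using 2
        simp only [map_sub]
        abel)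
      (fun j _ => hψlip y y' j) (by positivity) (by positivity)
      (fun s hs hact => by
        refine card_le_of_separated_of_norm_sub_le s x (q := 5 * r) (by positivity) ?_
          fun c hc d hd => hJsep c (hs hc) d (hs hd)
        intro c hc
        have := (hact c hc).elim (fun hn => hclose x c y hn hy) (fun hn => hclose x c y' hn hy')
        linarith)
    refine key.trans (le_of_eq ?_)
    unfold glueConst
    push_cast
    field_simp
    ring

end Flatness

section Approximation

variable {F : Type*} [NormedAddCommGroup F] [InnerProductSpace ℝ F] [FiniteDimensional ℝ F]

lemma norm_sub_starProjection_le (D : Submodule ℝ F) (w : F) :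
    ‖w - D.starProjection w‖ ≤ ‖w‖ := by
  rw [← Submodule.starProjection_orthogonal_val]
  exact Submodule.norm_starProjection_apply_le _ _

/-- A small Lipschitz map on a set extends to a small Lipschitz map on the whole space. -/
lemma exists_extension_bounded_lipschitz {s : Set F} {φ : F → F} {c r : ℝ} (hc : 0 ≤ c)
    (hr : 0 < r) (hbd : ∀ x ∈ s, ‖φ x‖ ≤ c * r)
    (hlip : ∀ x ∈ s, ∀ y ∈ s, ‖φ x - φ y‖ ≤ c * ‖x - y‖) :
    ∃ Φ : F → F, EqOn φ Φ s ∧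
      (∀ x, ‖Φ x‖ ≤ (1 + lipschitzExtensionConstant F) * c * r) ∧
      ∀ x y, ‖Φ x - Φ y‖ ≤ (1 + lipschitzExtensionConstant F) * c * ‖x - y‖ := by
  classical
  lift c to NNReal using hc
  set C : ℝ := ((lipschitzExtensionConstant F : NNReal) : ℝ) with hC
  have hC0 : 0 ≤ C := NNReal.coe_nonneg _
  set far : Set F := {y | ∀ x ∈ s, r ≤ ‖x - y‖} with hfar
  set φ' : F → F := fun x => if x ∈ s then φ x else 0 with hφ'
  have hlip' : LipschitzOnWith c φ' (s ∪ far) := by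
    refine LipschitzOnWith.of_dist_le_mul fun x hx y hy => ?_
    rw [dist_eq_norm, dist_eq_norm]
    by_cases hxs : x ∈ s <;> by_cases hys : y ∈ s
    · simpa [hφ', hxs, hys] using hlip x hxs y hys
    · have hy' := (hy.resolve_left hys) x hxs
      have h1 := hbd x hxs
      have h2 : c * r ≤ c * ‖x - y‖ := by gcongr
      simpa [hφ', hxs, hys] using h1.trans h2
    · have hx' := (hx.resolve_left hxs) y hys
      have h1 := hbd y hys
      have h2 : c * r ≤ c * ‖x - y‖ := by rw [norm_sub_rev]; gcongr
      simpa [hφ', hxs, hys] using h1.trans h2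
    · simp [hφ', hxs, hys]; positivity
  obtain ⟨Φ, hΦlip, hΦeq⟩ := hlip'.extend_finite_dimension
  have hΦ : ∀ x y, ‖Φ x - Φ y‖ ≤ C * c * ‖x - y‖ := by
    intro x y
    simpa [dist_eq_norm] using hΦlip.dist_le_mul x y
  have hΦs : EqOn φ Φ s := fun x hx => by
    rw [← hΦeq (Or.inl hx)]
    simp [hφ', hx]
  have hle : C * c ≤ (1 + C) * c := by gcongr; linarith
  refine ⟨Φ, hΦs, fun x => ?_, fun x y => (hΦ x y).trans (by gcongr)⟩
  by_cases hx : x ∈ far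
  · have : Φ x = φ' x := (hΦeq (Or.inr hx)).symm
    rw [this]
    by_cases hxs : x ∈ s
    · simp only [hφ', hxs, if_true]
      refine (hbd x hxs).trans ?_
      gcongr
      nlinarith
    · simp only [hφ', hxs, if_false, norm_zero]
      positivity
  · simp only [hfar, mem_ofPred_eq, not_forall, not_le] at hx
    obtain ⟨y, hys, hyx⟩ := hx
    have h1 := hbd y hys
    rw [hΦs hys] at h1
    have h2 := hΦ x y
    rw [norm_sub_rev x y] at h2
    have h3 : C * c * ‖y - x‖ ≤ C * c * r := by gcongr
    have h4 := norm_add_le (Φ x - Φ y) (Φ y)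
    rw [sub_add_cancel] at h4
    linarith

/-- The closed set `T` approximates `E` at scale `r` in the ball of radius `R`: it stays close to
`E`, it is close to being a graph over the planes of direction `D x`, and it has no holes. -/
structure IsApproxAtScale (E : Set F) (D : F → Submodule ℝ F) (κ r R : ℝ) (T : Set F) :
    Prop where
  isClosed : IsClosed T
  exists_near : ∀ y ∈ T, ‖y‖ ≤ R → ∃ x ∈ E, ‖y - x‖ ≤ κ * r
  normal_le : ∀ y ∈ T, ‖y‖ ≤ R → ∀ y' ∈ T, ‖y'‖ ≤ R → ‖y - y'‖ ≤ r → ∀ x ∈ E, ‖x - y‖ ≤ r →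
    ‖y - y' - (D x).starProjection (y - y')‖ ≤ κ * ‖y - y'‖
  exists_step : ∀ y ∈ T, ‖y‖ ≤ R → ∀ x ∈ E, ‖x - y‖ ≤ r → ∀ v ∈ D x, ‖v‖ ≤ r / 2 →
    ∃ z ∈ T, ‖z - y - v‖ ≤ ‖v‖ / 2

/-- Every small displacement along the plane is realized, up to a normal component, inside an
approximating set. -/
lemma IsApproxAtScale.exists_starProjection_eq {E : Set F} {D : F → Submodule ℝ F}
    {κ r R : ℝ} {T : Set F} (h : IsApproxAtScale E D κ r R T) (hκ : κ ≤ 1 / 100)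
    (hr : 0 < r) {x y w : F} {s : ℝ} (hy : y ∈ T) (hyR : ‖y‖ ≤ R - r) (hx : x ∈ E)
    (hxy : ‖y - x‖ ≤ r / 4) (hw : w ∈ D x) (hws : ‖w‖ ≤ s) (hs : s ≤ r / 4) :
    ∃ z ∈ T, ‖z‖ ≤ R ∧ ‖z - y‖ ≤ 3 * s ∧ (D x).starProjection (z - y) = w := by
  have hs0 : 0 ≤ s := (norm_nonneg _).trans hws
  set L := (D x).starProjection with hL
  have hcpt : IsCompact (T ∩ closedBall y (4 * s)) :=
    (isCompact_closedBall _ _).inter_left h.isClosed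
  obtain ⟨z, ⟨hzT, hzy⟩, hzmin⟩ := hcpt.exists_isMinOn (f := fun z => ‖L (z - y) - w‖)
    ⟨y, hy, by simpa using hs0⟩ (by fun_prop)
  rw [mem_closedBall, dist_eq_norm] at hzy
  have hnorm : ∀ z, ‖z - y‖ ≤ 4 * s → ‖z‖ ≤ R := fun z hz => by
    rw [← sub_add_cancel z y]
    exact (norm_add_le _ _).trans (by linarith)
  have hm : ‖L (z - y) - w‖ ≤ s := by
    have := hzmin ⟨hy, by simpa using hs0⟩
    simp only [mem_ofPred_eq, sub_self, map_zero, zero_sub, norm_neg] at this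
    exact this.trans hws
  have hLz : ‖L (z - y)‖ ≤ 2 * s := by
    rw [← sub_add_cancel (L (z - y)) w]
    exact (norm_add_le _ _).trans (by linarith)
  have hzy' : ‖z - y‖ ≤ 12 / 5 * s := by
    have h1 := h.normal_le y hy (by linarith) z hzT (hnorm z hzy)
      (by rw [norm_sub_rev]; linarith) x hx (by rw [norm_sub_rev]; linarith)
    rw [← norm_neg, norm_sub_rev y z, neg_sub, ← neg_sub z y, map_neg, neg_sub_neg] at h1
    have h2 : κ * ‖z - y‖ ≤ 1 / 100 * ‖z - y‖ := by gcongr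
    have h3 := norm_add_le (z - y - L (z - y)) (L (z - y))
    rw [sub_add_cancel] at h3
    linarith
  refine ⟨z, hzT, hnorm z hzy, by linarith, ?_⟩
  by_contra hne
  set u := w - L (z - y) with hu
  have hu0 : 0 < ‖u‖ := norm_pos_iff.2 fun h0 => hne (sub_eq_zero.1 h0).symm
  have hus : ‖u‖ ≤ s := by rwa [hu, norm_sub_rev]
  obtain ⟨z', hz'T, hz'⟩ := h.exists_step z hzT (hnorm z hzy) x hx
    (by
      rw [← sub_add_sub_cancel x y z, ← norm_neg (x - y + _), neg_add, neg_sub, neg_sub]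
      exact (norm_add_le _ _).trans (by linarith))
    u (Submodule.sub_mem _ hw (Submodule.starProjection_apply_mem _ _)) (by linarith)
  have hz'y : ‖z' - y‖ ≤ 4 * s := by
    rw [show z' - y = (z' - z - u) + u + (z - y) by abel]
    exact (norm_add₃_le).trans (by linarith)
  have hmin := hzmin ⟨hz'T, by rwa [mem_closedBall, dist_eq_norm]⟩
  simp only [mem_ofPred_eq] at hmin
  have hLu : L u = u := Submodule.starProjection_eq_self_iff.2
    (Submodule.sub_mem _ hw (Submodule.starProjection_apply_mem _ _))
  have e : L (z' - y) - w = L (z' - z - u) := by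
    rw [map_sub L (z' - z), hLu, hu]
    simp only [map_sub]
    abel
  rw [e, norm_sub_rev, ← hu] at hmin
  have := (D x).norm_starProjection_apply_le (z' - z - u)
  linarith

end Approximation

section Step

lemma norm_sub_le_two_mul_norm_add_sub {F : Type*} [NormedAddCommGroup F] {η : ℝ} {φ : F → F}
    (hη : η ≤ 1 / 2) (hφ : ∀ x y, ‖φ x - φ y‖ ≤ η * ‖x - y‖) (x y : F) :
    ‖x - y‖ ≤ 2 * ‖x + φ x - (y + φ y)‖ := by
  have h1 := hφ x y
  have h2 : η * ‖x - y‖ ≤ 1 / 2 * ‖x - y‖ := by gcongr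
  have h3 := norm_sub_le (x + φ x - (y + φ y)) (φ x - φ y)
  rw [show x + φ x - (y + φ y) - (φ x - φ y) = x - y by abel] at h3
  linarith

variable {F : Type*} [NormedAddCommGroup F] [InnerProductSpace ℝ F] [FiniteDimensional ℝ F]

/-- `S` is, near every point of `E` of norm at most `4` and at scale `r`, an `a`-small Lipschitz
perturbation of the projection onto the plane of direction `D x`. -/
def IsGluedProjection (E : Set F) (D : F → Submodule ℝ F) (a r : ℝ) (S : F → F) : Prop :=
  ∀ x ∈ E, ‖x‖ ≤ 4 → ∀ y, ‖y - x‖ ≤ 2 * r →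
    ‖S y - (x + (D x).starProjection (y - x))‖ ≤ a * r ∧
    ∀ y', ‖y' - x‖ ≤ 2 * r → ‖S y - S y' - (D x).starProjection (y - y')‖ ≤ a * ‖y - y'‖

variable {E T : Set F} {D D' : F → Submodule ℝ F} {S : F → F} {a δ κ r R : ℝ}

lemma IsApproxAtScale.exists_near_norm_le (h : IsApproxAtScale E D κ r R T) (hκ : κ ≤ 1 / 100)
    (hr : 0 < r) (hr' : r ≤ 1 / 10) (hR : R ≤ 3) {y : F} (hy : y ∈ T) (hyR : ‖y‖ ≤ R) :
    ∃ x ∈ E, ‖x‖ ≤ 4 ∧ ‖y - x‖ ≤ κ * r ∧ ‖y - x‖ ≤ r / 100 := by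
  obtain ⟨x, hx, hyx⟩ := h.exists_near y hy hyR
  have h1 : κ * r ≤ 1 / 100 * r := by gcongr
  refine ⟨x, hx, ?_, hyx, by linarith⟩
  rw [← sub_sub_cancel y x]
  exact (norm_sub_le _ _).trans (by linarith)

lemma IsApproxAtScale.norm_glued_sub_self_le (h : IsApproxAtScale E D κ r R T)
    (hS : IsGluedProjection E D a r S) (haκ : a ≤ κ) (hκ : κ ≤ 1 / 100)
    (hr : 0 < r) (hr' : r ≤ 1 / 10) (hR : R ≤ 3) {y : F} (hy : y ∈ T) (hyR : ‖y‖ ≤ R) :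
    ‖S y - y‖ ≤ 2 * κ * r := by
  obtain ⟨x, hx, hx4, hyx, hyx'⟩ := h.exists_near_norm_le hκ hr hr' hR hy hyR
  have h1 := (hS x hx hx4 y (by linarith)).1
  have h2 := norm_sub_starProjection_le (D x) (y - x)
  rw [show S y - y = (S y - (x + (D x).starProjection (y - x))) -
    (y - x - (D x).starProjection (y - x)) by abel]
  have h3 : a * r ≤ κ * r := by gcongr
  exact (norm_sub_le _ _).trans (by linarith)

lemma IsApproxAtScale.norm_glued_sub_self_sub_le (h : IsApproxAtScale E D κ r R T)
    (hS : IsGluedProjection E D a r S) (haκ : a ≤ κ) (hκ0 : 0 ≤ κ) (hκ : κ ≤ 1 / 100)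
    (hr : 0 < r) (hr' : r ≤ 1 / 10) (hR : R ≤ 3) {y y' : F} (hy : y ∈ T) (hyR : ‖y‖ ≤ R)
    (hy' : y' ∈ T) (hyR' : ‖y'‖ ≤ R) :
    ‖(S y - y) - (S y' - y')‖ ≤ 4 * κ * ‖y - y'‖ := by
  rcases le_total ‖y - y'‖ r with hle | hle
  · obtain ⟨x, hx, hx4, hyx, hyx'⟩ := h.exists_near_norm_le hκ hr hr' hR hy hyR
    have hy'x : ‖y' - x‖ ≤ 2 * r := by
      rw [← sub_add_sub_cancel y' y x]
      refine (norm_add_le _ _).trans ?_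
      rw [norm_sub_rev y' y]
      linarith
    have h1 := (hS x hx hx4 y (by linarith)).2 y' hy'x
    have h2 := h.normal_le y hy hyR y' hy' hyR' hle x hx (by rw [norm_sub_rev]; linarith)
    rw [show (S y - y) - (S y' - y') = (S y - S y' - (D x).starProjection (y - y')) -
      (y - y' - (D x).starProjection (y - y')) by abel]
    have h3 : a * ‖y - y'‖ ≤ κ * ‖y - y'‖ := by gcongr
    have h4 : 0 ≤ κ * ‖y - y'‖ := by positivity
    exact (norm_sub_le _ _).trans (by linarith)
  · have h1 := h.norm_glued_sub_self_le hS haκ hκ hr hr' hR hy hyR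
    have h2 := h.norm_glued_sub_self_le hS haκ hκ hr hr' hR hy' hyR'
    have h3 : κ * r ≤ κ * ‖y - y'‖ := by gcongr
    exact (norm_sub_le _ _).trans (by linarith)

/-- The image of a set approximating `E` at scale `r` under a small perturbation of the identity
that agrees on it with the glued projection approximates `E` at scale `r / 2`. -/
lemma IsApproxAtScale.image_add (h : IsApproxAtScale E D κ r R T)
    (hflat : IsFlatAtScale E D δ r)
    (htilt : ∀ x ∈ E, ‖x‖ < 10 → ∀ x' ∈ E, ‖x'‖ < 10 → ‖x - x'‖ ≤ 10 * r → ∀ w,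
      ‖(D x).starProjection w - (D' x').starProjection w‖ ≤ δ * ‖w‖)
    (hS : IsGluedProjection E D a r S) (ha : 0 ≤ a) (hδ : 0 ≤ δ) (hκeq : κ = 2 * (a + δ))
    (hκ : κ ≤ 1 / 100) (hr : 0 < r) (hr' : r ≤ 1 / 10) (hR : R ≤ 3) {φ : F → F} {η : ℝ}
    (hη : η ≤ 1 / 100) (hφbd : ∀ x, ‖φ x‖ ≤ η * r)
    (hφlip : ∀ x y, ‖φ x - φ y‖ ≤ η * ‖x - y‖)
    (hφS : ∀ y ∈ T, ‖y‖ ≤ R → y + φ y = S y) :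
    IsApproxAtScale E D' κ (r / 2) (R - 5 * r) ((fun x => x + φ x) '' T) := by
  have hexp := norm_sub_le_two_mul_norm_add_sub (by linarith) hφlip
  have hmove : ∀ y, ‖φ y‖ ≤ r / 100 := fun y => (hφbd y).trans (by nlinarith)
  have hnorm : ∀ y, ‖y + φ y‖ ≤ R - 5 * r → ‖y‖ ≤ R - r := fun y hy => by
    have h1 := norm_sub_le (y + φ y) (φ y)
    rw [add_sub_cancel_right] at h1
    linarith [hmove y]
  have hκ' : ∀ {y}, y ∈ T → ‖y‖ ≤ R - r →
      ∃ x ∈ E, ‖x‖ ≤ 4 ∧ ‖y - x‖ ≤ κ * r ∧ ‖y - x‖ ≤ r / 100 := fun hy hyR =>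
    h.exists_near_norm_le hκ hr hr' hR hy (by linarith)
  have hclose : ∀ {x x' y : F}, ‖y - x‖ ≤ r / 100 → ‖x' - (y + φ y)‖ ≤ r / 2 → ‖x - x'‖ ≤ r := by
    intro x x' y hyx hx'
    rw [show x - x' = -(y - x) - φ y - (x' - (y + φ y)) by abel]
    refine (norm_sub_le _ _).trans ((add_le_add_left (norm_sub_le _ _) _).trans ?_)
    rw [norm_neg]
    linarith [hmove y]
  have htilt' : ∀ {x x' y : F}, x ∈ E → ‖x‖ ≤ 4 → ‖y - x‖ ≤ r / 100 → x' ∈ E →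
      ‖x' - (y + φ y)‖ ≤ r / 2 → ∀ w,
      ‖(D x).starProjection w - (D' x').starProjection w‖ ≤ δ * ‖w‖ := by
    intro x x' y hx hx4 hyx hx' hx'y w
    have h1 := hclose hyx hx'y
    refine htilt x hx (by linarith) x' hx' ?_ (by linarith) w
    rw [← sub_sub_cancel x x']
    exact (norm_sub_le _ _).trans_lt (by linarith)
  refine ⟨?_, ?_, ?_, ?_⟩
  · have hanti : AntilipschitzWith 2 fun x => x + φ x :=
      AntilipschitzWith.of_le_mul_dist fun x y => by
        simpa [dist_eq_norm] using hexp x y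
    have hcont : LipschitzWith 2 fun x => x + φ x :=
      LipschitzWith.of_dist_le_mul fun x y => by
        rw [dist_eq_norm, dist_eq_norm, show x + φ x - (y + φ y) = (x - y) + (φ x - φ y) by abel]
        refine (norm_add_le _ _).trans ?_
        have h1 := hφlip x y
        have h2 : η * ‖x - y‖ ≤ 1 / 100 * ‖x - y‖ := by gcongr
        have h3 := norm_nonneg (x - y)
        norm_num
        linarith
    exact (hanti.isClosedEmbedding hcont.uniformContinuous).isClosedMap _ h.isClosed
  · rintro _ ⟨y, hy, rfl⟩ hyR
    have hyR' := hnorm y hyR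
    obtain ⟨x, hx, hx4, hyx, hyx'⟩ := hκ' hy hyR'
    have h1 := (hS x hx hx4 y (by linarith)).1
    obtain ⟨e, he, hxe⟩ := hflat.exists_near x hx (by linarith) _
      ((D x).starProjection_apply_mem (y - x))
      (((D x).norm_starProjection_apply_le _).trans_lt (by linarith))
    refine ⟨e, he, ?_⟩
    beta_reduce
    rw [hφS y hy (by linarith), ← sub_add_sub_cancel _ (x + (D x).starProjection (y - x))]
    refine (norm_add_le _ _).trans ((add_le_add h1 hxe).trans (le_of_eq ?_))
    rw [hκeq]
    ring
  · rintro _ ⟨y, hy, rfl⟩ hyR _ ⟨y', hy', rfl⟩ hyR' hyy' x' hx' hx'y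
    beta_reduce at *
    have hyR2 := hnorm y hyR
    have hyR2' := hnorm y' hyR'
    obtain ⟨x, hx, hx4, hyx, hyx'⟩ := hκ' hy hyR2
    have h0 := hexp y y'
    have hy'x : ‖y' - x‖ ≤ 2 * r := by
      rw [← sub_add_sub_cancel y' y x]
      refine (norm_add_le _ _).trans ?_
      rw [norm_sub_rev y' y]
      linarith
    have h1 := (hS x hx hx4 y (by linarith)).2 y' hy'x
    have h2 := htilt' hx hx4 hyx' hx' hx'y (y + φ y - (y' + φ y'))
    rw [← hφS y hy (by linarith), ← hφS y' hy' (by linarith)] at h1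
    set u := y + φ y - (y' + φ y') with hu
    have h3 := norm_sub_starProjection_le (D x) (u - (D x).starProjection (y - y'))
    have h4 : (D x).starProjection ((D x).starProjection (y - y')) =
        (D x).starProjection (y - y') :=
      Submodule.starProjection_eq_self_iff.2 ((D x).starProjection_apply_mem _)
    rw [map_sub _ u, h4, sub_sub_sub_cancel_right] at h3
    rw [← sub_add_sub_cancel u ((D x).starProjection u)]
    have h5 : a * ‖y - y'‖ ≤ a * (2 * ‖u‖) := by gcongr
    have h6 : 0 ≤ δ * ‖u‖ := by positivity
    rw [hκeq]
    exact (norm_add_le _ _).trans (by linarith)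
  · rintro _ ⟨y, hy, rfl⟩ hyR x' hx' hx'y v hv hvr
    beta_reduce at *
    have hyR2 := hnorm y hyR
    obtain ⟨x, hx, hx4, hyx, hyx'⟩ := hκ' hy hyR2
    have h1 := htilt' hx hx4 hyx' hx' hx'y v
    rw [Submodule.starProjection_eq_self_iff.2 hv] at h1
    obtain ⟨z, hz, hzR, hzy, hzv⟩ := h.exists_starProjection_eq hκ hr (s := ‖v‖) hy hyR2 hx
      (by linarith) ((D x).starProjection_apply_mem v) ((D x).norm_starProjection_apply_le v)
      (by linarith)
    have hzx : ‖z - x‖ ≤ 2 * r := by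
      rw [← sub_add_sub_cancel z y x]
      exact (norm_add_le _ _).trans (by linarith)
    refine ⟨_, ⟨z, hz, rfl⟩, ?_⟩
    beta_reduce
    have h2 := (hS x hx hx4 z hzx).2 y (by linarith)
    rw [hφS z hz hzR, hφS y hy (by linarith)]
    rw [hzv] at h2
    rw [← sub_add_sub_cancel (S z - S y) ((D x).starProjection v) v]
    have h3 : a * ‖z - y‖ ≤ a * (3 * ‖v‖) := by gcongr
    have h4 : (3 * a + δ) * ‖v‖ ≤ 1 / 2 * ‖v‖ := by
      gcongr
      linarith
    exact (norm_add_le _ _).trans (by linarith)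

/-- One step of the construction: a set approximating `E` at scale `r` is moved, by a small
perturbation of the identity, onto a set approximating `E` at scale `r / 2`. -/
lemma IsApproxAtScale.exists_perturbation (hE : IsClosed E) (h : IsApproxAtScale E D κ r R T)
    (hflat : IsFlatAtScale E D δ r)
    (htilt : ∀ x ∈ E, ‖x‖ < 10 → ∀ x' ∈ E, ‖x'‖ < 10 → ‖x - x'‖ ≤ 10 * r → ∀ w,
      ‖(D x).starProjection w - (D' x').starProjection w‖ ≤ δ * ‖w‖)
    (hδ : 0 ≤ δ) (hκeq : κ = 2 * (glueConst F + 1) * δ) (hκ : κ ≤ 1 / 100)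
    (hr : 0 < r) (hr' : r ≤ 1 / 10) (hR : R ≤ 3) {η : ℝ} (hη : η ≤ 1 / 100)
    (hηeq : η = (1 + lipschitzExtensionConstant F) * (4 * κ)) :
    ∃ φ : F → F, (∀ x, ‖φ x‖ ≤ η * r) ∧ (∀ x y, ‖φ x - φ y‖ ≤ η * ‖x - y‖) ∧
      IsApproxAtScale E D' κ (r / 2) (R - 5 * r) ((fun x => x + φ x) '' T) := by
  obtain ⟨S, hS⟩ := hflat.exists_glued_projection hE hδ hr
  simp only [← mul_assoc] at hS
  have hK := one_le_glueConst F
  have ha : 0 ≤ glueConst F * δ := by positivity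
  have hκ0 : 0 ≤ κ := by rw [hκeq]; positivity
  have haκ : glueConst F * δ ≤ κ := by rw [hκeq]; nlinarith
  obtain ⟨φ, hφeq, hφbd, hφlip⟩ := exists_extension_bounded_lipschitz
    (s := T ∩ {y | ‖y‖ ≤ R}) (φ := fun y => S y - y) (c := 4 * κ) (by positivity) hr
    (fun y hy => (h.norm_glued_sub_self_le hS haκ hκ hr hr' hR hy.1 hy.2).trans
      (by nlinarith [mul_nonneg hκ0 hr.le]))
    (fun y hy y' hy' =>
      h.norm_glued_sub_self_sub_le hS haκ hκ0 hκ hr hr' hR hy.1 hy.2 hy'.1 hy'.2)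
  rw [← hηeq] at hφbd hφlip
  refine ⟨φ, hφbd, hφlip, h.image_add hflat htilt hS ha hδ (by rw [hκeq]; ring) hκ hr hr' hR hη
    hφbd hφlip fun y hy hyR => ?_⟩
  rw [← hφeq ⟨hy, hyR⟩, add_sub_cancel]

/-- Points of `E` which are roughly close to an approximating set are very close to it. -/
lemma IsApproxAtScale.exists_close_of_exists_close (h : IsApproxAtScale E D κ r R T)
    (hflat : IsFlatAtScale E D δ r) (hδκ : δ ≤ κ) (hκ : κ ≤ 1 / 100) (hr : 0 < r)
    (hR : 2 ≤ R) (hr' : r ≤ 1 / 10) {e : F} (he : e ∈ E) (he1 : ‖e‖ ≤ 1)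
    (hclose : ∃ y ∈ T, ‖y - e‖ ≤ r / 2) : ∃ y ∈ T, ‖y - e‖ ≤ 4 * κ * r := by
  obtain ⟨y, hy, hye⟩ := hclose
  obtain ⟨z, hz, hze⟩ := h.isClosed.exists_infDist_eq_dist ⟨y, hy⟩ e
  have hmin : ∀ z' ∈ T, ‖z - e‖ ≤ ‖z' - e‖ := fun z' hz' => by
    rw [← dist_eq_norm', ← dist_eq_norm', ← hze]
    exact infDist_le_dist_of_mem hz'
  refine ⟨z, hz, ?_⟩
  have hm : ‖z - e‖ ≤ r / 2 := (hmin y hy).trans hye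
  have hzR : ‖z‖ ≤ R := by
    rw [← sub_add_cancel z e]
    exact (norm_add_le _ _).trans (by linarith)
  have hv : ‖(D e).starProjection (e - z)‖ ≤ ‖z - e‖ := by
    rw [norm_sub_rev z e]
    exact (D e).norm_starProjection_apply_le _
  obtain ⟨z', hz', hzz'⟩ := h.exists_step z hz hzR e he (by rw [norm_sub_rev]; linarith)
    _ ((D e).starProjection_apply_mem (e - z)) (hv.trans (by linarith))
  obtain ⟨x, hx, hzx⟩ := h.exists_near z hz hzR
  have h0 : κ * r ≤ 1 / 100 * r := by gcongr
  have hxe : ‖x - e‖ ≤ r := by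
    rw [show x - e = -(z - x) + (z - e) by abel]
    refine (norm_add_le _ _).trans ?_
    rw [norm_neg]
    linarith
  have h1 := hflat.normal_le e he (by linarith) x hx (by linarith)
  have h2 := norm_sub_starProjection_le (D e) (z - x)
  have h3 : ‖e - z - (D e).starProjection (e - z)‖ ≤ κ * r + δ * r := by
    rw [show e - z - (D e).starProjection (e - z) =
      -((z - x - (D e).starProjection (z - x)) + (x - e - (D e).starProjection (x - e))) by
        simp only [map_sub]; abel, norm_neg]
    exact (norm_add_le _ _).trans (by linarith)
  have h4 := hmin z' hz'
  rw [show z' - e = (z' - z - (D e).starProjection (e - z)) -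
    (e - z - (D e).starProjection (e - z)) by abel] at h4
  have h5 := norm_sub_le (z' - z - (D e).starProjection (e - z))
    (e - z - (D e).starProjection (e - z))
  have h6 : δ * r ≤ κ * r := by gcongr
  linarith

end Step

section Limit

open Filter Topology

lemma isClosedMap_of_norm_sub_self_le {F : Type*} [NormedAddCommGroup F] [ProperSpace F]
    {g : F → F} {c : ℝ} (hg : Continuous g) (hc : ∀ x, ‖g x - x‖ ≤ c) : IsClosedMap g := by
  refine (isProperMap_iff_tendsto_cocompact.2 ⟨hg, ?_⟩).isClosedMap
  rw [← Metric.cobounded_eq_cocompact, ← tendsto_norm_atTop_iff_cobounded]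
  refine tendsto_atTop_mono (fun x => ?_) (tendsto_atTop_add_const_right _ (-c)
    (tendsto_norm_cobounded_atTop (E := F)))
  have h1 := norm_sub_le (g x) (g x - x)
  rw [sub_sub_cancel] at h1
  linarith [hc x]

lemma surjective_add_of_norm_sub_le {F : Type*} [NormedAddCommGroup F] [CompleteSpace F]
    {φ : F → F} {η : ℝ} (hη0 : 0 ≤ η) (hη : η < 1) (hφ : ∀ x y, ‖φ x - φ y‖ ≤ η * ‖x - y‖) :
    Function.Surjective fun x => x + φ x := by
  intro y
  lift η to NNReal using hη0
  have hcontr : ContractingWith η fun x => y - φ x :=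
    ⟨by exact_mod_cast hη, LipschitzWith.of_dist_le_mul fun x x' => by
      rw [dist_eq_norm, dist_eq_norm, sub_sub_sub_cancel_left, norm_sub_rev]
      exact hφ x x'⟩
  refine ⟨hcontr.fixedPoint, ?_⟩
  have h := hcontr.fixedPoint_isFixedPt
  exact (eq_sub_iff_add_eq.1 h.eq.symm)

/-- The composition of the first `k` maps `x ↦ x + φ j x`. -/
def iteratePerturbation {F : Type*} [Add F] (φ : ℕ → F → F) : ℕ → F → F
  | 0 => id
  | k + 1 => fun x => iteratePerturbation φ k x + φ k (iteratePerturbation φ k x)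

lemma one_add_pow_le_rpow_neg {η τ t : ℝ} (hη0 : 0 ≤ η) (hτ : 0 < τ) (hη : 1 + η ≤ 2 ^ τ) {k : ℕ}
    (ht : 0 < t) (htk : t ≤ (1 / 2) ^ k) : (1 + η) ^ k ≤ t ^ (-τ) := by
  calc (1 + η) ^ k ≤ ((2 : ℝ) ^ τ) ^ k := by gcongr
    _ = (((1 : ℝ) / 2) ^ k) ^ (-τ) := by
      rw [← Real.rpow_natCast, ← Real.rpow_natCast, ← Real.rpow_mul (by norm_num),
        ← Real.rpow_mul (by norm_num), one_div, Real.inv_rpow (by norm_num),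
        ← Real.rpow_neg (by norm_num)]
      congr 1
      ring
    _ ≤ t ^ (-τ) := Real.rpow_le_rpow_of_nonpos ht htk (by linarith)

lemma rpow_le_one_sub_pow {η τ t : ℝ} (hτ : 0 < τ) (hη' : η ≤ 1 / 100)
    (hη : (3 / 4) ^ τ ≤ 1 - η) {m : ℕ} (ht : 0 < t) (htm : (1 - η) ^ m * t ≤ (1 / 2) ^ m) :
    t ^ τ ≤ (1 - η) ^ m := by
  have h1 : t ≤ (3 / 4) ^ m := by
    have h2 : (1 : ℝ) / 2 ≤ (1 - η) * (3 / 4) := by linarith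
    have h3 : (1 - η) ^ m * t ≤ (1 - η) ^ m * (3 / 4) ^ m := by
      rw [← mul_pow]
      exact htm.trans (by gcongr)
    exact le_of_mul_le_mul_left h3 (pow_pos (by linarith) m)
  calc t ^ τ ≤ ((3 / 4 : ℝ) ^ m) ^ τ := by gcongr
    _ = ((3 / 4 : ℝ) ^ τ) ^ m := by
      rw [← Real.rpow_natCast, ← Real.rpow_natCast, ← Real.rpow_mul (by norm_num),
        ← Real.rpow_mul (by norm_num), mul_comm]
    _ ≤ (1 - η) ^ m := by gcongr

variable {F : Type*} [NormedAddCommGroup F] {φ : ℕ → F → F} {η τ : ℝ}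

lemma norm_iteratePerturbation_succ_sub_le (hlip : ∀ k x y, ‖φ k x - φ k y‖ ≤ η * ‖x - y‖)
    (k : ℕ) (x y : F) :
    ‖iteratePerturbation φ (k + 1) x - iteratePerturbation φ (k + 1) y‖ ≤
      (1 + η) * ‖iteratePerturbation φ k x - iteratePerturbation φ k y‖ := by
  have h1 := hlip k (iteratePerturbation φ k x) (iteratePerturbation φ k y)
  rw [iteratePerturbation, add_sub_add_comm]
  exact (norm_add_le _ _).trans (by linarith)

lemma le_norm_iteratePerturbation_succ_sub (hlip : ∀ k x y, ‖φ k x - φ k y‖ ≤ η * ‖x - y‖)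
    (k : ℕ) (x y : F) :
    (1 - η) * ‖iteratePerturbation φ k x - iteratePerturbation φ k y‖ ≤
      ‖iteratePerturbation φ (k + 1) x - iteratePerturbation φ (k + 1) y‖ := by
  have h1 := hlip k (iteratePerturbation φ k x) (iteratePerturbation φ k y)
  rw [iteratePerturbation, add_sub_add_comm]
  have h2 := norm_sub_le_norm_add (iteratePerturbation φ k x - iteratePerturbation φ k y)
    (φ k (iteratePerturbation φ k x) - φ k (iteratePerturbation φ k y))
  linarith

lemma norm_iteratePerturbation_sub_le (hη0 : 0 ≤ η)
    (hlip : ∀ k x y, ‖φ k x - φ k y‖ ≤ η * ‖x - y‖) (k : ℕ) (x y : F) :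
    ‖iteratePerturbation φ k x - iteratePerturbation φ k y‖ ≤ (1 + η) ^ k * ‖x - y‖ := by
  induction k with
  | zero => simp [iteratePerturbation]
  | succ k ih =>
    refine (norm_iteratePerturbation_succ_sub_le hlip k x y).trans ?_
    rw [pow_succ', mul_assoc]
    gcongr

lemma le_norm_iteratePerturbation_sub (hη : η ≤ 1)
    (hlip : ∀ k x y, ‖φ k x - φ k y‖ ≤ η * ‖x - y‖) (k : ℕ) (x y : F) :
    (1 - η) ^ k * ‖x - y‖ ≤ ‖iteratePerturbation φ k x - iteratePerturbation φ k y‖ := by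
  induction k with
  | zero => simp [iteratePerturbation]
  | succ k ih =>
    refine le_trans ?_ (le_norm_iteratePerturbation_succ_sub hlip k x y)
    rw [pow_succ', mul_assoc]
    have : 0 ≤ 1 - η := by linarith
    gcongr

lemma surjective_iteratePerturbation [CompleteSpace F] (hη0 : 0 ≤ η) (hη : η < 1)
    (hlip : ∀ k x y, ‖φ k x - φ k y‖ ≤ η * ‖x - y‖) (k : ℕ) :
    Function.Surjective (iteratePerturbation φ k) := by
  induction k with
  | zero => exact Function.surjective_id
  | succ k ih => exact (surjective_add_of_norm_sub_le hη0 hη (hlip k)).comp ih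

lemma exists_norm_sub_iteratePerturbation_le [CompleteSpace F]
    (hbd : ∀ k x, ‖φ k x‖ ≤ η * ((1 / 2) ^ k / 10)) :
    ∃ g : F → F, ∀ k x, ‖g x - iteratePerturbation φ k x‖ ≤ η / 5 * (1 / 2) ^ k := by
  have hstep : ∀ x k, dist (iteratePerturbation φ k x) (iteratePerturbation φ (k + 1) x) ≤
      η / 5 / 2 / 2 ^ k := fun x k => by
    rw [iteratePerturbation, dist_self_add_right]
    refine (hbd k _).trans (le_of_eq ?_)
    rw [one_div, inv_pow]
    ring
  choose g hg using fun x => cauchySeq_tendsto_of_complete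
    (cauchySeq_of_le_geometric_two (hstep x))
  refine ⟨g, fun k x => ?_⟩
  have h := dist_le_of_le_geometric_two_of_tendsto (hstep x) (hg x) k
  rw [one_div, inv_pow, ← div_eq_mul_inv, ← dist_eq_norm']
  exact h

lemma norm_sub_sub_le_of_norm_sub_le {g G : F → F} {c : ℝ} (h : ∀ x, ‖g x - G x‖ ≤ c) (x y : F) :
    ‖(g x - g y) - (G x - G y)‖ ≤ 2 * c := by
  rw [sub_sub_sub_comm]
  exact (norm_sub_le _ _).trans (by linarith [h x, h y])

lemma tendsto_of_norm_sub_le_mul_half_pow {u : ℕ → F} {a : F} {c : ℝ}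
    (h : ∀ k, ‖u k - a‖ ≤ c * (1 / 2) ^ k) : Tendsto u atTop (𝓝 a) := by
  rw [tendsto_iff_norm_sub_tendsto_zero]
  refine squeeze_zero (fun _ => norm_nonneg _) h ?_
  simpa using (tendsto_pow_atTop_nhds_zero_of_lt_one (by norm_num : (0 : ℝ) ≤ 1 / 2)
    (by norm_num)).const_mul c

lemma norm_limit_sub_le (hη0 : 0 ≤ η) (hη : η ≤ 1 / 100) (hτ : 0 < τ) (hητ : 1 + η ≤ 2 ^ τ)
    (hlip : ∀ k x y, ‖φ k x - φ k y‖ ≤ η * ‖x - y‖) {g : F → F}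
    (hg : ∀ k x, ‖g x - iteratePerturbation φ k x‖ ≤ η / 5 * (1 / 2) ^ k) {x y : F}
    (hxy : 0 < ‖x - y‖) (hxy1 : ‖x - y‖ ≤ 1) : ‖g x - g y‖ ≤ 3 * ‖x - y‖ ^ (1 - τ) := by
  obtain ⟨k, hk, hk'⟩ := exists_nat_pow_near_of_lt_one hxy hxy1 (y := (1 / 2 : ℝ)) (by norm_num)
    (by norm_num)
  have h1 := norm_sub_sub_le_of_norm_sub_le (hg k) x y
  have h2 := norm_iteratePerturbation_sub_le hη0 hlip k x y
  have h3 := one_add_pow_le_rpow_neg hη0 hτ hητ hxy hk'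
  have h4 : ‖x - y‖ ^ (1 - τ) = ‖x - y‖ ^ (-τ) * ‖x - y‖ := by
    rw [sub_eq_neg_add 1 τ, Real.rpow_add hxy, Real.rpow_one]
  have h5 : (1 + η) ^ k * ‖x - y‖ ≤ ‖x - y‖ ^ (1 - τ) := by
    rw [h4]
    gcongr
  have h6 : ‖x - y‖ ≤ ‖x - y‖ ^ (1 - τ) :=
    le_trans (by nlinarith [one_le_pow₀ (n := k) (by linarith : 1 ≤ 1 + η)]) h5
  have h7 : η * (1 / 2) ^ k ≤ 1 / 100 * (1 / 2) ^ k := by gcongr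
  rw [pow_succ] at hk
  have h8 := norm_le_norm_add_norm_sub' (g x - g y)
    (iteratePerturbation φ k x - iteratePerturbation φ k y)
  linarith

lemma le_norm_limit_sub (hη : η ≤ 1 / 100) (hτ : 0 < τ)
    (hητ : (3 / 4) ^ τ ≤ 1 - η) (hlip : ∀ k x y, ‖φ k x - φ k y‖ ≤ η * ‖x - y‖) {g : F → F}
    (hg : ∀ k x, ‖g x - iteratePerturbation φ k x‖ ≤ η / 5 * (1 / 2) ^ k) {x y : F}
    (hxy : 0 < ‖x - y‖) (hxy1 : ‖x - y‖ ≤ 1) : 1 / 4 * ‖x - y‖ ^ (1 + τ) ≤ ‖g x - g y‖ := by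
  have hex : ∃ k, (1 / 2 : ℝ) ^ k / 10 ≤
      ‖iteratePerturbation φ k x - iteratePerturbation φ k y‖ := by
    obtain ⟨k, hk⟩ := exists_pow_lt_of_lt_one hxy (by norm_num : (3 / 4 : ℝ) < 1)
    refine ⟨k, le_trans ?_ (le_norm_iteratePerturbation_sub (by linarith) hlip k x y)⟩
    have h0 : (0 : ℝ) ≤ (1 / 2) ^ k := by positivity
    have h1 : (1 / 2 : ℝ) ^ k ≤ (1 - η) ^ k * (3 / 4) ^ k := by
      rw [← mul_pow]
      gcongr
      linarith
    have h2 : (1 - η) ^ k * (3 / 4) ^ k ≤ (1 - η) ^ k * ‖x - y‖ :=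
      mul_le_mul_of_nonneg_left hk.le (pow_nonneg (by linarith) k)
    linarith
  classical
  have hk := Nat.find_spec hex
  have hmin := fun m => Nat.find_min hex (m := m)
  generalize Nat.find hex = k at hk hmin
  have h1 := norm_sub_sub_le_of_norm_sub_le (hg k) x y
  have h2 := norm_le_norm_add_norm_sub (g x - g y)
    (iteratePerturbation φ k x - iteratePerturbation φ k y)
  have h3 : η * (1 / 2) ^ k ≤ 1 / 100 * (1 / 2) ^ k := by gcongr
  have h4 : ‖x - y‖ ^ (1 + τ) = ‖x - y‖ ^ τ * ‖x - y‖ := by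
    rw [add_comm, Real.rpow_add hxy, Real.rpow_one]
  suffices h5 : 1 / 2 * ‖x - y‖ ^ (1 + τ) ≤
      ‖iteratePerturbation φ k x - iteratePerturbation φ k y‖ by
    linarith [Real.rpow_nonneg hxy.le (1 + τ)]
  rw [h4]
  cases k with
  | zero =>
    have h6 := Real.rpow_le_one hxy.le hxy1 hτ.le
    rw [iteratePerturbation, id, id]
    nlinarith
  | succ m =>
    have h5 := not_le.1 (hmin m m.lt_succ_self)
    have h6 := le_norm_iteratePerturbation_sub (by linarith) hlip m x y
    have h7 : (0 : ℝ) ≤ (1 / 2) ^ m := by positivity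
    have h8 := rpow_le_one_sub_pow hτ hη hητ (m := m) hxy (by linarith)
    have h9 := le_norm_iteratePerturbation_succ_sub hlip m x y
    have h10 : ‖x - y‖ ^ τ * ‖x - y‖ ≤ (1 - η) ^ m * ‖x - y‖ := by gcongr
    have h11 : 1 / 2 * ‖iteratePerturbation φ m x - iteratePerturbation φ m y‖ ≤
        (1 - η) * ‖iteratePerturbation φ m x - iteratePerturbation φ m y‖ := by
      gcongr
      linarith
    linarith

/-- Infinite compositions of geometrically decaying Lipschitz perturbations of the identity are
bi-Hölder bijections. -/
theorem exists_limit_iteratePerturbation [ProperSpace F] (hη0 : 0 ≤ η) (hη : η ≤ 1 / 100)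
    (hτ : 0 < τ) (hτ1 : τ < 1) (hητ : 1 + η ≤ 2 ^ τ) (hητ' : (3 / 4) ^ τ ≤ 1 - η)
    (hbd : ∀ k x, ‖φ k x‖ ≤ η * ((1 / 2) ^ k / 10))
    (hlip : ∀ k x y, ‖φ k x - φ k y‖ ≤ η * ‖x - y‖) :
    ∃ g : F → F, Function.Bijective g ∧ IsClosedMap g ∧
      (∀ k x, ‖g x - iteratePerturbation φ k x‖ ≤ η / 5 * (1 / 2) ^ k) ∧
      ∀ x y, ‖x - y‖ ≤ 1 → 1 / 4 * ‖x - y‖ ^ (1 + τ) ≤ ‖g x - g y‖ ∧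
        ‖g x - g y‖ ≤ 3 * ‖x - y‖ ^ (1 - τ) := by
  obtain ⟨g, hg⟩ := exists_norm_sub_iteratePerturbation_le hbd
  have hg0 : ∀ x, ‖g x - x‖ ≤ η / 5 := fun x => by simpa [iteratePerturbation] using hg 0 x
  have hhol : ∀ x y, ‖x - y‖ ≤ 1 → 1 / 4 * ‖x - y‖ ^ (1 + τ) ≤ ‖g x - g y‖ ∧
      ‖g x - g y‖ ≤ 3 * ‖x - y‖ ^ (1 - τ) := fun x y hxy => by
    rcases eq_or_ne x y with rfl | hne
    · rw [sub_self, sub_self, norm_zero, Real.zero_rpow (by linarith), Real.zero_rpow (by linarith)]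
      simp
    · have hpos := norm_sub_pos_iff.2 hne
      exact ⟨le_norm_limit_sub hη hτ hητ' hlip hg hpos hxy,
        norm_limit_sub_le hη0 hη hτ hητ hlip hg hpos hxy⟩
  have hcont : Continuous g := by
    have hunif : TendstoUniformly (iteratePerturbation φ) g atTop := by
      rw [Metric.tendstoUniformly_iff]
      intro ε hε
      have hlim : Tendsto (fun k : ℕ => η / 5 * (1 / 2 : ℝ) ^ k) atTop (𝓝 (η / 5 * 0)) :=
        (tendsto_pow_atTop_nhds_zero_of_lt_one (by norm_num) (by norm_num)).const_mul _
      rw [mul_zero] at hlim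
      filter_upwards [hlim.eventually_lt_const hε] with k hk x
      rw [dist_eq_norm]
      exact (hg k x).trans_lt hk
    refine hunif.continuous (Eventually.of_forall fun k => ?_).frequently
    refine (LipschitzWith.of_dist_le_mul (K := (1 + η.toNNReal) ^ k) fun x y => ?_).continuous
    rw [dist_eq_norm, dist_eq_norm]
    push_cast
    rw [Real.coe_toNNReal η hη0]
    exact norm_iteratePerturbation_sub_le hη0 hlip k x y
  have hclosed := isClosedMap_of_norm_sub_self_le hcont hg0
  refine ⟨g, ⟨fun x y hxy => ?_, fun y => ?_⟩, hclosed, hg, hhol⟩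
  · by_contra hne
    have hpos := norm_sub_pos_iff.2 hne
    rcases le_total ‖x - y‖ 1 with hle | hle
    · have h1 := (hhol x y hle).1
      have h2 := Real.rpow_pos_of_pos hpos (1 + τ)
      rw [hxy, sub_self, norm_zero] at h1
      linarith
    · have h1 := norm_sub_sub_le_of_norm_sub_le (G := id) hg0 x y
      rw [hxy, sub_self, zero_sub, norm_neg, id, id] at h1
      linarith
  · choose x hx using fun k => surjective_iteratePerturbation hη0 (by linarith) hlip k y
    have hlim : Tendsto (fun k => g (x k)) atTop (𝓝 y) :=
      tendsto_of_norm_sub_le_mul_half_pow (c := η / 5) fun k => by simpa [hx k] using hg k (x k)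
    exact hclosed.isClosed_range.mem_of_tendsto hlim (Eventually.of_forall fun k => ⟨x k, rfl⟩)

end Limit

section Assembly

open Filter Topology

variable {F : Type*} [NormedAddCommGroup F] [InnerProductSpace ℝ F] [FiniteDimensional ℝ F]

lemma norm_starProjection_sub_starProjection_le {K K' : Submodule ℝ F} {c : ℝ}
    (h : ∀ v ∈ K, ‖v - K'.starProjection v‖ ≤ c * ‖v‖)
    (h' : ∀ v ∈ K', ‖v - K.starProjection v‖ ≤ c * ‖v‖) (hc : 0 ≤ c) (w : F) :
    ‖K.starProjection w - K'.starProjection w‖ ≤ 2 * c * ‖w‖ := by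
  set u := w - K'.starProjection w with hu
  have h1 : ‖K.starProjection u‖ ≤ c * ‖w‖ := by
    have hself : K.starProjection (K.starProjection u) = K.starProjection u :=
      Submodule.starProjection_eq_self_iff.2 (K.starProjection_apply_mem u)
    have e : ‖K.starProjection u‖ * ‖K.starProjection u‖ =
        inner ℝ (K.starProjection u - K'.starProjection (K.starProjection u)) w := by
      rw [← real_inner_self_eq_norm_mul_norm, K.inner_starProjection_left_eq_right u, hself,
        ← K.inner_starProjection_left_eq_right, inner_sub_left,
        K'.inner_starProjection_left_eq_right, hu, real_inner_comm, inner_sub_left,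
        real_inner_comm, real_inner_comm (K'.starProjection w), ← hu]
    have h2 := real_inner_le_norm
      (K.starProjection u - K'.starProjection (K.starProjection u)) w
    have h3 := h _ (K.starProjection_apply_mem u)
    rcases (norm_nonneg (K.starProjection u)).eq_or_lt with h0 | h0
    · rw [← h0]
      positivity
    · refine le_of_mul_le_mul_left ?_ h0
      rw [e]
      refine h2.trans ?_
      calc _ ≤ c * ‖K.starProjection u‖ * ‖w‖ := by gcongr
        _ = _ := by ring
  have h4 := h' _ (K'.starProjection_apply_mem w)
  have h5 : c * ‖K'.starProjection w‖ ≤ c * ‖w‖ := by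
    gcongr
    exact K'.norm_starProjection_apply_le w
  rw [show K.starProjection w - K'.starProjection w = K.starProjection u -
    (K'.starProjection w - K.starProjection (K'.starProjection w)) by
      rw [hu, map_sub]; abel]
  exact (norm_sub_le _ _).trans (by linarith)

/-- At every point `x` of `E` of norm less than `10` and every scale `ρ ≤ 10`, the set `E` is
`ε ρ`-close to the plane through `x` of direction `D x ρ`. -/
structure IsReifenbergFlat (E : Set F) (D : F → ℝ → Submodule ℝ F) (ε : ℝ) : Prop where
  normal_le : ∀ x ∈ E, ‖x‖ < 10 → ∀ ρ, 0 < ρ → ρ ≤ 10 → ∀ y ∈ E, ‖y - x‖ < ρ →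
    ‖y - x - (D x ρ).starProjection (y - x)‖ ≤ ε * ρ
  exists_near : ∀ x ∈ E, ‖x‖ < 10 → ∀ ρ, 0 < ρ → ρ ≤ 10 → ∀ v ∈ D x ρ, ‖v‖ < ρ →
    ∃ y ∈ E, ‖x + v - y‖ ≤ ε * ρ

variable {E : Set F} {D : F → ℝ → Submodule ℝ F} {ε : ℝ}

lemma IsReifenbergFlat.norm_sub_starProjection_le_of_mem (h : IsReifenbergFlat E D ε) (hε : 0 ≤ ε)
    {x x' : F} {ρ ρ' t : ℝ} (ht : 0 < t) (hρ : ρ ≤ 10) (hρ' : ρ' ≤ 10) (hρt : ρ ≤ 5 * t)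
    (hρt' : ρ' ≤ 5 * t) (hx : x ∈ E) (hx10 : ‖x‖ < 10) (hx' : x' ∈ E) (hx10' : ‖x'‖ < 10)
    (hxρ : ‖x - x'‖ + t + 5 * t * ε < ρ) (hxρ' : ‖x - x'‖ + t + 5 * t * ε < ρ') {v : F}
    (hv : v ∈ D x ρ) : ‖v - (D x' ρ').starProjection v‖ ≤ 15 * ε * ‖v‖ := by
  rcases eq_or_ne v 0 with rfl | hv0
  · simp
  have hv0' := norm_pos_iff.2 hv0
  have htε : 0 ≤ 5 * t * ε := by positivity
  have hd := norm_nonneg (x - x')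
  set s := t / ‖v‖ with hs
  have hs0 : 0 < s := by positivity
  have hsv : ‖s • v‖ = t := by
    rw [norm_smul, Real.norm_of_nonneg hs0.le, hs, div_mul_cancel₀ _ hv0'.ne']
  obtain ⟨y, hy, hxy⟩ := h.exists_near x hx hx10 ρ (by linarith) hρ (s • v)
    ((D x ρ).smul_mem s hv) (by linarith)
  have hερ : ε * ρ ≤ 5 * t * ε := by nlinarith
  have hερ' : ε * ρ' ≤ 5 * t * ε := by nlinarith
  have h1 := h.normal_le x' hx' hx10' ρ' (by linarith) hρ' y hy (by
    rw [show y - x' = (x - x') + s • v - (x + s • v - y) by abel]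
    refine (norm_sub_le _ _).trans_lt ((add_le_add_left (norm_add_le _ _) _).trans_lt ?_)
    linarith)
  have h2 := h.normal_le x' hx' hx10' ρ' (by linarith) hρ' x hx (by linarith)
  have h3 := norm_sub_starProjection_le (D x' ρ') (x + s • v - y)
  have h4 : ‖s • v - (D x' ρ').starProjection (s • v)‖ ≤ 15 * ε * t := by
    rw [show s • v - (D x' ρ').starProjection (s • v) =
      (x + s • v - y - (D x' ρ').starProjection (x + s • v - y)) +
      (y - x' - (D x' ρ').starProjection (y - x')) -
      (x - x' - (D x' ρ').starProjection (x - x')) by simp only [map_sub, map_add]; abel]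
    refine (norm_sub_le _ _).trans ((add_le_add_left (norm_add_le _ _) _).trans ?_)
    linarith
  rw [map_smul, ← smul_sub, norm_smul, Real.norm_of_nonneg hs0.le] at h4
  refine le_of_mul_le_mul_left (h4.trans (le_of_eq ?_)) hs0
  rw [hs]
  field_simp

lemma IsReifenbergFlat.tilt_le (h : IsReifenbergFlat E D ε) (hε : 0 ≤ ε)
    {x x' : F} {ρ ρ' t : ℝ} (ht : 0 < t) (hρ : ρ ≤ 10) (hρ' : ρ' ≤ 10) (hρt : ρ ≤ 5 * t)
    (hρt' : ρ' ≤ 5 * t) (hx : x ∈ E) (hx10 : ‖x‖ < 10) (hx' : x' ∈ E) (hx10' : ‖x'‖ < 10)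
    (hxρ : ‖x - x'‖ + t + 5 * t * ε < ρ) (hxρ' : ‖x - x'‖ + t + 5 * t * ε < ρ') (w : F) :
    ‖(D x ρ).starProjection w - (D x' ρ').starProjection w‖ ≤ 100 * ε * ‖w‖ := by
  have h1 := norm_starProjection_sub_starProjection_le (K := D x ρ) (K' := D x' ρ')
    (fun v hv => h.norm_sub_starProjection_le_of_mem hε ht hρ hρ' hρt hρt' hx hx10 hx' hx10'
      hxρ hxρ' hv)
    (fun v hv => h.norm_sub_starProjection_le_of_mem hε ht hρ' hρ hρt' hρt hx' hx10' hx hx10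
      (by rwa [norm_sub_rev]) (by rwa [norm_sub_rev]) hv) (by positivity) w
  have h2 : 0 ≤ ε * ‖w‖ := by positivity
  linarith

lemma IsReifenbergFlat.isFlatAtScale (h : IsReifenbergFlat E D ε) (hε : 0 ≤ ε) (hε' : ε ≤ 1 / 10)
    {r : ℝ} (hr : 0 < r) (hr' : r ≤ 1 / 10) :
    IsFlatAtScale E (fun x => D x (100 * r)) (100 * ε) r := by
  refine ⟨fun x hx hx10 y hy hyx => ?_, fun x hx hx10 v hv hvr => ?_,
    fun x hx hx10 x' hx' hx10' hxx' w => ?_⟩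
  · exact (h.normal_le x hx hx10 _ (by positivity) (by linarith) y hy hyx).trans
      (by linarith)
  · obtain ⟨y, hy, hxy⟩ := h.exists_near x hx hx10 _ (by positivity) (by linarith) v hv hvr
    exact ⟨y, hy, hxy.trans (by linarith)⟩
  · refine h.tilt_le hε (t := 20 * r) (by positivity) (by linarith) (by linarith) (by linarith)
      (by linarith) hx hx10 hx' hx10' ?_ ?_ w <;> nlinarith

lemma IsReifenbergFlat.tilt_half_le (h : IsReifenbergFlat E D ε) (hε : 0 ≤ ε) (hε' : ε ≤ 1 / 10)
    {r : ℝ} (hr : 0 < r) (hr' : r ≤ 1 / 10) (x : F) (hx : x ∈ E) (hx10 : ‖x‖ < 10) (x' : F)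
    (hx' : x' ∈ E) (hx10' : ‖x'‖ < 10) (hxx' : ‖x - x'‖ ≤ 10 * r) (w : F) :
    ‖(D x (100 * r)).starProjection w - (D x' (100 * (r / 2))).starProjection w‖ ≤
      100 * ε * ‖w‖ := by
  refine h.tilt_le hε (t := 20 * r) (by positivity) (by linarith) (by linarith) (by linarith)
    (by linarith) hx hx10 hx' hx10' ?_ ?_ w <;> nlinarith

lemma IsReifenbergFlat.isApproxAtScale_direction (h : IsReifenbergFlat E D ε) (hE0 : (0 : F) ∈ E)
    (hε : 0 ≤ ε) {κ : ℝ} (hκ : 100 * ε ≤ κ) (hκ' : κ ≤ 1 / 100) :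
    IsApproxAtScale E (fun x => D x (100 * (1 / 10))) κ (1 / 10) 3 (D 0 10) := by
  norm_num only
  have htilt : ∀ y : F, ‖y‖ ≤ 3 → ∀ x ∈ E, ‖x - y‖ ≤ 1 / 10 → ∀ w,
      ‖(D x 10).starProjection w - (D 0 10).starProjection w‖ ≤ κ * ‖w‖ := by
    intro y hy x hx hxy w
    have h1 : ‖x‖ ≤ 4 := by
      rw [← sub_add_cancel x y]
      exact (norm_add_le _ _).trans (by linarith)
    refine (h.tilt_le hε (t := 2) (by norm_num) le_rfl le_rfl (by norm_num) (by norm_num) hx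
      (by linarith) hE0 (by simp) ?_ ?_ w).trans (by gcongr) <;> rw [sub_zero] <;> linarith
  refine ⟨(D 0 10).closed_of_finiteDimensional, fun y hy hy3 => ?_,
    fun y hy hy3 y' hy' _ _ x hx hxy => ?_, fun y hy hy3 x hx hxy v hv hvr => ?_⟩
  · obtain ⟨e, he, hye⟩ := h.exists_near 0 hE0 (by simp) 10 (by norm_num) le_rfl y hy (by linarith)
    rw [zero_add] at hye
    exact ⟨e, he, hye.trans (by linarith)⟩
  · have h1 := htilt y hy3 x hx hxy (y - y')
    rwa [Submodule.starProjection_eq_self_iff.2 ((D 0 10).sub_mem hy hy'), norm_sub_rev] at h1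
  · refine ⟨y + (D 0 10).starProjection v,
      (D 0 10).add_mem hy ((D 0 10).starProjection_apply_mem v), ?_⟩
    have h1 := htilt y hy3 x hx hxy v
    rw [Submodule.starProjection_eq_self_iff.2 hv, norm_sub_rev] at h1
    rw [add_sub_cancel_left]
    have h2 : κ * ‖v‖ ≤ 1 / 100 * ‖v‖ := by gcongr
    linarith [norm_nonneg v]

/-- The perturbations whose infinite composition maps the plane at the origin onto `E`. -/
lemma IsReifenbergFlat.exists_perturbations (h : IsReifenbergFlat E D ε) (hE : IsClosed E)
    (hE0 : (0 : F) ∈ E) (hε : 0 ≤ ε) {κ η : ℝ} (hκeq : κ = 2 * (glueConst F + 1) * (100 * ε))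
    (hκ : κ ≤ 1 / 100) (hηeq : η = (1 + lipschitzExtensionConstant F) * (4 * κ))
    (hη : η ≤ 1 / 100) :
    ∃ φ : ℕ → F → F, (∀ k x, ‖φ k x‖ ≤ η * ((1 / 2) ^ k / 10)) ∧
      (∀ k x y, ‖φ k x - φ k y‖ ≤ η * ‖x - y‖) ∧
      ∀ k, IsApproxAtScale E (fun x => D x (100 * ((1 / 2) ^ k / 10))) κ ((1 / 2) ^ k / 10)
        (2 + (1 / 2) ^ k) (iteratePerturbation φ k '' D 0 10) := by
  have hK := one_le_glueConst F
  have hεκ : 100 * ε ≤ κ := by rw [hκeq]; nlinarith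
  have hpow : ∀ k : ℕ, (0 : ℝ) < (1 / 2) ^ k ∧ (1 / 2 : ℝ) ^ k ≤ 1 := fun k =>
    ⟨by positivity, pow_le_one₀ (by norm_num) (by norm_num)⟩
  have hstep : ∀ (k : ℕ) (T : Set F),
      IsApproxAtScale E (fun x => D x (100 * ((1 / 2) ^ k / 10))) κ ((1 / 2) ^ k / 10)
        (2 + (1 / 2) ^ k) T →
      ∃ φ : F → F, (∀ x, ‖φ x‖ ≤ η * ((1 / 2) ^ k / 10)) ∧
        (∀ x y, ‖φ x - φ y‖ ≤ η * ‖x - y‖) ∧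
        IsApproxAtScale E (fun x => D x (100 * ((1 / 2) ^ (k + 1) / 10))) κ
          ((1 / 2) ^ (k + 1) / 10) (2 + (1 / 2) ^ (k + 1)) ((fun x => x + φ x) '' T) := by
    intro k T hT
    obtain ⟨hk0, hk1⟩ := hpow k
    have hr0 : (0 : ℝ) < (1 / 2) ^ k / 10 := by positivity
    have hr1 : (1 / 2 : ℝ) ^ k / 10 ≤ 1 / 10 := by linarith
    rw [show (1 / 2 : ℝ) ^ (k + 1) / 10 = (1 / 2) ^ k / 10 / 2 by ring,
      show 2 + (1 / 2 : ℝ) ^ (k + 1) = 2 + (1 / 2) ^ k - 5 * ((1 / 2) ^ k / 10) by ring]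
    exact hT.exists_perturbation hE (h.isFlatAtScale hε (by linarith) hr0 hr1)
      (h.tilt_half_le hε (by linarith) hr0 hr1) (by positivity) hκeq hκ hr0 hr1 (by linarith)
      hη hηeq
  choose! ψ hψbd hψlip hψT using hstep
  let T : ℕ → Set F := fun k => Nat.rec (D 0 10 : Set F) (fun k S => (fun x => x + ψ k S x) '' S) k
  have hT : ∀ k, IsApproxAtScale E (fun x => D x (100 * ((1 / 2) ^ k / 10))) κ ((1 / 2) ^ k / 10)
      (2 + (1 / 2) ^ k) (T k) := by
    intro k
    induction k with
    | zero =>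
      rw [pow_zero, show (2 : ℝ) + 1 = 3 by norm_num]
      exact h.isApproxAtScale_direction hE0 hε hεκ hκ
    | succ k ih => exact hψT k _ ih
  have himage : ∀ k, iteratePerturbation (fun k => ψ k (T k)) k '' D 0 10 = T k := by
    intro k
    induction k with
    | zero => exact image_id _
    | succ k ih =>
      change _ = (fun x => x + ψ k (T k) x) '' T k
      rw [← ih, image_image, ih]
      rfl
  exact ⟨fun k => ψ k (T k), fun k => hψbd k _ (hT k), fun k => hψlip k _ (hT k),
    fun k => by rw [himage]; exact hT k⟩

/-- Points of `E` in the unit ball are close to the successive images of the plane. -/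
lemma IsReifenbergFlat.exists_iteratePerturbation_close (h : IsReifenbergFlat E D ε)
    (hE0 : (0 : F) ∈ E) (hε : 0 ≤ ε) {κ η : ℝ} (hεκ : 100 * ε ≤ κ) (hκ : κ ≤ 1 / 100)
    (hη : η ≤ 1 / 100) {φ : ℕ → F → F} (hbd : ∀ k x, ‖φ k x‖ ≤ η * ((1 / 2) ^ k / 10))
    (hT : ∀ k, IsApproxAtScale E (fun x => D x (100 * ((1 / 2) ^ k / 10))) κ ((1 / 2) ^ k / 10)
      (2 + (1 / 2) ^ k) (iteratePerturbation φ k '' D 0 10)) {e : F} (he : e ∈ E)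
    (he1 : ‖e‖ ≤ 1) (k : ℕ) :
    ∃ x ∈ D 0 10, ‖iteratePerturbation φ k x - e‖ ≤ 4 * κ * ((1 / 2) ^ k / 10) := by
  induction k with
  | zero =>
    have h1 := h.normal_le 0 hE0 (by simp) 10 (by norm_num) le_rfl e he
      (by rw [sub_zero]; linarith)
    refine ⟨_, (D 0 10).starProjection_apply_mem e, ?_⟩
    rw [sub_zero, norm_sub_rev] at h1
    refine h1.trans ?_
    rw [pow_zero]
    linarith
  | succ k ih =>
    obtain ⟨x, hx, hxe⟩ := ih
    have hk0 : (0 : ℝ) < (1 / 2) ^ k := by positivity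
    have hk1 : (1 / 2 : ℝ) ^ k ≤ 1 := pow_le_one₀ (by norm_num) (by norm_num)
    have hr : (1 / 2 : ℝ) ^ (k + 1) = (1 / 2) ^ k / 2 := by ring
    have hr0 : (0 : ℝ) < (1 / 2) ^ (k + 1) / 10 := by positivity
    have hr1 : (1 / 2 : ℝ) ^ (k + 1) / 10 ≤ 1 / 10 := by linarith
    obtain ⟨_, ⟨z, hz, rfl⟩, hze⟩ := (hT (k + 1)).exists_close_of_exists_close
      (h.isFlatAtScale hε (by linarith) hr0 hr1) hεκ hκ hr0 (by linarith) hr1 he he1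
      ⟨_, ⟨x, hx, rfl⟩, by
        have h1 := hbd k (iteratePerturbation φ k x)
        have h2 : η * ((1 / 2) ^ k / 10) ≤ 1 / 100 * ((1 / 2) ^ k / 10) := by gcongr
        have h3 : κ * ((1 / 2) ^ k / 10) ≤ 1 / 100 * ((1 / 2) ^ k / 10) := by gcongr
        rw [iteratePerturbation, add_sub_right_comm, hr]
        exact (norm_add_le _ _).trans (by linarith)⟩
    exact ⟨z, hz, hze⟩

lemma exists_pos_le_rpow {τ : ℝ} (hτ : 0 < τ) :
    ∃ η : ℝ, 0 < η ∧ η ≤ 1 / 100 ∧ η ≤ τ ∧ 1 + η ≤ 2 ^ τ ∧ (3 / 4) ^ τ ≤ 1 - η := by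
  have h1 : (1 : ℝ) < 2 ^ τ := Real.one_lt_rpow (by norm_num) hτ
  have h2 : (3 / 4 : ℝ) ^ τ < 1 := Real.rpow_lt_one (by norm_num) (by norm_num) hτ
  refine ⟨min (min (1 / 100) τ) (min (2 ^ τ - 1) (1 - (3 / 4) ^ τ)), ?_, ?_, ?_, ?_, ?_⟩
  · simp only [lt_min_iff]
    exact ⟨⟨by norm_num, hτ⟩, by linarith, by linarith⟩
  · exact (min_le_left _ _).trans (min_le_left _ _)
  · exact (min_le_left _ _).trans (min_le_right _ _)
  · linarith [(min_le_right (min (1 / 100) τ) (min (2 ^ τ - 1) (1 - (3 / 4 : ℝ) ^ τ))).trans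
      (min_le_left _ _)]
  · linarith [(min_le_right (min (1 / 100) τ) (min (2 ^ τ - 1) (1 - (3 / 4 : ℝ) ^ τ))).trans
      (min_le_right _ _)]

/-- A Reifenberg flat set is, in the unit ball, the image of a plane under a bi-Hölder bijection. -/
theorem IsReifenbergFlat.exists_parametrization (h : IsReifenbergFlat E D ε) (hE : IsClosed E)
    (hE0 : (0 : F) ∈ E) (hε : 0 ≤ ε) {κ η τ : ℝ}
    (hκeq : κ = 2 * (glueConst F + 1) * (100 * ε)) (hκ : κ ≤ 1 / 100)
    (hηeq : η = (1 + lipschitzExtensionConstant F) * (4 * κ)) (hη0 : 0 ≤ η) (hη : η ≤ 1 / 100)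
    (hτ : 0 < τ) (hτ1 : τ < 1) (hητ : η ≤ τ) (hητ2 : 1 + η ≤ 2 ^ τ)
    (hητ3 : (3 / 4) ^ τ ≤ 1 - η) :
    ∃ g : F → F, Function.Bijective g ∧ (∀ x, ‖g x - x‖ ≤ τ) ∧
      (∀ x y, ‖x - y‖ ≤ 1 → 1 / 4 * ‖x - y‖ ^ (1 + τ) ≤ ‖g x - g y‖ ∧
        ‖g x - g y‖ ≤ 3 * ‖x - y‖ ^ (1 - τ)) ∧
      E ∩ ball 0 1 = g '' (D 0 10) ∩ ball 0 1 := by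
  have hK := one_le_glueConst F
  have hεκ : 100 * ε ≤ κ := by rw [hκeq]; nlinarith
  obtain ⟨φ, hbd, hlip, hT⟩ := h.exists_perturbations hE hE0 hε hκeq hκ hηeq hη
  obtain ⟨g, hbij, hclosed, hg, hhol⟩ :=
    exists_limit_iteratePerturbation hη0 hη hτ hτ1 hητ2 hητ3 hbd hlip
  refine ⟨g, hbij, fun x => ?_, hhol, ?_⟩
  · have h1 := hg 0 x
    rw [iteratePerturbation, id, pow_zero] at h1
    linarith
  ext e
  refine and_congr_left fun he => ?_
  rw [mem_ball_zero_iff] at he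
  constructor
  · intro heE
    choose x hx hxe using
      h.exists_iteratePerturbation_close hE0 hε hεκ hκ hη hbd hT heE he.le
    have hlim : Tendsto (fun k => g (x k)) atTop (𝓝 e) :=
      tendsto_of_norm_sub_le_mul_half_pow (c := η / 5 + 4 * κ / 10) fun k => by
        rw [← sub_add_sub_cancel _ (iteratePerturbation φ k (x k))]
        exact (norm_add_le _ _).trans (by linarith [hg k (x k), hxe k])
    exact (hclosed _ (D 0 10).closed_of_finiteDimensional).mem_of_tendsto hlim
      (Eventually.of_forall fun k => mem_image_of_mem g (hx k))
  · rintro ⟨x, hx, rfl⟩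
    have hnear : ∀ k, ∃ y ∈ E, ‖iteratePerturbation φ k x - y‖ ≤ κ * ((1 / 2) ^ k / 10) := by
      intro k
      refine (hT k).exists_near _ (mem_image_of_mem _ hx) ?_
      have hk0 : (0 : ℝ) < (1 / 2) ^ k := by positivity
      have h1 : η / 5 * (1 / 2) ^ k ≤ 1 / 100 / 5 * (1 / 2) ^ k := by gcongr
      have h2 := norm_le_norm_add_norm_sub (g x) (iteratePerturbation φ k x)
      linarith [hg k x]
    choose y hy hxy using hnear
    refine hE.mem_of_tendsto (tendsto_of_norm_sub_le_mul_half_pow (u := y) (a := g x)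
      (c := η / 5 + κ / 10) fun k => ?_) (Eventually.of_forall hy)
    rw [norm_sub_rev, ← sub_add_sub_cancel _ (iteratePerturbation φ k x)]
    exact (norm_add_le _ _).trans (by linarith [hg k x, hxy k])

lemma norm_sub_starProjection_le_infDist (Q : AffineSubspace ℝ F) {x : F} (hx : x ∈ Q) (y : F) :
    ‖y - x - Q.direction.starProjection (y - x)‖ ≤ infDist y (Q : Set F) := by
  obtain ⟨p, hp, hyp⟩ := (Q.closed_of_finiteDimensional).exists_infDist_eq_dist ⟨x, hx⟩ y
  have h1 : Q.direction.starProjection (p - x) = p - x :=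
    Submodule.starProjection_eq_self_iff.2 (AffineSubspace.vsub_mem_direction hp hx)
  rw [hyp, dist_eq_norm, ← sub_add_sub_cancel y p x, map_add, h1, add_sub_add_right_eq_sub]
  exact norm_sub_starProjection_le _ _

end Assembly

/-- **Reifenberg's topological disk theorem** (Theorem 1.1). -/
theorem reifenberg_topological_disk (n d : ℕ) (hd : 0 < d) (hdn : d < n)
    (τ : ℝ) (hτ : 0 < τ) (hτ' : τ < 10⁻¹) :
    ∃ ε : ℝ, 0 < ε ∧
      ∀ E : Set (V n), IsClosed E → (0 : V n) ∈ E →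
      ∀ P : V n → ℝ → Set (V n),
      (∀ x ∈ E ∩ ball (0 : V n) 10, ∀ r : ℝ, 0 < r → r ≤ 10 →
        IsAffinePlane n d (P x r) ∧ x ∈ P x r ∧
        (∀ y ∈ E ∩ ball x r, infDist y (P x r) ≤ ε * r) ∧
        (∀ y ∈ P x r ∩ ball x r, infDist y E ≤ ε * r)) →
      ∃ g : V n → V n, Function.Bijective g ∧
        (∀ x : V n, dist (g x) x ≤ τ) ∧
        (∀ x y : V n, dist x y ≤ 1 →
          (1 / 4 : ℝ) * dist x y ^ (1 + τ) ≤ dist (g x) (g y) ∧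
          dist (g x) (g y) ≤ 3 * dist x y ^ (1 - τ)) ∧
        E ∩ ball (0 : V n) 1 = g '' (P 0 10) ∩ ball (0 : V n) 1 := by
  obtain ⟨η, hη0, hη, hητ, hητ2, hητ3⟩ := exists_pos_le_rpow hτ
  have hC : 0 ≤ (lipschitzExtensionConstant (V n) : ℝ) := NNReal.coe_nonneg _
  have hK := one_le_glueConst (V n)
  set κ := η / (4 * (1 + lipschitzExtensionConstant (V n))) with hκ
  have hκ0 : 0 < κ := by positivity
  have hηeq : η = (1 + lipschitzExtensionConstant (V n)) * (4 * κ) := by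
    rw [hκ]
    field_simp
  refine ⟨κ / (2 * (glueConst (V n) + 1) * 100), by positivity, fun E hE hE0 P hP => ?_⟩
  set ε := κ / (2 * (glueConst (V n) + 1) * 100) with hε
  have hε0 : 0 < ε := by positivity
  have hκeq : κ = 2 * (glueConst (V n) + 1) * (100 * ε) := by
    rw [hε]
    field_simp
  have hplane : ∀ x ∈ E ∩ ball (0 : V n) 10, ∀ r : ℝ, 0 < r → r ≤ 10 →
      ∃ Q : AffineSubspace ℝ (V n), (Q : Set (V n)) = P x r := fun x hx r hr hr' => by
    obtain ⟨⟨Q, hQ, -⟩, -⟩ := hP x hx r hr hr'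
    exact ⟨Q, hQ⟩
  choose! Q hQ using hplane
  have hflat : IsReifenbergFlat E (fun x ρ => (Q x ρ).direction) ε := by
    refine ⟨fun x hx hx10 ρ hρ hρ' y hy hyx => ?_, fun x hx hx10 ρ hρ hρ' v hv hvρ => ?_⟩
    all_goals
      have hx' : x ∈ E ∩ ball (0 : V n) 10 := ⟨hx, mem_ball_zero_iff.2 hx10⟩
      obtain ⟨-, hxP, hPE, hEP⟩ := hP x hx' ρ hρ hρ'
      rw [← hQ x hx' ρ hρ hρ'] at hxP hPE hEP
    · exact (norm_sub_starProjection_le_infDist _ hxP y).trans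
        (hPE y ⟨hy, mem_ball_iff_norm.2 hyx⟩)
    · obtain ⟨y, hy, hyd⟩ := hE.exists_infDist_eq_dist ⟨x, hx⟩ (x + v)
      refine ⟨y, hy, ?_⟩
      rw [← dist_eq_norm, ← hyd]
      refine hEP _ ⟨?_, by rwa [mem_ball_iff_norm, add_sub_cancel_left]⟩
      rw [add_comm]
      exact AffineSubspace.vadd_mem_of_mem_direction hv hxP
  have h00 : (0 : V n) ∈ E ∩ ball (0 : V n) 10 := ⟨hE0, by simp⟩
  have hP0 : ((Q 0 10).direction : Set (V n)) = P 0 10 := by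
    have h0Q : (0 : V n) ∈ Q 0 10 := by
      rw [← SetLike.mem_coe, hQ 0 h00 10 (by norm_num) le_rfl]
      exact (hP 0 h00 10 (by norm_num) le_rfl).2.1
    rw [← hQ 0 h00 10 (by norm_num) le_rfl, AffineSubspace.coe_direction_eq_vsub_set_right h0Q]
    simp
  obtain ⟨g, hbij, hdist, hhol, himage⟩ := hflat.exists_parametrization hE hE0 hε0.le hκeq
    (by nlinarith) hηeq hη0.le hη hτ (by norm_num at hτ'; linarith) hητ hητ2 hητ3
  rw [hP0] at himage
  simp only [dist_eq_norm]
  exact ⟨g, hbij, hdist, hhol, himage⟩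
end
end

section
/- For all integers 0 < d < n and every real τ with 0 < τ < 10⁻¹, there exists ε > 0 (depending only on n, d, τ) with the following property. Let E ⊆ B(0,1) ⊆ ℝ^n be a closed set containing the origin, and suppose that for every x ∈ E and every 0 < r ≤ 10 there is a d-dimensional affine plane P(x,r) containing x such that: dist(y,P(x,r)) ≤ εr for all y ∈ E ∩ B(x,r); d_{x,10^{-k}}(P(x,10^{-k}), P(x,10^{-k+1})) ≤ ε for all x ∈ E and all integers k ≥ 0; and d_{x,10^{-k+2}}(P(x,10^{-k}), P(y,10^{-k})) ≤ ε whenever k ≥ 0 and x, y ∈ E satisfy |x−y| ≤ 10^{-k+2}. Then there is a bijective map g : ℝ^n → ℝ^n such that |g(x) − x| ≤ τ for all x ∈ ℝ^n, (1/4)|x−y|^{1+τ} ≤ |g(x) − g(y)| ≤ 3|x−y|^{1−τ} for all x, y ∈ ℝ^n with |x−y| ≤ 1, and E ⊆ g(P(0,10)). Moreover Σ = g(P(0,10)) is Reifenberg-flat: there is a constant C, depending only on n and d, such that for every x ∈ Σ and r > 0 there is a d-dimensional affine plane Q(x,r) through x with d_{x,r}(Σ, Q(x,r)) ≤ Cε.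 (Theorem 1.10.) -/
open Metric Set

noncomputable section

/-- The normalized local Hausdorff distance `d_{x,r}(A,B)`. -/
def nhd {n : ℕ} (x : V n) (r : ℝ) (A B : Set (V n)) : ℝ :=
  r⁻¹ * max (⨆ y ∈ A ∩ ball x r, infDist y B) (⨆ y ∈ B ∩ ball x r, infDist y A)

theorem exists_card_le_of_separated (X : Type*) [NormedAddCommGroup X] [NormedSpace ℝ X]
    [FiniteDimensional ℝ X] (R : ℝ) :
    ∃ M : ℕ, ∀ (r : ℝ) (y : X) (J : Finset X), 0 < r → (∀ j ∈ J, dist y j ≤ R * r) →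
      (∀ i ∈ J, ∀ j ∈ J, i ≠ j → r < dist i j) → J.card ≤ M := by
  have hc : TotallyBounded (closedBall (0 : X) R) := (isCompact_closedBall 0 R).totallyBounded
  obtain ⟨t, -, ht, hcov⟩ := finite_approx_of_totallyBounded hc (1 / 2) (by norm_num)
  refine ⟨ht.toFinset.card, fun r y J hr hJ hsep => ?_⟩
  have hmem : ∀ j ∈ J, ∃ c ∈ t, dist (r⁻¹ • (j - y)) c < 1 / 2 := by
    intro j hj
    have h1 : r⁻¹ • (j - y) ∈ closedBall (0 : X) R := by
      rw [mem_closedBall_zero_iff, norm_smul, norm_inv, Real.norm_of_nonneg hr.le,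
        inv_mul_le_iff₀ hr, ← dist_eq_norm, dist_comm, mul_comm r]
      exact hJ j hj
    simpa using hcov h1
  choose! c hct hc using hmem
  refine Finset.card_le_card_of_injOn c (fun j hj => by simpa using hct j hj) ?_
  intro i hi j hj hij
  by_contra hne
  have h1 := hsep i hi j hj hne
  have h2 := dist_triangle_right (r⁻¹ • (i - y)) (r⁻¹ • (j - y)) (c i)
  have h3 := hc i hi
  have h4 := hc j hj
  rw [← hij] at h4
  have h5 : dist (r⁻¹ • (i - y)) (r⁻¹ • (j - y)) = r⁻¹ * dist i j := by
    rw [dist_smul₀, dist_sub_right, norm_inv, Real.norm_of_nonneg hr.le]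
  have h6 : r⁻¹ * dist i j < 1 := by linarith
  rw [inv_mul_lt_iff₀ hr] at h6
  linarith

theorem exists_finset_net {X : Type*} [MetricSpace X] [ProperSpace X]
    {E : Set X} (hE : Bornology.IsBounded E) {r : ℝ} (hr : 0 < r) :
    ∃ N : Finset X, ↑N ⊆ E ∧ (∀ i ∈ N, ∀ j ∈ N, i ≠ j → r < dist i j) ∧
      ∀ x ∈ E, ∃ j ∈ N, dist x j ≤ r := by
  obtain ⟨N, hN⟩ := zorn_subset {N : Set X | N ⊆ E ∧ N.Pairwise fun i j => r < dist i j} (by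
    intro c hc hchain
    refine ⟨⋃₀ c, ⟨sUnion_subset fun s hs => (hc hs).1, ?_⟩, fun s hs => subset_sUnion_of_mem hs⟩
    exact (pairwise_sUnion hchain.directedOn).2 fun s hs => (hc hs).2)
  have hfin : N.Finite := by
    have hc : TotallyBounded N := (hE.subset hN.prop.1).isCompact_closure.totallyBounded.subset
      subset_closure
    obtain ⟨t, -, ht, hcov⟩ := finite_approx_of_totallyBounded hc (r / 2) (by positivity)
    have hmem : ∀ j ∈ N, ∃ c ∈ t, dist j c < r / 2 := fun j hj => by simpa using hcov hj
    choose! c hct hc using hmem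
    refine Set.Finite.of_finite_image (f := c) (ht.subset (by
      rintro _ ⟨j, hj, rfl⟩; exact hct j hj)) ?_
    intro i hi j hj hij
    by_contra hne
    have h1 := hN.prop.2 hi hj hne
    have h2 := dist_triangle_right i j (c i)
    have h3 := hc i hi
    have h4 := hc j hj
    rw [← hij] at h4
    linarith
  refine ⟨hfin.toFinset, by simpa using hN.prop.1, ?_, ?_⟩
  · intro i hi j hj hij
    exact hN.prop.2 (by simpa using hi) (by simpa using hj) hij
  · intro x hx
    by_contra! hcon
    have hins : insert x N ∈ {N : Set X | N ⊆ E ∧ N.Pairwise fun i j => r < dist i j} := by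
      refine ⟨insert_subset hx hN.prop.1, ?_⟩
      refine hN.prop.2.insert fun j hj _ => ?_
      have := hcon j (by simpa using hj)
      exact ⟨this, by rwa [dist_comm]⟩
    have hxN : x ∈ N := hN.le_of_ge hins (subset_insert x N) (mem_insert x N)
    have := hcon x (by simpa using hxN)
    rw [dist_self] at this
    linarith

/-- A Lipschitz partition of unity at scale `r`, subordinate to balls centred on a finite subset of
`E` and exhaustive in the `10 r`-neighbourhood of `E`. -/
theorem exists_lipschitz_partition (X : Type*) [NormedAddCommGroup X] [NormedSpace ℝ X]
    [FiniteDimensional ℝ X] :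
    ∃ K : ℝ, 1 ≤ K ∧ ∀ (E : Set X) (r : ℝ), Bornology.IsBounded E → 0 < r →
      ∃ (N : Finset X) (θ : X → X → ℝ), ↑N ⊆ E ∧ (∀ j y, 0 ≤ θ j y) ∧
        (∀ y, ∑ j ∈ N, θ j y ≤ 1) ∧
        (∀ y, ∀ x ∈ E, dist y x ≤ 10 * r → ∑ j ∈ N, θ j y = 1) ∧
        (∀ j y, θ j y ≠ 0 → dist y j < 12 * r) ∧
        (∀ y y', ∑ j ∈ N, |θ j y - θ j y'| ≤ K * (dist y y' / r)) := by
  have : ProperSpace X := FiniteDimensional.proper_real X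
  obtain ⟨M, hM⟩ := exists_card_le_of_separated X 13
  refine ⟨2 * M + 2, by linarith [Nat.cast_nonneg (α := ℝ) M], fun E r hE hr => ?_⟩
  obtain ⟨N, hNE, hsep, hnet⟩ := exists_finset_net hE hr
  let w : X → X → ℝ := fun j y => max 0 (12 - dist y j / r)
  let W : X → ℝ := fun y => ∑ j ∈ N, w j y
  let m : X → ℝ := fun y => max 1 (W y)
  have hw0 : ∀ j y, 0 ≤ w j y := fun j y => le_max_left _ _
  have hm1 : ∀ y, 1 ≤ m y := fun y => le_max_left _ _
  have hm0 : ∀ y, 0 < m y := fun y => lt_of_lt_of_le one_pos (hm1 y)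
  have hWm : ∀ y, W y ≤ m y := fun y => le_max_right _ _
  have hwz : ∀ j y, 12 * r ≤ dist y j → w j y = 0 := by
    intro j y h
    refine max_eq_left ?_
    rw [sub_nonpos, le_div_iff₀ hr]
    exact h
  have hsum : ∀ y, ∑ j ∈ N, w j y / m y = W y / m y := fun y => (Finset.sum_div _ _ _).symm
  have hle1 : ∀ y, ∑ j ∈ N, w j y / m y ≤ 1 := fun y => by
    rw [hsum, div_le_one (hm0 y)]; exact hWm y
  refine ⟨N, fun j y => w j y / m y, hNE, fun j y => div_nonneg (hw0 j y) (hm0 y).le, hle1,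
    ?_, ?_, ?_⟩
  · intro y x hx hyx
    obtain ⟨j, hj, hxj⟩ := hnet x hx
    have h1 : 1 ≤ w j y := by
      refine le_trans ?_ (le_max_right _ _)
      have : dist y j ≤ 11 * r := by linarith [dist_triangle y x j]
      have : dist y j / r ≤ 11 := by rwa [div_le_iff₀ hr]
      linarith
    have h2 : w j y ≤ W y := Finset.single_le_sum (f := fun j => w j y) (fun i _ => hw0 i y) hj
    have h3 : m y = W y := max_eq_right (h1.trans h2)
    change ∑ j ∈ N, w j y / m y = 1
    rw [hsum, h3, div_self]
    linarith
  · intro j y h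
    by_contra! hcon
    exact h (by simp [hwz j y hcon])
  · intro y y'
    change ∑ j ∈ N, |w j y / m y - w j y' / m y'| ≤ _
    have hd0 : 0 ≤ dist y y' / r := by positivity
    rcases le_or_gt r (dist y y') with hfar | hnear
    · have h1 : 1 ≤ dist y y' / r := by rwa [one_le_div hr]
      calc ∑ j ∈ N, |w j y / m y - w j y' / m y'|
          ≤ ∑ j ∈ N, (w j y / m y + w j y' / m y') := by
            refine Finset.sum_le_sum fun j _ => abs_le.2 ⟨?_, ?_⟩
            · linarith [div_nonneg (hw0 j y) (hm0 y).le]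
            · linarith [div_nonneg (hw0 j y') (hm0 y').le]
        _ ≤ 2 := by rw [Finset.sum_add_distrib]; linarith [hle1 y, hle1 y']
        _ ≤ _ := by nlinarith [Nat.cast_nonneg (α := ℝ) M]
    · have hJ : ∑ j ∈ N, |w j y - w j y'| ≤ M * (dist y y' / r) := by
        classical
        rw [← Finset.sum_filter_add_sum_filter_not N (fun j => dist y j ≤ 13 * r)]
        have hz : ∑ j ∈ N.filter (fun j => ¬ dist y j ≤ 13 * r), |w j y - w j y'| = 0 := by
          refine Finset.sum_eq_zero fun j hj => ?_
          have hj := (Finset.mem_filter.1 hj).2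
          rw [hwz j y (by linarith), hwz j y' (by linarith [dist_triangle y y' j])]
          simp
        rw [hz, add_zero]
        have hcard : ((N.filter (fun j => dist y j ≤ 13 * r)).card : ℝ) ≤ M := by
          exact_mod_cast hM r y _ hr (fun j hj => (Finset.mem_filter.1 hj).2)
            (fun i hi j hj => hsep i (Finset.mem_filter.1 hi).1 j (Finset.mem_filter.1 hj).1)
        calc _ ≤ ∑ j ∈ N.filter (fun j => dist y j ≤ 13 * r), dist y y' / r := by
              refine Finset.sum_le_sum fun j _ => ?_
              refine (abs_max_sub_max_le_max _ _ _ _).trans ?_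
              rw [sub_self, abs_zero, max_eq_right (abs_nonneg _),
                show 12 - dist y j / r - (12 - dist y' j / r) = (dist y' j - dist y j) / r by ring,
                abs_div, abs_of_pos hr]
              gcongr
              rw [dist_comm y y']
              exact abs_dist_sub_le y' y j
          _ ≤ _ := by
              rw [Finset.sum_const, nsmul_eq_mul]
              gcongr
      have hmm : |m y' - m y| ≤ M * (dist y y' / r) := by
        refine (abs_max_sub_max_le_max _ _ _ _).trans ?_
        rw [sub_self, abs_zero, max_eq_right (abs_nonneg _), abs_sub_comm]
        change |∑ j ∈ N, w j y - ∑ j ∈ N, w j y'| ≤ _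
        rw [← Finset.sum_sub_distrib]
        exact (Finset.abs_sum_le_sum_abs _ _).trans hJ
      have hterm : ∀ j, |w j y / m y - w j y' / m y'| ≤
          |w j y - w j y'| + w j y' / m y' * |m y' - m y| := by
        intro j
        have h1 : w j y / m y - w j y' / m y' =
            ((w j y - w j y') + w j y' / m y' * (m y' - m y)) / m y := by
          field_simp [(hm0 y).ne', (hm0 y').ne']
          ring
        rw [h1, abs_div, abs_of_pos (hm0 y)]
        refine (div_le_self (abs_nonneg _) (hm1 y)).trans ((abs_add_le _ _).trans ?_)
        rw [abs_mul, abs_of_nonneg (div_nonneg (hw0 j y') (hm0 y').le)]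
      calc _ ≤ ∑ j ∈ N, (|w j y - w j y'| + w j y' / m y' * |m y' - m y|) :=
            Finset.sum_le_sum fun j _ => hterm j
        _ = ∑ j ∈ N, |w j y - w j y'| + (∑ j ∈ N, w j y' / m y') * |m y' - m y| := by
            rw [Finset.sum_add_distrib, Finset.sum_mul]
        _ ≤ M * (dist y y' / r) + 1 * (M * (dist y y' / r)) := by
            gcongr
            exact hle1 y'
        _ ≤ _ := by nlinarith

/-- A small Lipschitz map on a set `S`, bounded by a multiple of `r`, extends to the whole space
with comparable Lipschitz constant and bound. -/
theorem exists_bounded_lipschitz_extension (X : Type*) [NormedAddCommGroup X] [NormedSpace ℝ X]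
    [FiniteDimensional ℝ X] :
    ∃ L : ℝ, 1 ≤ L ∧ ∀ (S : Set X) (h : X → X) (r Λ : ℝ), 0 < r → 0 ≤ Λ →
      (∀ y ∈ S, ∀ y' ∈ S, ‖h y - h y'‖ ≤ Λ * ‖y - y'‖) → (∀ y ∈ S, ‖h y‖ ≤ Λ * r) →
      ∃ k : X → X, (∀ y y', ‖k y - k y'‖ ≤ L * Λ * ‖y - y'‖) ∧ (∀ y, ‖k y‖ ≤ L * Λ * r) ∧
        ∀ y ∈ S, k y = h y := by
  classical
  let c := lipschitzExtensionConstant X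
  refine ⟨1 + c, by simp, fun S h r Λ hr hΛ hlip hbd => ?_⟩
  let T : Set X := {y | ∀ s ∈ S, r ≤ ‖y - s‖}
  let f : X → X := fun y => if y ∈ S then h y else 0
  have hTS : ∀ y ∈ T, y ∉ S := fun y hy hyS => by
    have := hy y hyS
    rw [sub_self, norm_zero] at this
    linarith
  have hfS : ∀ y ∈ S, f y = h y := fun y hy => if_pos hy
  have hfT : ∀ y ∈ T, f y = 0 := fun y hy => if_neg (hTS y hy)
  have hf : LipschitzOnWith (NNReal.mk Λ hΛ) f (S ∪ T) := by
    refine LipschitzOnWith.of_dist_le_mul fun y hy y' hy' => ?_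
    rw [dist_eq_norm, dist_eq_norm, NNReal.coe_mk]
    rcases hy with hy | hy <;> rcases hy' with hy' | hy'
    · rw [hfS y hy, hfS y' hy']; exact hlip y hy y' hy'
    · rw [hfS y hy, hfT y' hy', sub_zero]
      have := hy' y hy
      rw [norm_sub_rev] at this
      exact (hbd y hy).trans (mul_le_mul_of_nonneg_left this hΛ)
    · rw [hfS y' hy', hfT y hy, zero_sub, norm_neg]
      exact (hbd y' hy').trans (mul_le_mul_of_nonneg_left (hy y' hy') hΛ)
    · rw [hfT y hy, hfT y' hy', sub_self, norm_zero]; positivity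
  obtain ⟨k, hk, hkf⟩ := hf.extend_finite_dimension
  have hklip : ∀ y y', ‖k y - k y'‖ ≤ c * Λ * ‖y - y'‖ := fun y y' => by
    have := hk.dist_le_mul y y'
    rwa [dist_eq_norm, dist_eq_norm, NNReal.coe_mul, NNReal.coe_mk] at this
  refine ⟨k, fun y y' => (hklip y y').trans ?_, fun y => ?_, fun y hy => ?_⟩
  · gcongr; simp
  · by_cases hy : y ∈ T
    · rw [← hkf (Or.inr hy), hfT y hy, norm_zero]; positivity
    · obtain ⟨s, hs, hys⟩ : ∃ s ∈ S, ‖y - s‖ < r := by simpa [T] using hy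
      have h1 := hklip y s
      have h2 : k s = h s := by rw [← hkf (Or.inl hs), hfS s hs]
      have h3 : ‖k y‖ ≤ ‖k y - k s‖ + ‖k s‖ := by simpa using norm_add_le (k y - k s) (k s)
      have h4 : (c : ℝ) * Λ * ‖y - s‖ ≤ c * Λ * r := by gcongr
      rw [h2] at h3
      rw [h2] at h1
      linarith [hbd s hs]
  · rw [← hkf (Or.inl hy), hfS y hy]

/-- The properties of an orthogonal projection that the construction uses. -/
structure IsContractiveProj {X : Type*} [NormedAddCommGroup X] [NormedSpace ℝ X]
    (p : X →L[ℝ] X) : Prop where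
  idem : ∀ v, p (p v) = p v
  norm_le : ∀ v, ‖p v‖ ≤ ‖v‖
  norm_sub_le : ∀ v, ‖v - p v‖ ≤ ‖v‖

theorem norm_le_two_mul_of_cone {X : Type*} [NormedAddCommGroup X] [NormedSpace ℝ X]
    {p : X →L[ℝ] X} {v : X} {A : ℝ} (hA : A ≤ 1 / 2) (h : ‖v - p v‖ ≤ A * ‖v‖) :
    ‖v‖ ≤ 2 * ‖p v‖ := by
  have h1 : ‖v‖ ≤ ‖v - p v‖ + ‖p v‖ := by simpa using norm_add_le (v - p v) (p v)
  nlinarith [norm_nonneg v]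

theorem norm_le_of_cone {X : Type*} [NormedAddCommGroup X] [NormedSpace ℝ X]
    {p : X →L[ℝ] X} {v : X} {A : ℝ} (h : ‖v - p v‖ ≤ A * ‖v‖) :
    (1 - A) * ‖v‖ ≤ ‖p v‖ := by
  have h1 : ‖v‖ ≤ ‖v - p v‖ + ‖p v‖ := by simpa using norm_add_le (v - p v) (p v)
  linarith

/-- If a set covers a ball of the range of a projection `p` in a small cone, its image under a small
Lipschitz perturbation of the identity covers a ball of the range of any nearby projection. -/
theorem cover_of_perturbation {X : Type*} [NormedAddCommGroup X] [NormedSpace ℝ X]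
    [CompleteSpace X] {p p' : X →L[ℝ] X} (hp : IsContractiveProj p) (hp' : IsContractiveProj p')
    {η A δ b ρ R : ℝ} {S : Set X} {x x' q' : X} {h : X → X}
    (hη0 : 0 ≤ η) (hδ0 : 0 ≤ δ) (hρ0 : 0 ≤ ρ)
    (hpp : ∀ v, ‖p v - p' v‖ ≤ η * ‖v‖) (hA : A ≤ 1 / 2) (hηδ : η + δ ≤ 1 / 4)
    (hcone : ∀ y ∈ S, ∀ y' ∈ S, ‖(y - y') - p (y - y')‖ ≤ A * ‖y - y'‖)
    (hcov : ∀ q, p q = q → ‖q‖ ≤ ρ → ∃ y ∈ S, p (y - x) = q)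
    (hR : ∀ y ∈ S, ‖p (y - x)‖ ≤ ρ → ‖y - x‖ ≤ R)
    (hlip : ∀ y ∈ S, ∀ y' ∈ S, ‖h y - h y'‖ ≤ δ * ‖y - y'‖) (hb : ∀ y ∈ S, ‖h y‖ ≤ b)
    (hq' : p' q' = q') (hsmall : η * R + b + ‖x - x'‖ + ‖q'‖ ≤ ρ) :
    ∃ y ∈ S, ‖p (y - x)‖ ≤ ρ ∧ p' (y + h y - x') = q' := by
  choose! γ hγS hγ using hcov
  let D : Set X := {q | p q = q ∧ ‖q‖ ≤ ρ}
  have hDc : IsClosed D := (isClosed_eq p.continuous continuous_id).inter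
    (isClosed_le continuous_norm continuous_const)
  let F : X → X := fun q => q - p (p' (γ q + h (γ q) - x') - q')
  have hFp : ∀ q, p q = q → p (F q) = F q := fun q hq => by
    simp only [F, map_sub, hp.idem, hq]
  have hmaps : MapsTo F D D := by
    rintro q ⟨hq, hqρ⟩
    refine ⟨hFp q hq, ?_⟩
    have hg := hγ q hq hqρ
    have e : F q = p (p (γ q - x) - p' (γ q - x)) - p (p' (h (γ q))) - p (p' (x - x')) + p q' := by
      have : γ q + h (γ q) - x' = (γ q - x) + h (γ q) + (x - x') := by abel
      simp only [F]
      rw [this, map_add, map_add, hg, map_sub p, map_sub p, map_add p, map_add p, hq]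
      abel
    have h1 : ‖p (p (γ q - x) - p' (γ q - x))‖ ≤ η * R := by
      refine (hp.norm_le _).trans ((hpp _).trans ?_)
      have := hR _ (hγS q hq hqρ) (by rw [hg]; exact hqρ)
      gcongr
    have h2 : ‖p (p' (h (γ q)))‖ ≤ b :=
      (hp.norm_le _).trans ((hp'.norm_le _).trans (hb _ (hγS q hq hqρ)))
    have h3 : ‖p (p' (x - x'))‖ ≤ ‖x - x'‖ := (hp.norm_le _).trans (hp'.norm_le _)
    have h4 : ‖p q'‖ ≤ ‖q'‖ := hp.norm_le _
    rw [e]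
    refine (norm_add_le _ _).trans ?_
    have := norm_sub_le (p (p (γ q - x) - p' (γ q - x)) - p (p' (h (γ q)))) (p (p' (x - x')))
    have := norm_sub_le (p (p (γ q - x) - p' (γ q - x))) (p (p' (h (γ q))))
    linarith
  have hcontr : ContractingWith (1 / 2) (hmaps.restrict F D D) := by
    refine ⟨by rw [← NNReal.coe_lt_coe]; norm_num, LipschitzWith.of_dist_le_mul ?_⟩
    rintro ⟨q₁, hq₁, hqρ₁⟩ ⟨q₂, hq₂, hqρ₂⟩
    rw [Subtype.dist_eq, Subtype.dist_eq, dist_eq_norm, dist_eq_norm]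
    change ‖F q₁ - F q₂‖ ≤ _ * ‖q₁ - q₂‖
    set w := γ q₁ - γ q₂ with hw
    have hpw : p w = q₁ - q₂ := by
      rw [← hγ q₁ hq₁ hqρ₁, ← hγ q₂ hq₂ hqρ₂, ← map_sub, hw]
      congr 1; abel
    have e : F q₁ - F q₂ = p (p w - p' w) - p (p' (h (γ q₁) - h (γ q₂))) := by
      have hpq : p (q₁ - q₂) = q₁ - q₂ := by rw [map_sub, hq₁, hq₂]
      rw [map_sub p (p w), hp.idem, hpw, hw]
      simp only [F, map_sub, map_add]
      abel
    have hS₁ := hγS q₁ hq₁ hqρ₁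
    have hS₂ := hγS q₂ hq₂ hqρ₂
    have h1 : ‖p (p w - p' w)‖ ≤ η * ‖w‖ := (hp.norm_le _).trans (hpp w)
    have h2 : ‖p (p' (h (γ q₁) - h (γ q₂)))‖ ≤ δ * ‖w‖ :=
      (hp.norm_le _).trans ((hp'.norm_le _).trans (hlip _ hS₁ _ hS₂))
    have h3 : ‖w‖ ≤ 2 * ‖q₁ - q₂‖ := by
      rw [← hpw]; exact norm_le_two_mul_of_cone hA (hcone _ hS₁ _ hS₂)
    rw [e]
    refine (norm_sub_le _ _).trans ?_
    push_cast
    nlinarith [norm_nonneg w]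
  obtain ⟨q, ⟨hq, hqρ⟩, hfix, -⟩ := ContractingWith.exists_fixedPoint' hDc.isComplete hmaps hcontr
    (x := 0) ⟨map_zero p, by simpa using hρ0⟩ (edist_ne_top _ _)
  refine ⟨γ q, hγS q hq hqρ, by rw [hγ q hq hqρ]; exact hqρ, ?_⟩
  have hfix : p (p' (γ q + h (γ q) - x') - q') = 0 := sub_eq_self.1 hfix
  set u := p' (γ q + h (γ q) - x') - q' with hu
  have hu' : p' u = u := by rw [hu, map_sub, hp'.idem, hq']
  have h1 := hpp u
  rw [hfix, hu', zero_sub, norm_neg] at h1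
  have h2 : ‖u‖ = 0 := by nlinarith [norm_nonneg u]
  exact sub_eq_zero.1 (norm_eq_zero.1 h2)

theorem norm_sum_smul_le {ι X : Type*} [NormedAddCommGroup X] [NormedSpace ℝ X]
    (N : Finset ι) (a : ι → ℝ) (v : ι → X) {B : ℝ} (h : ∀ j ∈ N, a j ≠ 0 → ‖v j‖ ≤ B) :
    ‖∑ j ∈ N, a j • v j‖ ≤ (∑ j ∈ N, |a j|) * B := by
  rw [Finset.sum_mul]
  refine norm_sum_le_of_le _ fun j hj => ?_
  rw [norm_smul, Real.norm_eq_abs]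
  by_cases ha : a j = 0
  · simp [ha]
  · exact mul_le_mul_of_nonneg_left (h j hj ha) (abs_nonneg _)

/-- In the ball `B(x, 20 r)`, the set `S` lies in a thin slab around the range of `p` (translated to
`x`), satisfies a cone condition, and covers most of the corresponding disc. -/
structure NearPlane {X : Type*} [NormedAddCommGroup X] [NormedSpace ℝ X]
    (p : X →L[ℝ] X) (S : Set X) (x : X) (r A : ℝ) : Prop where
  cone : ∀ y ∈ S, ∀ y' ∈ S, dist y x < 20 * r → dist y' x < 20 * r →
    ‖(y - y') - p (y - y')‖ ≤ A * ‖y - y'‖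
  height : ∀ y ∈ S, dist y x < 20 * r → ‖(y - x) - p (y - x)‖ ≤ A * r
  cover : ∀ q, p q = q → ‖q‖ ≤ 19 * r → ∃ y ∈ S, dist y x < 20 * r ∧ p (y - x) = q

theorem norm_le_two_mul_perturbation {X : Type*} [NormedAddCommGroup X] {h : X → X} {δ : ℝ}
    (hδ : δ ≤ 1 / 2) (hlip : ∀ y y', ‖h y - h y'‖ ≤ δ * ‖y - y'‖) (y y' : X) :
    ‖y - y'‖ ≤ 2 * ‖(y + h y) - (y' + h y')‖ := by
  have h1 : y - y' = ((y + h y) - (y' + h y')) - (h y - h y') := by abel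
  have h2 := norm_sub_le ((y + h y) - (y' + h y')) (h y - h y')
  rw [← h1] at h2
  nlinarith [hlip y y', norm_nonneg (y - y')]

/-- One step of the construction: the averaged projection onto the planes at scale `r` moves `S` to
a set that is near the planes at scale `r / 10`, with the same constant. -/
theorem exists_step (X : Type*) [NormedAddCommGroup X] [NormedSpace ℝ X]
    [FiniteDimensional ℝ X] :
    ∃ a c : ℝ, 100 ≤ a ∧ 1 ≤ c ∧ ∀ (E : Set X) (P P' : X → X →L[ℝ] X) (r η : ℝ) (S : Set X),
      Bornology.IsBounded E → 0 < r → 0 ≤ η → c * (a * η) ≤ 1 / 100 →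
      (∀ x ∈ E, IsContractiveProj (P x)) → (∀ x ∈ E, IsContractiveProj (P' x)) →
      (∀ x ∈ E, ∀ y ∈ E, dist x y ≤ 50 * r → ∀ v, ‖P x v - P y v‖ ≤ η * ‖v‖) →
      (∀ x ∈ E, ∀ y ∈ E, dist x y ≤ 50 * r → ‖(y - x) - P x (y - x)‖ ≤ η * r) →
      (∀ x ∈ E, ∀ v, ‖P x v - P' x v‖ ≤ η * ‖v‖) →
      (∀ x ∈ E, NearPlane (P x) S x r (a * η)) →
      ∃ h : X → X, (∀ y y', ‖h y - h y'‖ ≤ c * (a * η) * ‖y - y'‖) ∧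
        (∀ y, ‖h y‖ ≤ c * (a * η) * r) ∧
        (∀ y ∈ S, (∀ x ∈ E, 12 * r ≤ dist y x) → h y = 0) ∧
        ∀ x ∈ E, NearPlane (P' x) ((fun y => y + h y) '' S) x (r / 10) (a * η) := by
  have : CompleteSpace X := FiniteDimensional.complete ℝ X
  obtain ⟨K, hK1, hK⟩ := exists_lipschitz_partition X
  obtain ⟨L, hL1, hL⟩ := exists_bounded_lipschitz_extension X
  refine ⟨210 + 38 * K, L * (2 + K), by linarith, by nlinarith, ?_⟩
  intro E P P' r η S hE hr hη hsmall hP hP' hPP hPx hPP' hS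
  set A := (210 + 38 * K) * η with hA
  have hA0 : 0 ≤ A := by positivity
  have hAc : A ≤ L * (2 + K) * A := by
    have : 1 ≤ L * (2 + K) := by nlinarith
    nlinarith
  have hA100 : A ≤ 1 / 100 := by linarith
  have hηA : 210 * η ≤ A := by nlinarith
  set δ := L * (2 + K) * A with hδ
  have hδ0 : 0 ≤ δ := by linarith
  obtain ⟨N, θ, hNE, hθ0, hθ1, hθE, hθs, hθK⟩ := hK E r hE hr
  have hθabs : ∀ y, ∑ j ∈ N, |θ j y| ≤ 1 := fun y => by
    simpa only [abs_of_nonneg (hθ0 _ y)] using hθ1 y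
  let h₀ : X → X := fun y => ∑ j ∈ N, θ j y • (P j (y - j) - (y - j))
  have hbd : ∀ y ∈ S, ‖h₀ y‖ ≤ A * r := by
    intro y hy
    refine (norm_sum_smul_le N (fun j => θ j y) _ (B := A * r) ?_).trans ?_
    · intro j hj hθ
      rw [norm_sub_rev]
      exact (hS j (hNE hj)).height y hy (by linarith [hθs j y hθ])
    · exact mul_le_of_le_one_left (by positivity) (hθabs y)
  have hlip : ∀ y ∈ S, ∀ y' ∈ S, ‖h₀ y - h₀ y'‖ ≤ (2 + K) * A * ‖y - y'‖ := by
    intro y hy y' hy'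
    rcases le_or_gt r (dist y y') with hfar | hnear
    · rw [dist_eq_norm] at hfar
      have h1 := norm_sub_le (h₀ y) (h₀ y')
      have h2 := hbd y hy
      have h3 := hbd y' hy'
      have h4 : A * r ≤ A * ‖y - y'‖ := by gcongr
      have h5 : 0 ≤ K * A * ‖y - y'‖ := by positivity
      linarith
    · have e : h₀ y - h₀ y' = ∑ j ∈ N, θ j y • (P j (y - y') - (y - y')) +
          ∑ j ∈ N, (θ j y - θ j y') • (P j (y' - j) - (y' - j)) := by
        simp only [h₀]
        rw [← Finset.sum_sub_distrib, ← Finset.sum_add_distrib]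
        refine Finset.sum_congr rfl fun j _ => ?_
        have : P j (y - j) - (y - j) = (P j (y - y') - (y - y')) + (P j (y' - j) - (y' - j)) := by
          simp only [map_sub]; abel
        rw [this]
        module
      have h1 : ‖∑ j ∈ N, θ j y • (P j (y - y') - (y - y'))‖ ≤ 1 * (A * ‖y - y'‖) := by
        refine (norm_sum_smul_le N (fun j => θ j y) _ (B := A * ‖y - y'‖) ?_).trans ?_
        · intro j hj hθ
          have := hθs j y hθ
          rw [norm_sub_rev]
          refine (hS j (hNE hj)).cone y hy y' hy' (by linarith) ?_
          linarith [dist_triangle_left y' j y]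
        · gcongr
          exact hθabs y
      have h2 : ‖∑ j ∈ N, (θ j y - θ j y') • (P j (y' - j) - (y' - j))‖ ≤
          K * (dist y y' / r) * (A * r) := by
        refine (norm_sum_smul_le N (fun j => θ j y - θ j y') _ (B := A * r) ?_).trans ?_
        · intro j hj hθ
          rw [norm_sub_rev]
          refine (hS j (hNE hj)).height y' hy' ?_
          by_cases hz : θ j y' = 0
          · have hy0 : θ j y ≠ 0 := fun h => hθ (by simp [h, hz])
            linarith [dist_triangle_left y' j y, hθs j y hy0]
          · linarith [hθs j y' hz]
        · gcongr
          exact hθK y y'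
      have h3 : K * (dist y y' / r) * (A * r) = K * A * ‖y - y'‖ := by
        rw [dist_eq_norm]; field_simp
      rw [e]
      refine (norm_add_le _ _).trans ?_
      have h5 : 0 ≤ A * ‖y - y'‖ := by positivity
      linarith
  obtain ⟨h, hhlip, hhbd, hhS⟩ := hL S h₀ r ((2 + K) * A) hr (by positivity) hlip (by
    intro y hy
    refine (hbd y hy).trans ?_
    gcongr
    nlinarith)
  have hcA : L * ((2 + K) * A) = δ := by rw [hδ]; ring
  rw [hcA] at hhlip hhbd
  have hδ1 : δ * r ≤ r / 100 := by nlinarith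
  have hηr : 210 * (η * r) ≤ r / 100 := by nlinarith
  refine ⟨h, hhlip, hhbd, ?_, fun x hx => ?_⟩
  · intro y hy hfar
    rw [hhS y hy]
    refine Finset.sum_eq_zero fun j hj => ?_
    have : θ j y = 0 := by
      by_contra hθ
      linarith [hθs j y hθ, hfar j (hNE hj)]
    rw [this, zero_smul]
  let Q : X →L[ℝ] X := ContinuousLinearMap.id ℝ X - P x
  have hQ : ∀ v, Q v = v - P x v := fun v => rfl
  have hQP : ∀ j ∈ N, dist x j ≤ 50 * r → ∀ v, ‖Q (P j v)‖ ≤ η * ‖v‖ := by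
    intro j hj hxj v
    have h1 := hPP x hx j (hNE hj) hxj (P j v)
    rw [(hP j (hNE hj)).idem, norm_sub_rev] at h1
    exact h1.trans (mul_le_mul_of_nonneg_left ((hP j (hNE hj)).norm_le v) hη)
  let β : X → X → X := fun j y => Q (j - x + P j (y - j))
  have hβ : ∀ j ∈ N, ∀ y, dist x j ≤ 15 * r → dist y j ≤ 18 * r → ‖β j y‖ ≤ 19 * (η * r) := by
    intro j hj y hxj hyj
    have h1 : β j y = Q (j - x) + Q (P j (y - j)) := map_add Q _ _
    have h2 : ‖Q (j - x)‖ ≤ η * r := hPx x hx j (hNE hj) (by linarith)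
    have h3 := hQP j hj (by linarith) (y - j)
    rw [dist_eq_norm] at hyj
    have h4 : η * ‖y - j‖ ≤ η * (18 * r) := by gcongr
    rw [h1]
    refine (norm_add_le _ _).trans ?_
    linarith
  have hσ : ∀ y ∈ S, dist y x < 3 * r → Q (y + h y - x) = ∑ j ∈ N, θ j y • β j y := by
    intro y hy hyx
    have hone := hθE y x hx (by linarith)
    have e : y + h y - x = ∑ j ∈ N, θ j y • (j - x + P j (y - j)) := by
      rw [hhS y hy]
      have : y - x = ∑ j ∈ N, θ j y • (y - x) := by rw [← Finset.sum_smul, hone, one_smul]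
      rw [add_sub_right_comm, this, ← Finset.sum_add_distrib]
      refine Finset.sum_congr rfl fun j _ => ?_
      module
    rw [e, map_sum]
    exact Finset.sum_congr rfl fun j _ => map_smul Q _ _
  have hheight : ∀ y ∈ S, dist y x < 3 * r → ‖Q (y + h y - x)‖ ≤ 19 * (η * r) := by
    intro y hy hyx
    rw [hσ y hy hyx]
    refine (norm_sum_smul_le N (fun j => θ j y) _ (B := 19 * (η * r)) ?_).trans ?_
    · intro j hj hθ
      have := hθs j y hθ
      exact hβ j hj y (by linarith [dist_triangle_left x j y]) (by linarith)
    · exact mul_le_of_le_one_left (by positivity) (hθabs y)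
  have hcone : ∀ y ∈ S, ∀ y' ∈ S, dist y x < 3 * r → dist y' x < 3 * r →
      ‖Q ((y + h y) - (y' + h y'))‖ ≤ (1 + 19 * K) * η * ‖y - y'‖ := by
    intro y hy y' hy' hyx hyx'
    have e : Q ((y + h y) - (y' + h y')) = ∑ j ∈ N, θ j y • Q (P j (y - y')) +
        ∑ j ∈ N, (θ j y - θ j y') • β j y' := by
      rw [show (y + h y) - (y' + h y') = (y + h y - x) - (y' + h y' - x) by abel, map_sub,
        hσ y hy hyx, hσ y' hy' hyx', ← Finset.sum_sub_distrib, ← Finset.sum_add_distrib]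
      refine Finset.sum_congr rfl fun j _ => ?_
      have : β j y = Q (P j (y - y')) + β j y' := by
        simp only [β, ← map_add Q]
        congr 1
        simp only [map_sub]; abel
      rw [this]
      module
    have h1 : ‖∑ j ∈ N, θ j y • Q (P j (y - y'))‖ ≤ 1 * (η * ‖y - y'‖) := by
      refine (norm_sum_smul_le N (fun j => θ j y) _ (B := η * ‖y - y'‖) ?_).trans ?_
      · intro j hj hθ
        have := hθs j y hθ
        exact hQP j hj (by linarith [dist_triangle_left x j y]) _
      · gcongr
        exact hθabs y
    have h2 : ‖∑ j ∈ N, (θ j y - θ j y') • β j y'‖ ≤ K * (dist y y' / r) * (19 * (η * r)) := by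
      refine (norm_sum_smul_le N (fun j => θ j y - θ j y') _ (B := 19 * (η * r)) ?_).trans ?_
      · intro j hj hθ
        have hxj : dist x j ≤ 15 * r := by
          by_cases hz : θ j y' = 0
          · have hy0 : θ j y ≠ 0 := fun h => hθ (by simp [h, hz])
            linarith [dist_triangle_left x j y, hθs j y hy0]
          · linarith [dist_triangle_left x j y', hθs j y' hz]
        exact hβ j hj y' hxj (by linarith [dist_triangle y' x j])
      · gcongr
        exact hθK y y'
    have h3 : K * (dist y y' / r) * (19 * (η * r)) = 19 * K * η * ‖y - y'‖ := by
      rw [dist_eq_norm]; field_simp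
    rw [e]
    refine (norm_add_le _ _).trans ?_
    linarith
  have hQ' : ∀ v, ‖v - P' x v‖ ≤ ‖Q v‖ + η * ‖v‖ := fun v => by
    have : v - P' x v = Q v + (P x v - P' x v) := by rw [hQ]; abel
    rw [this]
    exact (norm_add_le _ _).trans (by linarith [hPP' x hx v])
  have hback : ∀ y, dist (y + h y) x < 20 * (r / 10) → dist y x < 3 * r := by
    intro y hy
    have h1 : dist y (y + h y) ≤ r / 100 := by
      rw [dist_self_add_right]
      exact (hhbd y).trans hδ1
    linarith [dist_triangle y (y + h y) x]
  refine ⟨?_, ?_, ?_⟩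
  · rintro _ ⟨y, hy, rfl⟩ _ ⟨y', hy', rfl⟩ hyx hyx'
    simp only at hyx hyx' ⊢
    have h1 := hcone y hy y' hy' (hback y hyx) (hback y' hyx')
    have h2 := norm_le_two_mul_perturbation (by linarith) hhlip y y'
    have h3 := hQ' ((y + h y) - (y' + h y'))
    have h4 : (1 + 19 * K) * η * ‖y - y'‖ ≤
        (1 + 19 * K) * η * (2 * ‖(y + h y) - (y' + h y')‖) := by gcongr
    have h5 : 0 ≤ η * ‖(y + h y) - (y' + h y')‖ := by positivity
    rw [hA]
    linarith
  · rintro _ ⟨y, hy, rfl⟩ hyx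
    simp only at hyx ⊢
    have h1 := hheight y hy (hback y hyx)
    have h3 := hQ' (y + h y - x)
    rw [dist_eq_norm] at hyx
    have h4 : η * ‖y + h y - x‖ ≤ η * (20 * (r / 10)) := by gcongr
    have h5 : 210 * η * (r / 10) ≤ A * (r / 10) := by gcongr
    linarith
  · intro q' hq' hq'r
    obtain ⟨y, ⟨hyS, hyx⟩, hpy, hy⟩ := cover_of_perturbation (hP x hx) (hP' x hx) hη hδ0
      (ρ := 5 / 2 * r) (by positivity) (hPP' x hx) (A := A) (by linarith) (by linarith)
      (S := {y ∈ S | dist y x < 20 * r}) (x := x) (x' := x) (R := 13 / 5 * r) (b := r / 100)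
      (h := h) (fun y hy y' hy' => (hS x hx).cone y hy.1 y' hy'.1 hy.2 hy'.2)
      (fun q hq hqr => by
        obtain ⟨y, hy, hyx, hpy⟩ := (hS x hx).cover q hq (by linarith)
        exact ⟨y, ⟨hy, hyx⟩, hpy⟩)
      (fun y hy hpy => by
        have h1 := (hS x hx).height y hy.1 hy.2
        have h2 : ‖y - x‖ ≤ ‖(y - x) - P x (y - x)‖ + ‖P x (y - x)‖ := by
          simpa using norm_add_le ((y - x) - P x (y - x)) (P x (y - x))
        nlinarith)
      (fun y _ y' _ => hhlip y y') (fun y _ => (hhbd y).trans hδ1) hq' (by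
        rw [sub_self, norm_zero]
        linarith)
    have h1 := (hS x hx).height y hyS hyx
    have h2 : ‖y - x‖ ≤ ‖(y - x) - P x (y - x)‖ + ‖P x (y - x)‖ := by
      simpa using norm_add_le ((y - x) - P x (y - x)) (P x (y - x))
    have h3 : ‖y - x‖ ≤ 13 / 5 * r := by nlinarith
    have h4 : ‖y + h y - x‖ ≤ 3 * r := by
      have := norm_add_le (y - x) (h y)
      rw [sub_add_eq_add_sub] at this
      linarith [hhbd y]
    have h5 := hheight y hyS (by rw [dist_eq_norm]; linarith)
    have h6 := hQ' (y + h y - x)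
    have h7 : ‖y + h y - x‖ ≤ ‖(y + h y - x) - P' x (y + h y - x)‖ + ‖P' x (y + h y - x)‖ := by
      simpa using norm_add_le ((y + h y - x) - P' x (y + h y - x)) (P' x (y + h y - x))
    have h8 : η * ‖y + h y - x‖ ≤ η * (3 * r) := by gcongr
    refine ⟨y + h y, ⟨y, hyS, rfl⟩, ?_, hy⟩
    rw [hy] at h6 h7
    rw [dist_eq_norm]
    linarith

/-- In the ball `B(y, R)`, the set `S` satisfies a cone condition along the range of `p` and covers
the disc of radius `R / 2` of this range (translated to `y`). -/
structure FlatAlong {X : Type*} [NormedAddCommGroup X] [NormedSpace ℝ X]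
    (p : X →L[ℝ] X) (S : Set X) (y : X) (R B : ℝ) : Prop where
  cone : ∀ z ∈ S, ∀ z' ∈ S, dist z y < R → dist z' y < R →
    ‖(z - z') - p (z - z')‖ ≤ B * ‖z - z'‖
  cover : ∀ q, p q = q → ‖q‖ ≤ R / 2 → ∃ z ∈ S, dist z y < R ∧ p (z - y) = q

theorem NearPlane.flatAlong {X : Type*} [NormedAddCommGroup X] [NormedSpace ℝ X]
    {p : X →L[ℝ] X} (hp : IsContractiveProj p) {S : Set X} {x y : X} {r A : ℝ}
    (h : NearPlane p S x r A) (hr : 0 < r) (hA : A ≤ 1 / 100) (hy : y ∈ S)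
    (hyx : dist y x < 13 * r) : FlatAlong p S y (4 * r) A := by
  refine ⟨fun z hz z' hz' hzy hzy' => h.cone z hz z' hz' ?_ ?_, fun q hq hqr => ?_⟩
  · linarith [dist_triangle z y x]
  · linarith [dist_triangle z' y x]
  · obtain ⟨z, hz, hzx, hpz⟩ := h.cover (q + p (y - x)) (by rw [map_add, hq, hp.idem]) (by
      refine (norm_add_le _ _).trans ?_
      have := hp.norm_le (y - x)
      rw [← dist_eq_norm] at this
      linarith)
    have hpzy : p (z - y) = q := by
      rw [show z - y = (z - x) - (y - x) by abel, map_sub, hpz, add_sub_cancel_right]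
    have h1 := norm_le_of_cone (h.cone z hz y hy hzx (by linarith))
    rw [hpzy] at h1
    refine ⟨z, hz, ?_, hpzy⟩
    rw [dist_eq_norm]
    nlinarith [norm_nonneg (z - y)]

theorem FlatAlong.image_perturbation {X : Type*} [NormedAddCommGroup X] [NormedSpace ℝ X]
    [CompleteSpace X] {p : X →L[ℝ] X} (hp : IsContractiveProj p) {S : Set X} {y : X} {r A δ : ℝ}
    {h : X → X} (hS : FlatAlong p S y (4 * r) A) (hr : 0 < r) (hA0 : 0 ≤ A) (hA : A ≤ 1 / 100)
    (hδ0 : 0 ≤ δ) (hδ : δ ≤ 1 / 100) (hlip : ∀ z z', ‖h z - h z'‖ ≤ δ * ‖z - z'‖)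
    (hb : ∀ z, ‖h z‖ ≤ δ * r) (hy : y ∈ S) :
    FlatAlong p ((fun z => z + h z) '' S) (y + h y) (4 * (r / 10)) (2 * (A + δ)) := by
  have hb' : ∀ z, ‖h z‖ ≤ r / 100 := fun z => (hb z).trans (by nlinarith)
  have hback : ∀ z, dist (z + h z) (y + h y) < 4 * (r / 10) → dist z y < 4 * r := by
    intro z hz
    have h1 := norm_le_two_mul_perturbation (by linarith) hlip z y
    rw [dist_eq_norm] at hz ⊢
    linarith
  have hcone : ∀ z ∈ S, ∀ z' ∈ S, dist z y < 4 * r → dist z' y < 4 * r →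
      ‖((z + h z) - (z' + h z')) - p ((z + h z) - (z' + h z'))‖ ≤
        2 * (A + δ) * ‖(z + h z) - (z' + h z')‖ := by
    intro z hz z' hz' hzy hzy'
    have h1 := hS.cone z hz z' hz' hzy hzy'
    have h2 := norm_le_two_mul_perturbation (by linarith) hlip z z'
    have h3 := (hp.norm_sub_le (h z - h z')).trans (hlip z z')
    have e : ((z + h z) - (z' + h z')) - p ((z + h z) - (z' + h z')) =
        ((z - z') - p (z - z')) + ((h z - h z') - p (h z - h z')) := by
      simp only [map_sub, map_add]; abel
    rw [e]
    refine (norm_add_le _ _).trans ?_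
    have h4 : (A + δ) * ‖z - z'‖ ≤ (A + δ) * (2 * ‖(z + h z) - (z' + h z')‖) := by gcongr
    linarith
  refine ⟨?_, fun q hq hqr => ?_⟩
  · rintro _ ⟨z, hz, rfl⟩ _ ⟨z', hz', rfl⟩ hzy hzy'
    exact hcone z hz z' hz' (hback z hzy) (hback z' hzy')
  · obtain ⟨z, ⟨hzS, hzy⟩, hpz, hz⟩ := cover_of_perturbation hp hp le_rfl hδ0 (ρ := 2 * r)
      (by positivity) (by simp) (A := A) (by linarith) (by linarith)
      (S := {z ∈ S | dist z y < 4 * r}) (x := y) (x' := y + h y) (R := 4 * r) (b := r / 100)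
      (h := h) (fun z hz z' hz' => hS.cone z hz.1 z' hz'.1 hz.2 hz'.2)
      (fun q hq hqr => by
        obtain ⟨z, hz, hzy, hpz⟩ := hS.cover q hq (by linarith)
        exact ⟨z, ⟨hz, hzy⟩, hpz⟩)
      (fun z hz _ => by rw [← dist_eq_norm]; exact hz.2.le)
      (fun z _ z' _ => hlip z z') (fun z _ => hb' z) hq (by
        rw [sub_add_cancel_left, norm_neg]
        linarith [hb' y])
    refine ⟨z + h z, ⟨z, hzS, rfl⟩, ?_, hz⟩
    have h1 := norm_le_of_cone (hcone z hzS y hy hzy (by rw [dist_self]; positivity))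
    rw [hz] at h1
    rw [dist_eq_norm]
    nlinarith [norm_nonneg (z + h z - (y + h y))]

theorem FlatAlong.image_of_eq_zero {X : Type*} [NormedAddCommGroup X] [NormedSpace ℝ X]
    {p : X →L[ℝ] X} {S : Set X} {y : X} {r B : ℝ} {h : X → X}
    (hS : FlatAlong p S y (4 * r) B) (hr : 0 < r) (hB : B ≤ 1 / 10) (hy : y ∈ S)
    (hb : ∀ z, ‖h z‖ ≤ r / 100) (hz : ∀ z ∈ S, dist z y < r → h z = 0) :
    FlatAlong p ((fun z => z + h z) '' S) y (4 * (r / 10)) B := by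
  have hback : ∀ z ∈ S, dist (z + h z) y < 4 * (r / 10) → z + h z = z := by
    intro z hzS hzy
    have h1 : dist z (z + h z) ≤ r / 100 := by rw [dist_self_add_right]; exact hb z
    rw [hz z hzS (by linarith [dist_triangle z (z + h z) y]), add_zero]
  refine ⟨?_, fun q hq hqr => ?_⟩
  · rintro _ ⟨z, hzS, rfl⟩ _ ⟨z', hzS', rfl⟩ hzy hzy'
    simp only at hzy hzy' ⊢
    have e := hback z hzS hzy
    have e' := hback z' hzS' hzy'
    rw [e] at hzy ⊢
    rw [e'] at hzy' ⊢
    exact hS.cone z hzS z' hzS' (by linarith) (by linarith)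
  · obtain ⟨z, hzS, hzy, hpz⟩ := hS.cover q hq (by linarith)
    have h1 := norm_le_of_cone (hS.cone z hzS y hy hzy (by rw [dist_self]; positivity))
    rw [hpz] at h1
    have h2 : dist z y < 4 * (r / 10) := by
      rw [dist_eq_norm]
      nlinarith [norm_nonneg (z - y)]
    exact ⟨z, ⟨z, hzS, by simp [hz z hzS (by linarith)]⟩, h2, hpz⟩

theorem norm_sub_le_of_perturbation_steps {X : Type*} [NormedAddCommGroup X] {f h : ℕ → X → X}
    {δ : ℝ} (hf : ∀ k x, f (k + 1) x = f k x + h k (f k x)) (hδ0 : 0 ≤ δ) (hδ1 : δ ≤ 1)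
    (hf0 : ∀ x, f 0 x = x) (hlip : ∀ k y y', ‖h k y - h k y'‖ ≤ δ * ‖y - y'‖) (k : ℕ) (x y : X) :
    (1 - δ) ^ k * ‖x - y‖ ≤ ‖f k x - f k y‖ ∧ ‖f k x - f k y‖ ≤ (1 + δ) ^ k * ‖x - y‖ := by
  induction k with
  | zero => simp [hf0]
  | succ k ih =>
    have e : f (k + 1) x - f (k + 1) y = (f k x - f k y) + (h k (f k x) - h k (f k y)) := by
      rw [hf, hf]; abel
    have h1 := hlip k (f k x) (f k y)
    have h2 := norm_add_le (f k x - f k y) (h k (f k x) - h k (f k y))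
    have h3 := norm_sub_norm_le (f k x - f k y) (-(h k (f k x) - h k (f k y)))
    rw [sub_neg_eq_add, norm_neg] at h3
    rw [e, pow_succ', pow_succ']
    constructor
    · have := mul_le_mul_of_nonneg_left ih.1 (sub_nonneg.2 hδ1)
      linarith
    · have := mul_le_mul_of_nonneg_left ih.2 (add_nonneg zero_le_one hδ0)
      linarith

theorem exists_limit_of_perturbation_steps {X : Type*} [NormedAddCommGroup X] [CompleteSpace X]
    {f h : ℕ → X → X} {δ : ℝ} (hf : ∀ k x, f (k + 1) x = f k x + h k (f k x)) (hδ0 : 0 ≤ δ)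
    (hb : ∀ k y, ‖h k y‖ ≤ δ * (1 / 10) ^ k) :
    ∃ g : X → X, ∀ k x, ‖g x - f k x‖ ≤ 2 * δ * (1 / 10) ^ k := by
  have hd : ∀ x k, dist (f k x) (f (k + 1) x) ≤ δ * (1 / 10) ^ k := fun x k => by
    rw [hf, dist_self_add_right]; exact hb k _
  have hc : ∀ x, ∃ a, Filter.Tendsto (fun k => f k x) Filter.atTop (nhds a) := fun x =>
    cauchySeq_tendsto_of_complete (cauchySeq_of_le_geometric (1 / 10) δ (by norm_num) (hd x))
  choose g hg using hc
  refine ⟨g, fun k x => ?_⟩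
  have h1 := dist_le_of_le_geometric_of_tendsto (1 / 10) δ (by norm_num) (hd x) (hg x) k
  rw [dist_comm, dist_eq_norm] at h1
  refine h1.trans ?_
  have : 0 ≤ δ * (1 / 10) ^ k := by positivity
  rw [div_le_iff₀ (by norm_num)]
  linarith

/-- A limit of compositions of perturbations of the identity at geometric scales is bi-Hölder. -/
theorem biHolder_of_perturbation_steps {X : Type*} [NormedAddCommGroup X] {f h : ℕ → X → X}
    {g : X → X} {δ τ : ℝ} (hf0 : ∀ x, f 0 x = x) (hf : ∀ k x, f (k + 1) x = f k x + h k (f k x))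
    (hδ0 : 0 ≤ δ) (hδ1 : δ ≤ 1 / 10) (hτ0 : 0 < τ) (hτ1 : τ < 1)
    (hδτ : 1 + δ ≤ 9 ^ τ) (hδτ' : 9 ^ (-τ) ≤ 1 - δ)
    (hlip : ∀ k y y', ‖h k y - h k y'‖ ≤ δ * ‖y - y'‖)
    (hg : ∀ k x, ‖g x - f k x‖ ≤ 2 * δ * (1 / 10) ^ k) (x y : X) (hxy : dist x y ≤ 1) :
    (1 / 4 : ℝ) * dist x y ^ (1 + τ) ≤ dist (g x) (g y) ∧
      dist (g x) (g y) ≤ 3 * dist x y ^ (1 - τ) := by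
  rcases eq_or_ne x y with rfl | hne
  · rw [dist_self, dist_self, Real.zero_rpow (by linarith), Real.zero_rpow (by linarith)]
    simp
  set D := dist x y with hD
  have hD0 : 0 < D := dist_pos.2 hne
  have hbi := fun k => norm_sub_le_of_perturbation_steps hf hδ0 (by linarith) hf0 hlip k x y
  simp only [← dist_eq_norm, ← hD] at hbi
  have hgf : ∀ k, |dist (g x) (g y) - dist (f k x) (f k y)| ≤ 4 * δ * (1 / 10) ^ k := by
    intro k
    have h1 := hg k x
    have h2 := hg k y
    rw [← dist_eq_norm] at h1 h2
    have h3 := abs_le.1 (abs_dist_sub_le (g x) (f k x) (g y))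
    have h4 := abs_le.1 (abs_dist_sub_le (g y) (f k y) (f k x))
    rw [dist_comm (g y) (f k x), dist_comm (f k y) (f k x)] at h4
    exact abs_le.2 ⟨by linarith [h3.1, h4.1], by linarith [h3.2, h4.2]⟩
  have hex : ∃ k : ℕ, (1 / 10 : ℝ) ^ k ≤ dist (f k x) (f k y) := by
    obtain ⟨k, hk⟩ := pow_unbounded_of_one_lt D⁻¹ (by norm_num : (1 : ℝ) < 9)
    refine ⟨k, le_trans ?_ (hbi k).1⟩
    have h1 : (9 / 10 : ℝ) ^ k ≤ (1 - δ) ^ k := by gcongr; linarith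
    have h2 : 1 ≤ 9 ^ k * D := by
      rw [inv_lt_iff_one_lt_mul₀ hD0] at hk
      linarith
    calc (1 / 10 : ℝ) ^ k ≤ (1 / 10) ^ k * (9 ^ k * D) := le_mul_of_one_le_right (by positivity) h2
      _ = (9 / 10) ^ k * D := by rw [← mul_assoc, ← mul_pow]; norm_num
      _ ≤ _ := by gcongr
  classical
  obtain ⟨k, hk, hmin⟩ : ∃ k : ℕ, (1 / 10 : ℝ) ^ k ≤ dist (f k x) (f k y) ∧
      ∀ m < k, dist (f m x) (f m y) < (1 / 10) ^ m :=
    ⟨Nat.find hex, Nat.find_spec hex, fun m hm => not_le.1 (Nat.find_min hex hm)⟩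
  obtain ⟨m, hkm, hDm⟩ : ∃ m : ℕ, k ≤ m + 1 ∧ D ≤ (9⁻¹) ^ m := by
    rcases k with _ | m
    · exact ⟨0, by omega, by simpa using hxy⟩
    · refine ⟨m, le_rfl, ?_⟩
      have h1 := hmin m (Nat.lt_succ_self m)
      have h2 : (9 / 10 : ℝ) ^ m ≤ (1 - δ) ^ m := by gcongr; linarith
      have h3 : (9 / 10 : ℝ) ^ m * D ≤ (1 / 10) ^ m :=
        (mul_le_mul_of_nonneg_right h2 hD0.le).trans ((hbi m).1.trans h1.le)
      have h4 : (1 / 10 : ℝ) ^ m = (9 / 10) ^ m * (9⁻¹) ^ m := by rw [← mul_pow]; norm_num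
      rw [h4] at h3
      exact le_of_mul_le_mul_left h3 (by positivity)
  have hDτ : D ^ τ ≤ (1 - δ) ^ m := by
    calc D ^ τ ≤ ((9⁻¹ : ℝ) ^ m) ^ τ := by gcongr
      _ = ((9 : ℝ) ^ (-τ)) ^ m := by
          rw [← Real.rpow_natCast, ← Real.rpow_natCast, ← Real.rpow_mul (by norm_num),
            Real.inv_rpow (by norm_num), ← Real.rpow_neg (by norm_num),
            ← Real.rpow_mul (by norm_num)]
          ring_nf
      _ ≤ _ := by gcongr
  have hDτ' : (1 + δ) ^ m ≤ D ^ (-τ) := by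
    calc (1 + δ) ^ m ≤ ((9 : ℝ) ^ τ) ^ m := by gcongr
      _ = ((9⁻¹ : ℝ) ^ m) ^ (-τ) := by
          rw [← Real.rpow_natCast, ← Real.rpow_natCast, ← Real.rpow_mul (by norm_num),
            Real.inv_rpow (by norm_num), ← Real.rpow_neg (by norm_num),
            ← Real.rpow_mul (by norm_num)]
          ring_nf
      _ ≤ _ := Real.rpow_le_rpow_of_nonpos hD0 hDm (by linarith)
  have hgk := abs_le.1 (hgf k)
  have hδk : 4 * δ * (1 / 10) ^ k ≤ 2 / 5 * dist (f k x) (f k y) := by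
    have : 4 * δ * (1 / 10 : ℝ) ^ k ≤ 2 / 5 * (1 / 10) ^ k := by gcongr; linarith
    linarith
  have hpow : (1 - δ) ^ m * (9 / 10) ≤ (1 - δ) ^ k := by
    calc (1 - δ) ^ m * (9 / 10) ≤ (1 - δ) ^ m * (1 - δ) := by
          have : 0 ≤ (1 - δ) ^ m := pow_nonneg (by linarith) m
          gcongr; linarith
      _ = (1 - δ) ^ (m + 1) := (pow_succ _ _).symm
      _ ≤ _ := pow_le_pow_of_le_one (by linarith) (by linarith) hkm
  have hpow' : (1 + δ) ^ k ≤ (1 + δ) ^ m * (11 / 10) := by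
    calc (1 + δ) ^ k ≤ (1 + δ) ^ (m + 1) := pow_le_pow_right₀ (by linarith) hkm
      _ = (1 + δ) ^ m * (1 + δ) := pow_succ _ _
      _ ≤ _ := by gcongr; linarith
  have e1 : D ^ (1 + τ) = D ^ τ * D := by rw [Real.rpow_add hD0, Real.rpow_one, mul_comm]
  have e2 : D ^ (1 - τ) = D ^ (-τ) * D := by
    rw [sub_eq_add_neg, Real.rpow_add hD0, Real.rpow_one, mul_comm]
  have hlow : D ^ τ * (9 / 10) * D ≤ dist (f k x) (f k y) :=
    le_trans (by gcongr; linarith) (hbi k).1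
  have hupp : dist (f k x) (f k y) ≤ D ^ (-τ) * (11 / 10) * D :=
    (hbi k).2.trans (by gcongr; linarith)
  have hp1 : 0 ≤ D ^ τ * D := by positivity
  have hp2 : 0 ≤ D ^ (-τ) * D := by positivity
  rw [e1, e2]
  constructor
  · linarith [hgk.1]
  · linarith [hgk.2]

theorem continuous_of_perturbation_steps {X : Type*} [NormedAddCommGroup X] {f h : ℕ → X → X}
    {g : X → X} {δ : ℝ} (hf0 : ∀ x, f 0 x = x) (hf : ∀ k x, f (k + 1) x = f k x + h k (f k x))
    (hδ0 : 0 ≤ δ) (hlip : ∀ k y y', ‖h k y - h k y'‖ ≤ δ * ‖y - y'‖)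
    (hg : ∀ k x, ‖g x - f k x‖ ≤ 2 * δ * (1 / 10) ^ k) : Continuous g := by
  have hh : ∀ k, Continuous (h k) := fun k =>
    (LipschitzWith.of_dist_le_mul (K := NNReal.mk δ hδ0)
      fun y y' => by rw [dist_eq_norm, dist_eq_norm]; exact hlip k y y').continuous
  have hfc : ∀ k, Continuous (f k) := by
    intro k
    induction k with
    | zero => rw [show f 0 = id from funext hf0]; exact continuous_id
    | succ k ih =>
      rw [funext (hf k)]
      exact ih.add ((hh k).comp ih)
  have hlim : TendstoUniformly f g Filter.atTop := by
    rw [Metric.tendstoUniformly_iff]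
    intro ε hε
    have h0 : Filter.Tendsto (fun k : ℕ => 2 * δ * (1 / 10 : ℝ) ^ k) Filter.atTop (nhds 0) := by
      simpa using (tendsto_pow_atTop_nhds_zero_of_lt_one (by norm_num : (0 : ℝ) ≤ 1 / 10)
        (by norm_num)).const_mul (2 * δ)
    filter_upwards [h0.eventually (gt_mem_nhds hε)] with k hk x
    rw [dist_eq_norm]
    exact (hg k x).trans_lt hk
  exact hlim.continuous (Filter.Frequently.of_forall hfc)

theorem isClosedMap_of_norm_sub_le {X : Type*} [NormedAddCommGroup X] [ProperSpace X] {g : X → X}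
    (hg : Continuous g) {C : ℝ} (hC : ∀ x, ‖g x - x‖ ≤ C) : IsClosedMap g := by
  refine IsProperMap.isClosedMap (isProperMap_iff_tendsto_cocompact.2 ⟨hg, ?_⟩)
  rw [← Metric.cobounded_eq_cocompact, ← tendsto_norm_atTop_iff_cobounded]
  refine Filter.tendsto_atTop_mono (f := fun x => ‖x‖ - C) (fun x => ?_) ?_
  · have h1 := norm_sub_norm_le x (-(g x - x))
    rw [norm_neg, sub_neg_eq_add, add_sub_cancel] at h1
    linarith [hC x]
  · exact Filter.tendsto_atTop_add_const_right _ (-C) tendsto_norm_cobounded_atTop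

theorem surjective_add_of_lipschitz {X : Type*} [NormedAddCommGroup X] [CompleteSpace X]
    {h : X → X} {δ : ℝ} (hδ0 : 0 ≤ δ) (hδ1 : δ < 1) (hlip : ∀ y y', ‖h y - h y'‖ ≤ δ * ‖y - y'‖) :
    Function.Surjective fun y => y + h y := by
  intro z
  have hc : ContractingWith (NNReal.mk δ hδ0) fun y => z - h y := by
    refine ⟨by exact_mod_cast hδ1, LipschitzWith.of_dist_le_mul fun y y' => ?_⟩
    rw [dist_sub_left]
    rw [dist_eq_norm, dist_eq_norm]
    exact hlip y y'
  obtain ⟨y, hy⟩ : ∃ y, z - h y = y := ⟨_, hc.fixedPoint_isFixedPt⟩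
  exact ⟨y, (sub_eq_iff_eq_add.1 hy).symm⟩

theorem isContractiveProj_starProjection {X : Type*} [NormedAddCommGroup X] [InnerProductSpace ℝ X]
    (W : Submodule ℝ X) [W.HasOrthogonalProjection] : IsContractiveProj W.starProjection where
  idem v := Submodule.starProjection_eq_self_iff.2 (Submodule.starProjection_apply_mem W v)
  norm_le v := W.norm_starProjection_apply_le v
  norm_sub_le v := by
    rw [← Submodule.starProjection_orthogonal_val]
    exact Wᗮ.norm_starProjection_apply_le v

theorem NearPlane.of_fixed {X : Type*} [NormedAddCommGroup X] [NormedSpace ℝ X]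
    [CompleteSpace X] {p₀ p : X →L[ℝ] X} (hp₀ : IsContractiveProj p₀) (hp : IsContractiveProj p)
    {η A : ℝ} {x : X} (hη : 0 ≤ η) (hηA : 100 * η ≤ A) (hA : A ≤ 1 / 100) (hx : ‖x‖ ≤ 1)
    (hpx : ‖x - p x‖ ≤ η) (hpp : ∀ v, ‖p₀ v - p v‖ ≤ 2 * η * ‖v‖) :
    NearPlane p {y | p₀ y = y} x 1 A := by
  have hfix : ∀ y, p₀ y = y → ‖y - p y‖ ≤ 2 * η * ‖y‖ := fun y hy => by
    simpa only [hy] using hpp y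
  have hheight : ∀ y, p₀ y = y → ‖(y - x) - p (y - x)‖ ≤ 2 * η * ‖y‖ + η := fun y hy => by
    rw [map_sub, show y - x - (p y - p x) = (y - p y) - (x - p x) by abel]
    exact (norm_sub_le _ _).trans (add_le_add (hfix y hy) hpx)
  refine ⟨fun y hy y' hy' _ _ => ?_, fun y hy hyx => ?_, fun q hq hqr => ?_⟩
  · refine (hfix _ (by rw [map_sub, hy, hy'])).trans ?_
    gcongr
    linarith
  · have h1 := hheight y hy
    have h2 : ‖y‖ ≤ ‖y - x‖ + ‖x‖ := by simpa using norm_add_le (y - x) x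
    rw [dist_eq_norm] at hyx
    nlinarith
  · obtain ⟨y, hy, hyρ, hpy⟩ := cover_of_perturbation hp₀ hp (η := 2 * η) (A := 0) (δ := 0) (b := 0)
      (ρ := 40) (R := 40) (S := {y | p₀ y = y}) (x := 0) (x' := x) (h := fun _ => 0)
      (by linarith) le_rfl (by norm_num) hpp (by norm_num) (by linarith)
      (fun y hy y' hy' => by rw [map_sub, hy, hy']; simp)
      (fun q hq _ => ⟨q, hq, by simpa using hq⟩)
      (fun y hy h => by
        rw [sub_zero] at h ⊢
        rwa [hy] at h)
      (fun _ _ _ _ => by simp) (fun _ _ => by simp) hq (by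
        rw [zero_sub, norm_neg]
        linarith)
    rw [add_zero] at hpy
    rw [sub_zero, hy] at hyρ
    refine ⟨y, hy, ?_, hpy⟩
    have h1 := hheight y hy
    have h2 : ‖y - x‖ ≤ ‖(y - x) - p (y - x)‖ + ‖p (y - x)‖ := by
      simpa using norm_add_le ((y - x) - p (y - x)) (p (y - x))
    rw [hpy] at h1 h2
    rw [dist_eq_norm]
    nlinarith

/-- The iterative construction: successive small perturbations of the identity push the plane `W₀`
towards `E`, its image staying flat at the current scale. -/
theorem exists_perturbation_steps (X : Type*) [NormedAddCommGroup X] [InnerProductSpace ℝ X]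
    [FiniteDimensional ℝ X] :
    ∃ K : ℝ, 1 ≤ K ∧ ∀ (d : ℕ) (η : ℝ) (E : Set X) (W : X → ℕ → Submodule ℝ X)
      (W₀ : Submodule ℝ X), 0 ≤ η → K * η ≤ 1 / 100 → E ⊆ ball 0 1 → (0 : X) ∈ E →
      Module.finrank ℝ W₀ = d → (∀ x ∈ E, ∀ k, Module.finrank ℝ (W x k) = d) →
      (∀ k, ∀ x ∈ E, ∀ y ∈ E, dist x y ≤ 50 * (1 / 10) ^ k →
        ∀ v, ‖(W x k).starProjection v - (W y k).starProjection v‖ ≤ η * ‖v‖) →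
      (∀ k, ∀ x ∈ E, ∀ y ∈ E, dist x y ≤ 50 * (1 / 10) ^ k →
        ‖(y - x) - (W x k).starProjection (y - x)‖ ≤ η * (1 / 10) ^ k) →
      (∀ x ∈ E, ∀ k v,
        ‖(W x k).starProjection v - (W x (k + 1)).starProjection v‖ ≤ η * ‖v‖) →
      (∀ v, ‖W₀.starProjection v - (W 0 0).starProjection v‖ ≤ η * ‖v‖) →
      ∃ f h : ℕ → X → X, (∀ x, f 0 x = x) ∧ (∀ k x, f (k + 1) x = f k x + h k (f k x)) ∧
        (∀ k y y', ‖h k y - h k y'‖ ≤ K * η * ‖y - y'‖) ∧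
        (∀ k y, ‖h k y‖ ≤ K * η * (1 / 10) ^ k) ∧
        (∀ k, ∀ x ∈ E, ∃ y ∈ f k '' W₀, ‖y - x‖ ≤ K * η * (1 / 10) ^ k) ∧
        ∀ k, ∀ y ∈ f k '' W₀, ∃ U : Submodule ℝ X, Module.finrank ℝ U = d ∧
          FlatAlong U.starProjection (f k '' W₀) y (4 * (1 / 10) ^ k) (K * η) := by
  have : CompleteSpace X := FiniteDimensional.complete ℝ X
  obtain ⟨a, c, ha, hc, hstep⟩ := exists_step X
  have hac : a ≤ c * a := by nlinarith
  refine ⟨4 * (c * a), by linarith, ?_⟩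
  intro d η E W W₀ hη hsmall hE h0E hW₀ hW hWW hWx hWk hW00
  have hproj : ∀ U : Submodule ℝ X, IsContractiveProj U.starProjection :=
    fun U => isContractiveProj_starProjection U
  set A := a * η with hA
  set δ := c * A with hδ
  have hA0 : 0 ≤ A := by positivity
  have hAδ : A ≤ δ := by nlinarith
  have hK : 4 * (c * a) * η = 4 * δ := by rw [hδ, hA]; ring
  rw [hK] at hsmall ⊢
  have hη100 : 100 * η ≤ A := by nlinarith
  let Inv : ℕ → Set X → Prop := fun k S =>
    (∀ x ∈ E, NearPlane (W x k).starProjection S x ((1 / 10) ^ k) A) ∧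
      ∀ y ∈ S, ∃ U : Submodule ℝ X, Module.finrank ℝ U = d ∧
        FlatAlong U.starProjection S y (4 * (1 / 10) ^ k) (4 * δ)
  have hnext : ∀ (k : ℕ) (S : Set X), ∃ h : X → X, Inv k S →
      (∀ y y', ‖h y - h y'‖ ≤ δ * ‖y - y'‖) ∧ (∀ y, ‖h y‖ ≤ δ * (1 / 10) ^ k) ∧
        Inv (k + 1) ((fun y => y + h y) '' S) := by
    intro k S
    by_cases hS : Inv k S
    swap
    · exact ⟨0, fun h => absurd h hS⟩
    have hr : (0 : ℝ) < (1 / 10) ^ k := by positivity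
    obtain ⟨h, hlip, hb, hzero, hnear⟩ := hstep E (fun x => (W x k).starProjection)
      (fun x => (W x (k + 1)).starProjection) ((1 / 10) ^ k) η S
      (Metric.isBounded_ball.subset hE) hr hη (by linarith) (fun x _ => hproj _)
      (fun x _ => hproj _) (hWW k) (hWx k) (fun x hx => hWk x hx k) hS.1
    have hpow : (1 / 10 : ℝ) ^ (k + 1) = (1 / 10) ^ k / 10 := by rw [pow_succ]; ring
    refine ⟨h, fun _ => ⟨hlip, hb, ?_, ?_⟩⟩
    · rw [hpow]; exact hnear
    · rintro _ ⟨y, hy, rfl⟩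
      rw [hpow]
      by_cases hclose : ∃ x ∈ E, dist y x < 13 * (1 / 10) ^ k
      · obtain ⟨x, hx, hyx⟩ := hclose
        refine ⟨W x k, hW x hx k, ?_⟩
        have h1 := ((hS.1 x hx).flatAlong (hproj _) hr (by linarith) hy hyx).image_perturbation
          (hproj _) hr hA0 (by linarith) (by linarith) (by linarith) hlip hb hy
        exact ⟨fun z hz z' hz' hzy hzy' => (h1.cone z hz z' hz' hzy hzy').trans
          (mul_le_mul_of_nonneg_right (by linarith) (norm_nonneg _)), h1.cover⟩
      · push Not at hclose
        obtain ⟨U, hU, hflat⟩ := hS.2 y hy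
        refine ⟨U, hU, ?_⟩
        have hyz : h y = 0 := hzero y hy fun x hx => by linarith [hclose x hx]
        simp only [hyz, add_zero]
        refine hflat.image_of_eq_zero hr (by linarith) hy (fun z => (hb z).trans (by nlinarith))
          fun z hz hzy => hzero z hz fun x hx => ?_
        have := dist_triangle y z x
        rw [dist_comm y z] at this
        linarith [hclose x hx]
  choose H hH using hnext
  let f : ℕ → X → X := fun k =>
    Nat.rec id (fun k fk x => fk x + H k (fk '' W₀) (fk x)) k
  have hf : ∀ k x, f (k + 1) x = f k x + H k (f k '' W₀) (f k x) := fun k x => rfl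
  have hInv : ∀ k, Inv k (f k '' W₀) := by
    intro k
    induction k with
    | zero =>
      have e : f 0 '' (W₀ : Set X) = {y | W₀.starProjection y = y} := by
        change id '' (W₀ : Set X) = _
        rw [image_id]
        ext y
        exact Submodule.starProjection_eq_self_iff.symm
      rw [e]
      refine ⟨fun x hx => ?_, fun y hy => ⟨W₀, hW₀, ?_⟩⟩
      · have hx1 : ‖x‖ ≤ 1 := (mem_ball_zero_iff.1 (hE hx)).le
        rw [pow_zero]
        refine NearPlane.of_fixed (hproj _) (hproj _) hη hη100 (by linarith) hx1 ?_ fun v => ?_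
        · have h1 := hWx 0 x hx 0 h0E (by rw [dist_zero_right, pow_zero]; linarith)
          rw [zero_sub, map_neg, sub_neg_eq_add, ← norm_neg, neg_add, neg_neg, pow_zero,
            mul_one, ← sub_eq_add_neg] at h1
          exact h1
        · have h1 := hW00 v
          have h2 := hWW 0 0 h0E x hx (by rw [dist_zero_left, pow_zero]; linarith) v
          have h3 := norm_sub_le_norm_sub_add_norm_sub (W₀.starProjection v)
            ((W 0 0).starProjection v) ((W x 0).starProjection v)
          linarith
      · refine ⟨fun z hz z' hz' _ _ => ?_, fun q hq hqr => ⟨y + q, ?_, ?_, ?_⟩⟩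
        · rw [map_sub, hz, hz', sub_self, norm_zero]
          have := hA0.trans hAδ
          positivity
        · change W₀.starProjection (y + q) = y + q
          rw [map_add, hy, hq]
        · rw [dist_self_add_left]
          rw [pow_zero] at hqr ⊢
          linarith
        · rw [add_sub_cancel_left, hq]
    | succ k ih =>
      have e : f (k + 1) '' (W₀ : Set X) =
          (fun y => y + H k (f k '' W₀) y) '' (f k '' (W₀ : Set X)) := by
        rw [image_image]
      rw [e]
      exact (hH k _ ih).2.2
  refine ⟨f, fun k => H k (f k '' W₀), fun x => rfl, hf, fun k y y' => ?_, fun k y => ?_,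
    fun k x hx => ?_, fun k => (hInv k).2⟩
  · refine ((hH k _ (hInv k)).1 y y').trans ?_
    gcongr
    linarith
  · refine ((hH k _ (hInv k)).2.1 y).trans ?_
    gcongr
    linarith
  · have hr : (0 : ℝ) < (1 / 10) ^ k := by positivity
    obtain ⟨y, hy, hyx, hpy⟩ := ((hInv k).1 x hx).cover 0 (map_zero _) (by simp)
    refine ⟨y, hy, ?_⟩
    have h1 := ((hInv k).1 x hx).height y hy hyx
    rw [hpy, sub_zero] at h1
    refine h1.trans ?_
    gcongr
    linarith

/-- The affine plane through `x` with direction `W`. -/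
def planeThrough {X : Type*} [AddCommGroup X] [Module ℝ X] (W : Submodule ℝ X) (x : X) : Set X :=
  {y | y - x ∈ W}

theorem isAffinePlane_planeThrough {n d : ℕ} {W : Submodule ℝ (V n)}
    (hW : Module.finrank ℝ W = d) (x : V n) : IsAffinePlane n d (planeThrough W x) := by
  refine ⟨AffineSubspace.mk' x W, ?_, ?_, AffineSubspace.mk'_nonempty x W⟩
  · ext y
    exact AffineSubspace.mem_mk'
  · rw [AffineSubspace.direction_mk', hW]

theorem IsAffinePlane.exists_eq_planeThrough {n d : ℕ} {P : Set (V n)} (hP : IsAffinePlane n d P)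
    {x : V n} (hx : x ∈ P) :
    ∃ W : Submodule ℝ (V n), Module.finrank ℝ W = d ∧ P = planeThrough W x := by
  obtain ⟨Q, rfl, hd, -⟩ := hP
  refine ⟨Q.direction, hd, ?_⟩
  ext y
  exact (AffineSubspace.vsub_right_mem_direction_iff_mem hx y).symm

theorem infDist_planeThrough {X : Type*} [NormedAddCommGroup X] [InnerProductSpace ℝ X]
    (W : Submodule ℝ X) [W.HasOrthogonalProjection] (x z : X) :
    infDist z (planeThrough W x) = ‖(z - x) - W.starProjection (z - x)‖ := by
  have hx : x ∈ planeThrough W x := by simp [planeThrough]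
  refine le_antisymm ?_ ((le_infDist ⟨x, hx⟩).2 fun y hy => ?_)
  · have hmem : x + W.starProjection (z - x) ∈ planeThrough W x := by
      change x + W.starProjection (z - x) - x ∈ W
      rw [add_sub_cancel_left]
      exact Submodule.starProjection_apply_mem _ _
    refine (infDist_le_dist_of_mem hmem).trans_eq ?_
    rw [dist_eq_norm, sub_sub]
  · have hy' : W.starProjection (y - x) = y - x := Submodule.starProjection_eq_self_iff.2 hy
    have e : (z - x) - W.starProjection (z - x) = (z - y) - W.starProjection (z - y) := by
      rw [show z - x = (z - y) + (y - x) by abel, map_add, hy']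
      abel
    rw [e, dist_eq_norm]
    exact (isContractiveProj_starProjection W).norm_sub_le _

theorem norm_starProjection_sub_le {X : Type*} [NormedAddCommGroup X] [InnerProductSpace ℝ X]
    (W W' : Submodule ℝ X) [W.HasOrthogonalProjection] [W'.HasOrthogonalProjection] {θ : ℝ} (hθ : 0 ≤ θ)
    (h : ∀ v ∈ W, ‖v - W'.starProjection v‖ ≤ θ * ‖v‖)
    (h' : ∀ v ∈ W', ‖v - W.starProjection v‖ ≤ θ * ‖v‖) (v : X) :
    ‖W.starProjection v - W'.starProjection v‖ ≤ 2 * θ * ‖v‖ := by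
  set u := v - W.starProjection v with hu
  set w := W'.starProjection u with hw
  have hwW : w ∈ W' := Submodule.starProjection_apply_mem _ _
  have h1 : ‖W.starProjection v - W'.starProjection (W.starProjection v)‖ ≤ θ * ‖v‖ :=
    (h _ (Submodule.starProjection_apply_mem _ _)).trans
      (by gcongr; exact W.norm_starProjection_apply_le v)
  have h2 : ‖w‖ ≤ θ * ‖v‖ := by
    have e1 : inner ℝ w w = inner ℝ w u := by
      conv_lhs =>
        rw [hw, W'.inner_starProjection_left_eq_right, Submodule.starProjection_eq_self_iff.2 hwW]
      rw [real_inner_comm]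
    have e2 : inner ℝ (W.starProjection w) u = 0 := by
      rw [hu]
      exact Submodule.inner_right_of_mem_orthogonal (Submodule.starProjection_apply_mem _ _)
        (Submodule.sub_starProjection_mem_orthogonal v)
    have h3 : ‖w‖ * ‖w‖ ≤ (θ * ‖v‖) * ‖w‖ := by
      rw [← real_inner_self_eq_norm_mul_norm, e1, ← sub_zero (inner ℝ w u), ← e2, ← inner_sub_left]
      refine (real_inner_le_norm _ _).trans ?_
      have h4 := h' w hwW
      have h5 : ‖u‖ ≤ ‖v‖ := (isContractiveProj_starProjection W).norm_sub_le v
      calc _ ≤ θ * ‖w‖ * ‖v‖ := by gcongr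
        _ = _ := by ring
    rcases (norm_nonneg w).eq_or_lt with h0 | h0
    · rw [← h0]; positivity
    · exact le_of_mul_le_mul_right h3 h0
  have e : W.starProjection v - W'.starProjection v =
      (W.starProjection v - W'.starProjection (W.starProjection v)) - w := by
    rw [hw, hu, map_sub]; abel
  rw [e]
  exact (norm_sub_le _ _).trans (by linarith)

theorem norm_sub_starProjection_le_of_infDist {X : Type*} [NormedAddCommGroup X]
    [InnerProductSpace ℝ X] {W W' : Submodule ℝ X} [W.HasOrthogonalProjection] {c x x' : X}
    {R ε : ℝ} (hR : 0 < R) (hxc : dist x' c ≤ R / 2)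
    (h : ∀ y ∈ planeThrough W' x', dist y c < R → infDist y (planeThrough W x) ≤ ε * R)
    (v : X) (hv : v ∈ W') : ‖v - W.starProjection v‖ ≤ 8 * ε * ‖v‖ := by
  rcases eq_or_ne v 0 with rfl | hv0
  · simp
  have hv' : 0 < ‖v‖ := norm_pos_iff.2 hv0
  set t := R / 4 / ‖v‖ with ht
  have ht0 : 0 < t := by positivity
  have htv : t * ‖v‖ = R / 4 := by rw [ht]; field_simp
  have h1 := h x' (by simp [planeThrough]) (by linarith)
  have h2 := h (x' + t • v) (by simpa [planeThrough] using W'.smul_mem t hv) (by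
    have := dist_triangle (x' + t • v) x' c
    rw [dist_self_add_left, norm_smul, Real.norm_of_nonneg ht0.le, htv] at this
    linarith)
  rw [infDist_planeThrough] at h1 h2
  have e : t • (v - W.starProjection v) =
      ((x' + t • v - x) - W.starProjection (x' + t • v - x)) -
        ((x' - x) - W.starProjection (x' - x)) := by
    rw [show x' + t • v - x = (x' - x) + t • v by abel, map_add, map_smul, smul_sub]
    abel
  have h3 : t * ‖v - W.starProjection v‖ ≤ 2 * ε * R := by
    rw [← Real.norm_of_nonneg ht0.le, ← norm_smul, e]
    exact (norm_sub_le _ _).trans (by linarith)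
  refine le_of_mul_le_mul_left (h3.trans_eq ?_) ht0
  rw [show R = 4 * (t * ‖v‖) by linarith]
  ring

theorem le_biSup_of_bounded {α : Type*} {f : α → ℝ} {s : Set α} {M : ℝ} (hf : ∀ y ∈ s, f y ≤ M)
    {y : α} (hy : y ∈ s) : f y ≤ ⨆ z ∈ s, f z := by
  have hb : BddAbove (range fun z => ⨆ _ : z ∈ s, f z) := by
    refine ⟨max M 0, ?_⟩
    rintro _ ⟨z, rfl⟩
    exact Real.iSup_le (fun hz => (hf z hz).trans (le_max_left _ _)) (le_max_right _ _)
  refine le_trans ?_ (le_ciSup hb y)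
  rw [ciSup_pos hy]

theorem nhd_comm {n : ℕ} (x : V n) (r : ℝ) (A B : Set (V n)) : nhd x r A B = nhd x r B A := by
  rw [nhd, nhd, max_comm]

theorem infDist_le_of_nhd_le {n : ℕ} {x : V n} {r ε : ℝ} {A B : Set (V n)} (hr : 0 < r)
    (hB : B.Nonempty) (h : nhd x r A B ≤ ε) {y : V n} (hy : y ∈ A) (hyx : dist y x < r) :
    infDist y B ≤ ε * r := by
  rw [nhd, inv_mul_le_iff₀ hr, mul_comm] at h
  obtain ⟨b, hb⟩ := hB
  refine le_trans ?_ ((le_max_left _ _).trans h)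
  refine le_biSup_of_bounded (f := fun y => infDist y B) (M := r + dist x b) ?_ ⟨hy, hyx⟩
  rintro z ⟨-, hz⟩
  refine (infDist_le_dist_of_mem hb).trans ((dist_triangle z x b).trans ?_)
  linarith [mem_ball.1 hz]

theorem nhd_le {n : ℕ} {x : V n} {r ε : ℝ} {A B : Set (V n)} (hr : 0 < r) (hε : 0 ≤ ε)
    (hA : ∀ y ∈ A, dist y x < r → infDist y B ≤ ε * r)
    (hB : ∀ y ∈ B, dist y x < r → infDist y A ≤ ε * r) : nhd x r A B ≤ ε := by
  rw [nhd, inv_mul_le_iff₀ hr, mul_comm]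
  have h0 : 0 ≤ ε * r := by positivity
  exact max_le
    (Real.iSup_le (fun y => Real.iSup_le (fun hy => hA y hy.1 (mem_ball.1 hy.2)) h0) h0)
    (Real.iSup_le (fun y => Real.iSup_le (fun hy => hB y hy.1 (mem_ball.1 hy.2)) h0) h0)

theorem norm_starProjection_sub_le_of_nhd_le {n : ℕ} {W W' : Submodule ℝ (V n)} {x x' : V n}
    {R ε : ℝ} (hR : 0 < R) (hε : 0 ≤ ε) (hxx : dist x' x ≤ R / 2)
    (h : nhd x R (planeThrough W x) (planeThrough W' x') ≤ ε) (v : V n) :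
    ‖W.starProjection v - W'.starProjection v‖ ≤ 16 * ε * ‖v‖ := by
  have hx : x ∈ planeThrough W x := by simp [planeThrough]
  have hx' : x' ∈ planeThrough W' x' := by simp [planeThrough]
  have h1 := norm_sub_starProjection_le_of_infDist (c := x) hR (by rw [dist_self]; positivity)
    fun y hy hyx => infDist_le_of_nhd_le hR ⟨x', hx'⟩ h hy hyx
  have h2 := norm_sub_starProjection_le_of_infDist (c := x) hR hxx
    fun y hy hyx => infDist_le_of_nhd_le hR ⟨x, hx⟩ (nhd_comm x R _ _ ▸ h) hy hyx
  have h3 := norm_starProjection_sub_le W W' (by positivity) h1 h2 v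
  linarith

theorem exists_nhd_le_of_flatAlong {n d : ℕ} {f : ℕ → V n → V n} {g : V n → V n}
    {W₀ : Submodule ℝ (V n)} {δ : ℝ} (hδ0 : 0 ≤ δ) (hδ : δ ≤ 1 / 100) (hf0 : ∀ x, f 0 x = x)
    (hg : ∀ k x, ‖g x - f k x‖ ≤ 2 * δ * (1 / 10) ^ k) (hW₀ : Module.finrank ℝ W₀ = d)
    (hflat : ∀ k, ∀ y ∈ f k '' W₀, ∃ U : Submodule ℝ (V n), Module.finrank ℝ U = d ∧
      FlatAlong U.starProjection (f k '' W₀) y (4 * (1 / 10) ^ k) δ)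
    {x : V n} (hx : x ∈ g '' W₀) {r : ℝ} (hr : 0 < r) :
    ∃ Q : Set (V n), IsAffinePlane n d Q ∧ x ∈ Q ∧ nhd x r (g '' W₀) Q ≤ 80 * δ := by
  obtain ⟨z₀, hz₀, rfl⟩ := hx
  have hclose : ∀ k z, ‖(g z - g z₀) - (f k z - f k z₀)‖ ≤ 4 * δ * (1 / 10) ^ k := fun k z => by
    rw [show (g z - g z₀) - (f k z - f k z₀) = (g z - f k z) - (g z₀ - f k z₀) by abel]
    exact (norm_sub_le _ _).trans (by linarith [hg k z, hg k z₀])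
  have hself : ∀ U : Submodule ℝ (V n), g z₀ ∈ planeThrough U (g z₀) := fun U => by
    simp [planeThrough]
  rcases lt_or_ge r 1 with hr1 | hr1
  · obtain ⟨k, hk, hk'⟩ := exists_nat_pow_near_of_lt_one hr hr1.le
      (by norm_num : (0 : ℝ) < 1 / 10) (by norm_num)
    rw [pow_succ] at hk
    have hrk : (0 : ℝ) < (1 / 10) ^ k := by positivity
    obtain ⟨U, hU, hUflat⟩ := hflat k (f k z₀) (mem_image_of_mem _ hz₀)
    have hcone : ∀ z ∈ W₀, dist (f k z) (f k z₀) < 4 * (1 / 10) ^ k →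
        ‖(f k z - f k z₀) - U.starProjection (f k z - f k z₀)‖ ≤ 4 * δ * (1 / 10) ^ k := by
      intro z hz hzk
      have h1 := hUflat.cone _ (mem_image_of_mem _ hz) _ (mem_image_of_mem _ hz₀) hzk
        (by rw [dist_self]; positivity)
      rw [dist_eq_norm] at hzk
      nlinarith
    refine ⟨planeThrough U (g z₀), isAffinePlane_planeThrough hU _, hself _, ?_⟩
    refine nhd_le hr (by positivity) ?_ ?_
    · rintro _ ⟨z, hz, rfl⟩ hzr
      rw [infDist_planeThrough]
      set v := (g z - g z₀) - (f k z - f k z₀) with hv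
      have hvk : ‖v‖ ≤ 4 * δ * (1 / 10) ^ k := hclose k z
      have e : (g z - g z₀) - U.starProjection (g z - g z₀) =
          ((f k z - f k z₀) - U.starProjection (f k z - f k z₀)) +
            (v - U.starProjection v) := by
        rw [show g z - g z₀ = (f k z - f k z₀) + v by rw [hv]; abel, map_add]
        abel
      have h1 := hcone z hz (by
        have h2 := norm_sub_le (g z - g z₀) v
        rw [show g z - g z₀ - v = f k z - f k z₀ by rw [hv]; abel] at h2
        rw [dist_eq_norm] at hzr ⊢
        nlinarith)
      have h3 := (isContractiveProj_starProjection U).norm_sub_le v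
      rw [e]
      refine (norm_add_le _ _).trans ?_
      nlinarith
    · intro w hw hwr
      rw [dist_eq_norm] at hwr
      obtain ⟨_, ⟨z, hz, rfl⟩, hzk, hpz⟩ := hUflat.cover (w - g z₀)
        (Submodule.starProjection_eq_self_iff.2 hw) (by linarith)
      refine (infDist_le_dist_of_mem (mem_image_of_mem g hz)).trans ?_
      have h1 := hcone z hz hzk
      have h2 := hclose k z
      rw [hpz] at h1
      have h3 := norm_add_le (g z - g z₀ - (f k z - f k z₀)) (f k z - f k z₀ - (w - g z₀))
      rw [show g z - g z₀ - (f k z - f k z₀) + (f k z - f k z₀ - (w - g z₀)) = g z - w by abel,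
        ← dist_eq_norm, dist_comm] at h3
      nlinarith
  · refine ⟨planeThrough W₀ (g z₀), isAffinePlane_planeThrough hW₀ _, hself _, ?_⟩
    have hclose₀ : ∀ z, ‖(g z - g z₀) - (z - z₀)‖ ≤ 80 * δ * r := fun z => by
      have := hclose 0 z
      rw [hf0, hf0, pow_zero] at this
      nlinarith
    refine nhd_le hr (by positivity) ?_ ?_
    · rintro _ ⟨z, hz, rfl⟩ -
      refine (infDist_le_dist_of_mem (y := g z₀ + (z - z₀)) ?_).trans ?_
      · simpa [planeThrough] using W₀.sub_mem hz hz₀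
      · rw [dist_eq_norm, ← sub_sub]
        exact hclose₀ z
    · rintro w hw -
      refine (infDist_le_dist_of_mem (mem_image_of_mem g (W₀.add_mem hw hz₀))).trans ?_
      have h1 := hclose₀ (w - g z₀ + z₀)
      rwa [add_sub_cancel_right, sub_sub_sub_cancel_right, ← dist_eq_norm, dist_comm] at h1

/-- A limit of compositions of perturbations of the identity at geometric scales is bijective. -/
theorem bijective_of_perturbation_steps {X : Type*} [NormedAddCommGroup X] [ProperSpace X]
    {f h : ℕ → X → X} {g : X → X} {δ : ℝ} (hf0 : ∀ x, f 0 x = x)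
    (hf : ∀ k x, f (k + 1) x = f k x + h k (f k x)) (hδ0 : 0 ≤ δ) (hδ1 : δ ≤ 1 / 100)
    (hlip : ∀ k y y', ‖h k y - h k y'‖ ≤ δ * ‖y - y'‖)
    (hg : ∀ k x, ‖g x - f k x‖ ≤ 2 * δ * (1 / 10) ^ k)
    (hinj : ∀ x y, dist x y ≤ 1 → g x = g y → x = y) : Function.Bijective g := by
  have hg0 : ∀ x, ‖g x - x‖ ≤ 2 * δ := fun x => by simpa [hf0] using hg 0 x
  have hcl := isClosedMap_of_norm_sub_le (continuous_of_perturbation_steps hf0 hf hδ0 hlip hg) hg0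
  have hfs : ∀ k, Function.Surjective (f k) := by
    intro k
    induction k with
    | zero => exact fun x => ⟨x, hf0 x⟩
    | succ k ih =>
      rw [funext (hf k)]
      exact (surjective_add_of_lipschitz hδ0 (by linarith) (hlip k)).comp ih
  refine ⟨fun x y hxy => hinj x y ?_ hxy, fun z => ?_⟩
  · have h1 := norm_sub_le (g y - y) (g x - x)
    rw [hxy, sub_sub_sub_cancel_left, ← dist_eq_norm] at h1
    linarith [hg0 x, hg0 y, hxy ▸ hg0 x]
  · change z ∈ range g
    rw [← hcl.isClosed_range.closure_eq, Metric.mem_closure_range_iff]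
    intro ε hε
    obtain ⟨k, hk⟩ := exists_pow_lt_of_lt_one hε (by norm_num : (1 / 10 : ℝ) < 1)
    obtain ⟨x, rfl⟩ := hfs k z
    refine ⟨x, ?_⟩
    rw [dist_comm, dist_eq_norm]
    have : (0 : ℝ) < (1 / 10) ^ k := by positivity
    nlinarith [hg k x]

/-- **Theorem 1.10**: Reifenberg parameterizations for sets with holes.
The constant `C` depends only on `n` and `d`; `ε` depends only on `n`, `d`, `τ`. -/
theorem thm_1_10 (n d : ℕ) (hd : 0 < d) (hdn : d < n) :
    ∃ C : ℝ, 0 < C ∧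
    ∀ τ : ℝ, 0 < τ → τ < 10⁻¹ →
    ∃ ε : ℝ, 0 < ε ∧
      ∀ E : Set (V n), IsClosed E → E ⊆ ball (0 : V n) 1 → (0 : V n) ∈ E →
      ∀ P : V n → ℝ → Set (V n),
      -- for each `x ∈ E` and `0 < r ≤ 10`, `P x r` is a `d`-plane through `x`
      -- close to `E` in `B(x,r)`
      (∀ x ∈ E, ∀ r : ℝ, 0 < r → r ≤ 10 →
        IsAffinePlane n d (P x r) ∧ x ∈ P x r ∧
        ∀ y ∈ E ∩ ball x r, infDist y (P x r) ≤ ε * r) →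
      -- coherence condition (1.8)
      (∀ x ∈ E, ∀ k : ℕ,
        nhd x ((10 : ℝ) ^ (-(k : ℤ)))
          (P x ((10 : ℝ) ^ (-(k : ℤ)))) (P x ((10 : ℝ) ^ (1 - (k : ℤ)))) ≤ ε) →
      -- coherence condition (1.9)
      (∀ k : ℕ, ∀ x ∈ E, ∀ y ∈ E, dist x y ≤ (10 : ℝ) ^ (2 - (k : ℤ)) →
        nhd x ((10 : ℝ) ^ (2 - (k : ℤ)))
          (P x ((10 : ℝ) ^ (-(k : ℤ)))) (P y ((10 : ℝ) ^ (-(k : ℤ)))) ≤ ε) →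
      ∃ g : V n → V n, Function.Bijective g ∧
        (∀ x : V n, dist (g x) x ≤ τ) ∧
        (∀ x y : V n, dist x y ≤ 1 →
          (1 / 4 : ℝ) * dist x y ^ (1 + τ) ≤ dist (g x) (g y) ∧
          dist (g x) (g y) ≤ 3 * dist x y ^ (1 - τ)) ∧
        E ⊆ g '' (P 0 10) ∧
        -- `Σ = g(P(0,10))` is `Cε`-Reifenberg-flat
        (∀ x ∈ g '' (P 0 10), ∀ r : ℝ, 0 < r →
          ∃ Q : Set (V n), IsAffinePlane n d Q ∧ x ∈ Q ∧
            nhd x r (g '' (P 0 10)) Q ≤ C * ε) := by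
  obtain ⟨K, hK1, hK⟩ := exists_perturbation_steps (V n)
  refine ⟨8000 * K, by positivity, fun τ hτ0 hτ1 => ?_⟩
  have hτ1 : τ < 1 / 10 := by linarith [show (10 : ℝ)⁻¹ = 1 / 10 by norm_num]
  obtain ⟨δ, hδ0, hδ1, hδτ, hδ9, hδ9'⟩ : ∃ δ : ℝ, 0 < δ ∧ δ ≤ 1 / 100 ∧ 2 * δ ≤ τ ∧
      1 + δ ≤ 9 ^ τ ∧ (9 : ℝ) ^ (-τ) ≤ 1 - δ := by
    have h1 : (1 : ℝ) < 9 ^ τ := Real.one_lt_rpow (by norm_num) hτ0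
    have h2 : (9 : ℝ) ^ (-τ) < 1 := Real.rpow_lt_one_of_one_lt_of_neg (by norm_num) (by linarith)
    refine ⟨min (min (1 / 100) (τ / 2)) (min (9 ^ τ - 1) (1 - 9 ^ (-τ))), ?_, ?_, ?_, ?_, ?_⟩
    · exact lt_min (lt_min (by norm_num) (by linarith)) (lt_min (by linarith) (by linarith))
    · exact (min_le_left _ _).trans (min_le_left _ _)
    · linarith [(min_le_left (min (1 / 100) (τ / 2)) (min (9 ^ τ - 1) (1 - 9 ^ (-τ)))).trans
        (min_le_right _ _)]
    · linarith [(min_le_right (min (1 / 100) (τ / 2)) (min (9 ^ τ - 1) (1 - 9 ^ (-τ)))).trans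
        (min_le_left _ _)]
    · linarith [(min_le_right (min (1 / 100) (τ / 2)) (min (9 ^ τ - 1) (1 - 9 ^ (-τ)))).trans
        (min_le_right _ _)]
  have hKδ : K * (100 * (δ / (100 * K))) = δ := by field_simp
  have hε0 : 0 < δ / (100 * K) := by positivity
  refine ⟨δ / (100 * K), hε0, ?_⟩
  rw [show 8000 * K * (δ / (100 * K)) = 80 * (K * (100 * (δ / (100 * K)))) by ring, hKδ]
  generalize δ / (100 * K) = ε at hKδ hε0
  intro E _ hE h0E P hP h8 h9
  have hpow : ∀ k : ℕ, (10 : ℝ) ^ (-(k : ℤ)) = (1 / 10) ^ k := fun k => by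
    rw [zpow_neg, zpow_natCast, one_div, inv_pow]
  have hpow1 : ∀ k : ℕ, (10 : ℝ) ^ (1 - ((k + 1 : ℕ) : ℤ)) = (1 / 10) ^ k := fun k => by
    rw [← hpow]; push_cast; ring_nf
  have hpow2 : ∀ k : ℕ, (10 : ℝ) ^ (2 - (k : ℤ)) = 100 * (1 / 10) ^ k := fun k => by
    rw [sub_eq_add_neg, zpow_add₀ (by norm_num), hpow]; norm_num
  simp only [hpow, hpow2] at h8 h9
  have hplane : ∀ x k, ∃ W : Submodule ℝ (V n), x ∈ E →
      Module.finrank ℝ W = d ∧ P x ((1 / 10) ^ k) = planeThrough W x := by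
    intro x k
    by_cases hx : x ∈ E
    · have h1 : (1 / 10 : ℝ) ^ k ≤ 1 := pow_le_one₀ (by norm_num) (by norm_num)
      obtain ⟨hA, hxP, -⟩ := hP x hx ((1 / 10) ^ k) (by positivity) (by linarith)
      obtain ⟨W, hW⟩ := hA.exists_eq_planeThrough hxP
      exact ⟨W, fun _ => hW⟩
    · exact ⟨⊥, fun h => absurd h hx⟩
  choose W hW using hplane
  obtain ⟨hA₀, h0P, -⟩ := hP 0 h0E 10 (by norm_num) le_rfl
  obtain ⟨W₀, hW₀, hP₀⟩ := hA₀.exists_eq_planeThrough h0P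
  have hr : ∀ k : ℕ, (0 : ℝ) < (1 / 10) ^ k := fun k => by positivity
  have hη : ∀ v : V n, 16 * ε * ‖v‖ ≤ 100 * ε * ‖v‖ := fun v => by
    gcongr; norm_num
  have h9W : ∀ k : ℕ, ∀ x ∈ E, ∀ y ∈ E, dist x y ≤ 50 * (1 / 10) ^ k →
      nhd x (100 * (1 / 10) ^ k) (planeThrough (W x k) x) (planeThrough (W y k) y) ≤ ε := by
    intro k x hx y hy hxy
    have := h9 k x hx y hy (by linarith [hr k])
    rwa [(hW x k hx).2, (hW y k hy).2] at this
  obtain ⟨f, h, hf0, hf, hlip, hb, hnear, hflat⟩ := hK d (100 * ε) E W W₀ (by positivity)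
    (by rw [hKδ]; exact hδ1) hE h0E hW₀ (fun x hx k => (hW x k hx).1)
    (fun k x hx y hy hxy v => (norm_starProjection_sub_le_of_nhd_le (R := 100 * (1 / 10) ^ k)
      (by positivity) hε0.le (by rw [dist_comm]; linarith) (h9W k x hx y hy hxy) v).trans (hη v))
    (fun k x hx y hy hxy => by
      have h1 := infDist_le_of_nhd_le (by have := hr k; positivity) ⟨x, by simp [planeThrough]⟩
        (nhd_comm x _ _ _ ▸ h9W k x hx y hy hxy) (y := y) (by simp [planeThrough])
        (by rw [dist_comm]; linarith [hr k])
      rw [infDist_planeThrough] at h1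
      linarith)
    (fun x hx k v => by
      have h1 := h8 x hx (k + 1)
      rw [hpow1, (hW x k hx).2, (hW x (k + 1) hx).2] at h1
      rw [norm_sub_rev]
      exact (norm_starProjection_sub_le_of_nhd_le (hr _) hε0.le
        (by rw [dist_self]; linarith [hr (k + 1)]) h1 v).trans (hη v))
    (fun v => by
      have h1 := h8 0 h0E 0
      rw [(hW 0 0 h0E).2, Nat.cast_zero, sub_zero, zpow_one, hP₀] at h1
      rw [norm_sub_rev]
      exact (norm_starProjection_sub_le_of_nhd_le (hr _) hε0.le
        (by rw [dist_self]; linarith [hr 0]) h1 v).trans (hη v))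
  simp only [hKδ] at hlip hb hnear hflat
  obtain ⟨g, hg⟩ := exists_limit_of_perturbation_steps hf hδ0.le hb
  have hP₀' : P 0 10 = (W₀ : Set (V n)) := by
    rw [hP₀]; ext y; simp [planeThrough]
  have hHolder := biHolder_of_perturbation_steps hf0 hf hδ0.le (by linarith) hτ0 (by linarith)
    hδ9 hδ9' hlip hg
  have hg0 : ∀ x, ‖g x - x‖ ≤ 2 * δ := fun x => by simpa [hf0] using hg 0 x
  rw [hP₀']
  refine ⟨g, ?_, fun x => ?_, hHolder, fun x hx => ?_, fun x hx r hr => ?_⟩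
  · refine bijective_of_perturbation_steps hf0 hf hδ0.le hδ1 hlip hg fun x y hxy hgxy => ?_
    by_contra hne
    have h1 := (hHolder x y hxy).1
    have h2 : 0 < dist x y ^ (1 + τ) := Real.rpow_pos_of_pos (dist_pos.2 hne) _
    rw [hgxy, dist_self] at h1
    linarith
  · rw [dist_eq_norm]
    exact (hg0 x).trans hδτ
  · have hcl : IsClosed (g '' (W₀ : Set (V n))) :=
      isClosedMap_of_norm_sub_le (continuous_of_perturbation_steps hf0 hf hδ0.le hlip hg) hg0 _
        W₀.closed_of_finiteDimensional
    rw [← hcl.closure_eq, Metric.mem_closure_iff]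
    intro ρ hρ
    obtain ⟨k, hk⟩ := exists_pow_lt_of_lt_one hρ (by norm_num : (1 / 10 : ℝ) < 1)
    obtain ⟨_, ⟨z, hz, rfl⟩, hzx⟩ := hnear k x hx
    refine ⟨g z, mem_image_of_mem g hz, ?_⟩
    have h1 := norm_add_le (g z - f k z) (f k z - x)
    rw [sub_add_sub_cancel, ← dist_eq_norm, dist_comm] at h1
    nlinarith [hg k z, hr k]
  · exact exists_nhd_le_of_flatAlong hδ0.le hδ1 hf0 hg hW₀ hflat hx hr
end
end
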